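/- (Armitage–Fröhlich) Let K be a number field with r₁ real places, r₁ > 0. If ρ is the 2-rank of the class group of K and ρ⁺ is the 2-rank of the narrow class group of K, then ρ⁺ − ρ ≤ ⌊r₁/2⌋. -/

import Mathlib

open NumberField FractionalIdeal
open scoped nonZeroDivisors

variable (K : Type*) [Field K] [NumberField K]

/-- The subgroup `P_K⁺` of the group of invertible fractional ideals consisting of principal
fractional ideals generated by a totally positive element. -/
noncomputable def totPosPrincipalSubgroup : Subgroup (FractionalIdeal (𝓞 K)⁰ K)ˣ where
  carrier := {I | ∃ x : Kˣ, (∀ φ : K →+* ℝ, 0 < φ (x : K)) ∧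
    (I : FractionalIdeal (𝓞 K)⁰ K) = spanSingleton (𝓞 K)⁰ (x : K)}
  one_mem' := ⟨1, fun φ => by simp, by simp⟩
  mul_mem' := by
    rintro I J ⟨x, hx, hI⟩ ⟨y, hy, hJ⟩
    refine ⟨x * y, fun φ => ?_, ?_⟩
    · rw [Units.val_mul, _root_.map_mul]; exact mul_pos (hx φ) (hy φ)
    · rw [Units.val_mul, hI, hJ, spanSingleton_mul_spanSingleton, Units.val_mul]
  inv_mem' := by
    rintro I ⟨x, hx, hI⟩
    refine ⟨x⁻¹, fun φ => ?_, ?_⟩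
    · rw [Units.val_inv_eq_inv_val, map_inv₀]; exact inv_pos.mpr (hx φ)
    · rw [Units.val_inv_eq_inv_val, hI, spanSingleton_inv, Units.val_inv_eq_inv_val]

/-- The narrow (strict) class group `C_K⁺ = I_K/P_K⁺` of the number field `K`. -/
noncomputable abbrev NarrowClassGroup :=
  (FractionalIdeal (𝓞 K)⁰ K)ˣ ⧸ totPosPrincipalSubgroup K

/-!
Let `Sel⁺` be the group of totally positive `α ∈ Kˣ` such that `(α)` is the square of an ideal,
`Sel₄⁺` the subgroup of those that are, up to squares, `≡ 1 mod 4`, and let `n = r₁ + 2 r₂` be the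
degree of `K`. All dimensions are over `𝔽₂`, modulo `Kˣ²`.

The unit theorem and the exact sequences relating units, signs and the two class groups give
`ρ⁺ + r₂ ≤ dim Sel⁺`. Pair elements with ideals by the quadratic residue symbol. By reciprocity, the
symbol of an element of `Sel₄⁺` depends only on the ideal class modulo squares, and the symbol of an
element of `Sel⁺` is trivial at principal ideals with a generator `≡ 1 mod 4`. A nonsquare has
symbol `-1` at infinitely many primes, so no nontrivial element pairs trivially with all ideals.
Hence `dim Sel₄⁺ ≤ ρ` and `dim Sel⁺ ≤ ρ + n - dim (Sel⁺ / Sel₄⁺)`; adding these,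
`2 dim Sel⁺ ≤ 2 ρ + n`, and so `2 (ρ⁺ - ρ) ≤ n - 2 r₂ = r₁`.

The cases of reciprocity that are needed follow by comparing the Gauss sums of the trace forms
`Tr (ω x²)` and `Tr (α ω x²)`: by Milgram's formula their phases depend only on the signature, which
a totally positive `α` does not change. The primes with symbol `-1` come from the pole at `1` of the
zeta functions of `K` and `K(√α)`.
-/

namespace ArmitageFrohlich

open IsDedekindDomain

local notation "⟪" x "⟫" => FractionalIdeal.spanSingleton (𝓞 K)⁰ x

/-! ### Quadratic Gauss sums over `ℤ` -/

section QuadraticGaussSum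

open Filter Topology Complex

open scoped Real

theorem summable_exp_neg_quadratic {a : ℂ} (ha : 0 < a.re) (b : ℂ) :
    Summable (fun m : ℤ => cexp (-π * a * (m : ℂ) ^ 2 + 2 * π * b * m)) := by
  refine ((summable_jacobiTheta₂_term_iff (-I * b) (I * a)).mpr (by simpa using ha)).congr
    fun m => ?_
  unfold jacobiTheta₂_term
  congr 1
  linear_combination (π * (m : ℂ) ^ 2 * a - 2 * π * m * b) * I_sq

theorem cpow_half_mul_tsum_exp_neg_shifted_sq {a : ℂ} (ha : 0 < a.re) (x : ℝ) :
    a ^ (1 / 2 : ℂ) * ∑' m : ℤ, cexp (-π * a * (m + x) ^ 2) =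
      ∑' m : ℤ, cexp (-π * a⁻¹ * (m : ℂ) ^ 2 + 2 * π * x * m * I) := by
  have ha0 : a ≠ 0 := by rintro rfl; simp at ha
  have hroot : a ^ (1 / 2 : ℂ) ≠ 0 := by simp [cpow_eq_zero_iff, ha0]
  have hleft : ∀ m : ℤ, cexp (-π * a * (m + x) ^ 2) =
      cexp (-π * a * x ^ 2) * cexp (-π * a * (m : ℂ) ^ 2 + 2 * π * (-(a * x)) * m) := fun m => by
    rw [← Complex.exp_add]; ring_nf
  have hright : ∀ m : ℤ, cexp (-π / a * (m + I * (-(a * x))) ^ 2) =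
      cexp (π * a * x ^ 2) * cexp (-π * a⁻¹ * (m : ℂ) ^ 2 + 2 * π * x * m * I) := fun m => by
    rw [← Complex.exp_add]
    congr 1
    field_simp
    linear_combination -a ^ 2 * (x : ℂ) ^ 2 * I_sq
  have hcancel : cexp (-π * a * x ^ 2) * cexp (π * a * x ^ 2) = 1 := by
    rw [← Complex.exp_add]; simp
  rw [tsum_congr hleft, tsum_mul_left, Complex.tsum_exp_neg_quadratic ha, tsum_congr hright,
    tsum_mul_left, mul_left_comm (cexp _), ← mul_assoc (a ^ _), mul_one_div_cancel hroot, one_mul,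
    ← mul_assoc, hcancel, one_mul]

theorem tendsto_cpow_half_mul_tsum_exp_neg_shifted_sq {α : Type*} {l : Filter α} {a : α → ℂ}
    (ha : Tendsto (fun t => ((a t)⁻¹).re) l atTop) (x : ℝ) :
    Tendsto (fun t => a t ^ (1 / 2 : ℂ) * ∑' m : ℤ, cexp (-π * a t * (m + x) ^ 2)) l (𝓝 1) := by
  have hpos : ∀ᶠ t in l, 0 < (a t).re := by
    filter_upwards [ha.eventually_gt_atTop 0] with t ht
    rw [Complex.inv_re] at ht
    exact (div_pos_iff_of_pos_right (normSq_pos.mpr fun h => by simp [h] at ht)).mp ht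
  have hnorm : ∀ (t : α) (m : ℤ), ‖cexp (-π * (a t)⁻¹ * (m : ℂ) ^ 2 + 2 * π * x * m * I)‖ =
      Real.exp (-(π * (m : ℝ) ^ 2 * ((a t)⁻¹).re)) := fun t m => by
    have harg : -π * (a t)⁻¹ * (m : ℂ) ^ 2 + 2 * π * x * m * I =
        ((-(π * (m : ℝ) ^ 2) : ℝ) : ℂ) * (a t)⁻¹ + ((2 * π * x * m : ℝ) : ℂ) * I := by
      push_cast; ring
    rw [Complex.norm_exp, harg, add_re, re_ofReal_mul, re_ofReal_mul, I_re, mul_zero, add_zero,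
      neg_mul]
  have hsummable : Summable fun m : ℤ => Real.exp (-(π * (m : ℝ) ^ 2)) := by
    refine (summable_exp_neg_quadratic (a := 1) (by simp) 0).norm.congr fun m => ?_
    rw [Complex.norm_exp]
    congr 1
    exact (congrArg re (by push_cast; ring)).trans (ofReal_re (-(π * (m : ℝ) ^ 2)))
  have hlim : Tendsto (fun t => ∑' m : ℤ, cexp (-π * (a t)⁻¹ * (m : ℂ) ^ 2 + 2 * π * x * m * I)) l
      (𝓝 (∑' m : ℤ, if m = 0 then (1 : ℂ) else 0)) := by
    refine tendsto_tsum_of_dominated_convergence hsummable (fun m => ?_) ?_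
    · rcases eq_or_ne m 0 with rfl | hm
      · simpa using tendsto_const_nhds
      · simp only [hm, if_false]
        rw [tendsto_zero_iff_norm_tendsto_zero]
        simp_rw [hnorm]
        exact Real.tendsto_exp_neg_atTop_nhds_zero.comp (ha.const_mul_atTop (by positivity))
    · filter_upwards [ha.eventually_ge_atTop 1] with t ht m
      rw [hnorm]
      exact Real.exp_le_exp.mpr (neg_le_neg (le_mul_of_one_le_right (by positivity) ht))
  rw [tsum_ite_eq] at hlim
  refine hlim.congr' ?_
  filter_upwards [hpos] with t ht using (cpow_half_mul_tsum_exp_neg_shifted_sq ht x).symm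

theorem tsum_int_eq_sum_tsum_residue (N : ℕ) [NeZero N] {f : ℤ → ℂ} (hf : Summable f) :
    ∑' n, f n = ∑ r : Fin N, ∑' m : ℤ, f (r + N * m) := by
  let φ : Fin N × ℤ ≃ ℤ := (Equiv.prodComm (Fin N) ℤ).trans (Int.divModEquiv N).symm
  have hφ : Summable fun p => f (φ p) := φ.summable_iff.mpr hf
  rw [← φ.tsum_eq, hφ.tsum_prod, tsum_fintype]
  refine Finset.sum_congr rfl fun r _ => tsum_congr fun m => congrArg f ?_
  simp [φ, Int.divModEquiv_symm_apply, add_comm, mul_comm]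

/-- With `1 / (η + iN) = -i / N + a / N²`, the term at `n = r + N m` of the theta series for
`1 / (η + iN)` splits into a Gauss sum term and a Gaussian, because `N` is even. -/
theorem exp_neg_sq_div_add_I_mul_eq {N : ℕ} (hN : N ≠ 0) (heven : Even N) {η a : ℂ}
    (hηN : η + I * N ≠ 0) (ha : I * N * η = a * (η + I * N)) (r m : ℤ) :
    cexp (-π * (η + I * N)⁻¹ * ((r + N * m : ℤ) : ℂ) ^ 2) =
      cexp (π * I * r ^ 2 / N) * cexp (-π * a * (m + (r / N : ℝ)) ^ 2) := by
  have hNc : (N : ℂ) ≠ 0 := Nat.cast_ne_zero.mpr hN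
  obtain ⟨k, hk⟩ := heven
  have hk' : (N : ℂ) = 2 * k := by rw [hk]; push_cast; ring
  have hsplit : (η + I * N)⁻¹ = -I / N + a / N ^ 2 := by
    field_simp
    linear_combination ha + (N : ℂ) ^ 2 * I_sq
  rw [← Complex.exp_add, Complex.exp_eq_exp_iff_exists_int]
  refine ⟨r * m + k * m ^ 2, ?_⟩
  rw [hsplit]
  push_cast
  field_simp
  rw [hk']
  ring

theorem tendsto_cpow_half_mul_tsum_exp_neg_sq_div {N : ℕ} (hN : N ≠ 0) (heven : Even N) :
    Tendsto (fun η : ℝ => ((η : ℂ)⁻¹ - I / N)⁻¹ ^ (1 / 2 : ℂ) *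
        ∑' n : ℤ, cexp (-π * (η + I * N)⁻¹ * (n : ℂ) ^ 2))
      (𝓝[>] 0) (𝓝 (∑ r : Fin N, cexp (π * I * ((r : ℕ) : ℂ) ^ 2 / N))) := by
  have : NeZero N := ⟨hN⟩
  have hNc : (N : ℂ) ≠ 0 := Nat.cast_ne_zero.mpr hN
  let a : ℝ → ℂ := fun η => ((η : ℂ)⁻¹ - I / N)⁻¹
  have hre : ∀ η, ((a η)⁻¹).re = η⁻¹ := fun η => by
    simp only [a, inv_inv, sub_re, div_natCast_re, I_re, zero_div, sub_zero, ← ofReal_inv,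
      ofReal_re]
  have ha : Tendsto (fun η => ((a η)⁻¹).re) (𝓝[>] 0) atTop := by
    simpa only [hre] using tendsto_inv_nhdsGT_zero
  have hlim : Tendsto (fun η : ℝ => ∑ r : Fin N, cexp (π * I * ((r : ℕ) : ℂ) ^ 2 / N) *
      (a η ^ (1 / 2 : ℂ) * ∑' m : ℤ, cexp (-π * a η * (m + ((r : ℕ) / N : ℝ)) ^ 2))) (𝓝[>] 0)
      (𝓝 (∑ r : Fin N, cexp (π * I * ((r : ℕ) : ℂ) ^ 2 / N) * 1)) :=
    tendsto_finsetSum _ fun r _ => (tendsto_cpow_half_mul_tsum_exp_neg_shifted_sq ha _).const_mul _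
  simp only [mul_one] at hlim
  refine hlim.congr' ?_
  filter_upwards [self_mem_nhdsWithin] with η (hη : 0 < η)
  have hηc : (η : ℂ) ≠ 0 := ofReal_ne_zero.mpr hη.ne'
  have hηN : (η + I * N : ℂ) ≠ 0 := fun h => hη.ne' (by simpa using congrArg re h)
  have hmul : I * N * η = a η * (η + I * N) := by
    have hinv : (a η)⁻¹ * (I * N * η) = η + I * N := by
      simp only [a, inv_inv]; field_simp; linear_combination (-η : ℂ) * I_sq
    rw [← hinv, mul_inv_cancel_left₀]
    exact fun h => hηN (by rw [← hinv, h, inv_zero, zero_mul])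
  have hsummable : Summable fun n : ℤ => cexp (-π * (η + I * N)⁻¹ * (n : ℂ) ^ 2) := by
    refine (summable_exp_neg_quadratic (a := (η + I * N)⁻¹) ?_ 0).congr fun n => by ring_nf
    rw [Complex.inv_re]; exact div_pos (by simpa using hη) (normSq_pos.mpr hηN)
  rw [tsum_int_eq_sum_tsum_residue N hsummable, Finset.mul_sum]
  refine Finset.sum_congr rfl fun r _ => ?_
  rw [tsum_congr (exp_neg_sq_div_add_I_mul_eq hN heven hηN hmul (r : ℕ)), tsum_mul_left,
    Int.cast_natCast, Int.cast_natCast]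
  ring

theorem ofReal_mul_cpow {r : ℝ} (hr : 0 < r) {z : ℂ} (hz : z ≠ 0) (s : ℂ) :
    ((r : ℂ) * z) ^ s = (r : ℂ) ^ s * z ^ s := by
  have hrc : (r : ℂ) ≠ 0 := ofReal_ne_zero.mpr hr.ne'
  rw [cpow_def_of_ne_zero (mul_ne_zero hrc hz), cpow_def_of_ne_zero hrc, cpow_def_of_ne_zero hz,
    Complex.log_ofReal_mul hr hz, ← Complex.exp_add, ← Complex.ofReal_log hr.le, add_mul]

theorem cpow_half_mul_tsum_exp_neg_sq_div_add_I_mul {N : ℕ} (heven : Even N) {η : ℝ}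
    (hη : 0 < η) :
    ((η : ℂ)⁻¹ - I / N)⁻¹ ^ (1 / 2 : ℂ) * ∑' n : ℤ, cexp (-π * (η + I * N)⁻¹ * (n : ℂ) ^ 2) =
      (1 - I * η / N)⁻¹ ^ (1 / 2 : ℂ) *
        ((η : ℂ) ^ (1 / 2 : ℂ) * ∑' n : ℤ, cexp (-π * η * (n : ℂ) ^ 2)) *
          (η + I * N) ^ (1 / 2 : ℂ) := by
  have hηc : (η : ℂ) ≠ 0 := ofReal_ne_zero.mpr hη.ne'
  have hu : (1 - I * η / N : ℂ) ≠ 0 := fun h => by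
    simpa [div_natCast_re] using congrArg re h
  have hperiod : ∑' n : ℤ, cexp (-π * (η + I * N) * (n + (0 : ℝ)) ^ 2) =
      ∑' n : ℤ, cexp (-π * η * (n : ℂ) ^ 2) := by
    refine tsum_congr fun n => ?_
    obtain ⟨k, hk⟩ := heven
    rw [Complex.exp_eq_exp_iff_exists_int]
    exact ⟨-(k * n ^ 2), by rw [hk]; push_cast; ring⟩
  have hfunctional := cpow_half_mul_tsum_exp_neg_shifted_sq (a := η + I * N) (by simpa using hη) 0
  rw [hperiod] at hfunctional
  simp only [ofReal_zero, mul_zero, zero_mul, add_zero] at hfunctional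
  have hsplit : ((η : ℂ)⁻¹ - I / N)⁻¹ = η * (1 - I * η / N)⁻¹ := by
    rw [← inv_inv (η : ℂ), ← mul_inv, inv_inv]; congr 1; field_simp
  rw [← hfunctional, hsplit, ofReal_mul_cpow hη (inv_ne_zero hu)]
  ring

/-- Both sides are limits, as `η → 0⁺`, of multiples of `θ(η + iN) = θ(η)`, where
`θ(a) = ∑ exp (-π a n²)`: one after the functional equation at `η + iN`, one directly. -/
theorem sum_exp_pi_mul_I_mul_sq_div {N : ℕ} (hN : N ≠ 0) (heven : Even N) :
    ∑ r : Fin N, cexp (π * I * ((r : ℕ) : ℂ) ^ 2 / N) = (I * N) ^ (1 / 2 : ℂ) := by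
  have hη : Tendsto (fun η : ℝ => (η : ℂ)) (𝓝[>] 0) (𝓝 0) := by
    simpa using (continuous_ofReal.tendsto 0).mono_left nhdsWithin_le_nhds
  have hθ : Tendsto (fun η : ℝ => (η : ℂ) ^ (1 / 2 : ℂ) * ∑' n : ℤ, cexp (-π * η * (n : ℂ) ^ 2))
      (𝓝[>] 0) (𝓝 1) := by
    have := tendsto_cpow_half_mul_tsum_exp_neg_shifted_sq (a := fun η : ℝ => (η : ℂ)) (l := 𝓝[>] 0)
      (by simpa only [← ofReal_inv, ofReal_re] using tendsto_inv_nhdsGT_zero) 0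
    simpa only [ofReal_zero, add_zero] using this
  have hroot : Tendsto (fun η : ℝ => (η + I * N : ℂ) ^ (1 / 2 : ℂ)) (𝓝[>] 0)
      (𝓝 ((I * N) ^ (1 / 2 : ℂ))) := by
    have h : Tendsto (fun η : ℝ => (η + I * N : ℂ)) (𝓝[>] 0) (𝓝 (I * N)) := by
      simpa using hη.add_const (I * N : ℂ)
    exact h.cpow tendsto_const_nhds (Or.inr (by simpa using hN))
  have hunit : Tendsto (fun η : ℝ => (1 - I * η / N : ℂ)⁻¹ ^ (1 / 2 : ℂ)) (𝓝[>] 0) (𝓝 1) := by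
    have h : Tendsto (fun η : ℝ => (1 - I * η / N : ℂ)⁻¹) (𝓝[>] 0) (𝓝 1) := by
      simpa using (tendsto_const_nhds.sub ((hη.const_mul I).div_const (N : ℂ))).inv₀
        (by simp : (1 - I * 0 / N : ℂ) ≠ 0)
    simpa using h.cpow (tendsto_const_nhds (x := (1 / 2 : ℂ))) (by simp)
  have hlim := (hunit.mul hθ).mul hroot
  rw [one_mul, one_mul] at hlim
  refine tendsto_nhds_unique_of_eventuallyEq
    (tendsto_cpow_half_mul_tsum_exp_neg_sq_div hN heven) hlim ?_
  filter_upwards [self_mem_nhdsWithin] with η hη using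
    cpow_half_mul_tsum_exp_neg_sq_div_add_I_mul heven hη

theorem sum_exp_sq_div_four_mul {m : ℕ} (hm : m ≠ 0) :
    ∑ r : Fin (2 * m), cexp (2 * π * I * (((r : ℕ) : ℂ) ^ 2 / (4 * m))) =
      √(2 * m) * cexp (I * π / 4) := by
  have hsum := sum_exp_pi_mul_I_mul_sq_div (N := 2 * m) (by lia) (even_two_mul m)
  have hm' : (0 : ℝ) < 2 * m := by positivity
  have hbase : (I * (2 * m : ℕ) : ℂ) = ((2 * m : ℝ) : ℂ) * I := by push_cast; ring
  rw [hbase, ofReal_mul_cpow hm' I_ne_zero, cpow_def_of_ne_zero I_ne_zero, Complex.log_I] at hsum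
  rw [Real.sqrt_eq_rpow, ofReal_cpow hm'.le]
  convert hsum using 3 <;> push_cast <;> ring_nf

end QuadraticGaussSum

/-! ### Sums over quotients of lattices -/

section QuotientSum

variable {V : Type*} [AddCommGroup V]

/-- The family `s` is a complete system of representatives of the classes of `B` modulo `A`,
without repetition. -/
structure IsRepSystem (A B : AddSubgroup V) {ι : Type*} (s : ι → V) : Prop where
  mem : ∀ i, s i ∈ B
  exists_sub_mem : ∀ b ∈ B, ∃ i, b - s i ∈ A
  eq_of_sub_mem : ∀ i j, s i - s j ∈ A → i = j

/-- The restriction of `f` to `B` is constant on classes modulo `A`. -/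
def IsPeriodicOn {R : Type*} (A B : AddSubgroup V) (f : V → R) : Prop :=
  ∀ b ∈ B, ∀ a ∈ A, f (b + a) = f b

/-- The sum of `f` over `B / A`. It is meaningful when `f` is `A`-periodic on `B` and `B / A` is
finite. -/
noncomputable def quotientSum {R : Type*} [AddCommMonoid R] (A B : AddSubgroup V) (f : V → R) : R :=
  ∑ᶠ q : B ⧸ A.addSubgroupOf B, f (Quotient.out q : B)

theorem isRepSystem_out (A B : AddSubgroup V) :
    IsRepSystem A B fun q : B ⧸ A.addSubgroupOf B => ((Quotient.out q : B) : V) where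
  mem q := (Quotient.out q : B).2
  exists_sub_mem b hb := by
    obtain ⟨a, ha⟩ := QuotientAddGroup.mk_out_eq_add (A.addSubgroupOf B) ⟨b, hb⟩
    refine ⟨((⟨b, hb⟩ : B) : B ⧸ A.addSubgroupOf B), ?_⟩
    rw [ha]
    simpa using AddSubgroup.mem_addSubgroupOf.mp a.2
  eq_of_sub_mem i j h := by
    rw [← QuotientAddGroup.out_eq' i, ← QuotientAddGroup.out_eq' j, QuotientAddGroup.eq,
      AddSubgroup.mem_addSubgroupOf]
    simpa [add_comm, sub_eq_add_neg] using A.neg_mem h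

namespace IsRepSystem

variable {A B C A' B' : AddSubgroup V} {ι κ : Type*} {s : ι → V} {t : κ → V}

theorem exists_equiv (hs : IsRepSystem A B s) (ht : IsRepSystem A B t) :
    ∃ φ : ι ≃ κ, ∀ i, s i - t (φ i) ∈ A := by
  choose φ hφ using fun i => ht.exists_sub_mem (s i) (hs.mem i)
  refine ⟨Equiv.ofBijective φ ⟨fun i j hij => hs.eq_of_sub_mem _ _ ?_, fun k => ?_⟩, hφ⟩
  · simpa [hij] using A.sub_mem (hφ i) (hφ j)
  · obtain ⟨i, hi⟩ := hs.exists_sub_mem (t k) (ht.mem k)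
    exact ⟨i, ht.eq_of_sub_mem _ _ (by simpa using A.neg_mem (A.add_mem (hφ i) hi))⟩

theorem card_eq_relIndex (hs : IsRepSystem A B s) : Nat.card ι = A.relIndex B :=
  Nat.card_congr (hs.exists_equiv (isRepSystem_out A B)).choose

theorem trans (hAB : A ≤ B) (hBC : B ≤ C) (hs : IsRepSystem B C s) (ht : IsRepSystem A B t) :
    IsRepSystem A C fun p : ι × κ => s p.1 + t p.2 where
  mem p := C.add_mem (hs.mem _) (hBC (ht.mem _))
  exists_sub_mem c hc := by
    obtain ⟨i, hi⟩ := hs.exists_sub_mem c hc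
    obtain ⟨j, hj⟩ := ht.exists_sub_mem _ hi
    exact ⟨(i, j), by simpa [sub_sub] using hj⟩
  eq_of_sub_mem := by
    rintro ⟨i, j⟩ ⟨i', j'⟩ h
    obtain rfl : i = i' := hs.eq_of_sub_mem _ _ <| by
      convert B.sub_mem (hAB h) (B.sub_mem (ht.mem j) (ht.mem j')) using 1
      simp only; abel
    obtain rfl : j = j' := ht.eq_of_sub_mem _ _ (by simpa using h)
    rfl

theorem sup_right (hs : IsRepSystem (B ⊓ A') B s) : IsRepSystem A' (B ⊔ A') s where
  mem i := (le_sup_left : B ≤ B ⊔ A') (hs.mem i)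
  exists_sub_mem c hc := by
    obtain ⟨x, hx, y, hy, rfl⟩ := AddSubgroup.mem_sup.mp hc
    obtain ⟨i, hi⟩ := hs.exists_sub_mem x hx
    refine ⟨i, ?_⟩
    convert A'.add_mem hi.2 hy using 1; abel
  eq_of_sub_mem i j h := hs.eq_of_sub_mem _ _ ⟨B.sub_mem (hs.mem i) (hs.mem j), h⟩

theorem add_right (hs : IsRepSystem A B s) {y : V} (hy : y ∈ B) :
    IsRepSystem A B fun i => s i + y where
  mem i := B.add_mem (hs.mem i) hy
  exists_sub_mem b hb := by
    obtain ⟨i, hi⟩ := hs.exists_sub_mem (b - y) (B.sub_mem hb hy)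
    exact ⟨i, by convert hi using 1; abel⟩
  eq_of_sub_mem i j h := hs.eq_of_sub_mem _ _ (by simpa using h)

theorem restrict (hs : IsRepSystem A C s) (hAB : A ≤ B) (hBC : B ≤ C) :
    IsRepSystem A B fun i : {i // s i ∈ B} => s i where
  mem i := i.2
  exists_sub_mem b hb := by
    obtain ⟨i, hi⟩ := hs.exists_sub_mem b (hBC hb)
    exact ⟨⟨i, by simpa using B.sub_mem hb (hAB hi)⟩, hi⟩
  eq_of_sub_mem i j h := Subtype.ext (hs.eq_of_sub_mem _ _ h)

end IsRepSystem

variable {A B : AddSubgroup V}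

/-- The finite type structure on `B / A` given by finiteness of the index. -/
noncomputable abbrev fintypeQuotient (h : A.relIndex B ≠ 0) : Fintype (B ⧸ A.addSubgroupOf B) :=
  have : Finite (B ⧸ A.addSubgroupOf B) := AddSubgroup.index_ne_zero_iff_finite.mp h
  Fintype.ofFinite _

theorem IsPeriodicOn.mono {R : Type*} {f : V → R} {A' B' : AddSubgroup V}
    (hf : IsPeriodicOn A B f) (hA : A' ≤ A) (hB : B' ≤ B) : IsPeriodicOn A' B' f :=
  fun b hb a ha => hf b (hB hb) a (hA ha)

section AddCommMonoid

variable {R : Type*} [AddCommMonoid R] {f g : V → R}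

theorem quotientSum_congr (h : ∀ x ∈ B, f x = g x) : quotientSum A B f = quotientSum A B g :=
  finsum_congr fun q => h _ (Quotient.out q : B).2

theorem quotientSum_eq_sum (hf : IsPeriodicOn A B f) {ι : Type*} [Fintype ι] {s : ι → V}
    (hs : IsRepSystem A B s) : quotientSum A B f = ∑ i, f (s i) := by
  obtain ⟨φ, hφ⟩ := (isRepSystem_out A B).exists_equiv hs
  rw [quotientSum, ← finsum_eq_sum_of_fintype, ← finsum_comp_equiv φ]
  refine finsum_congr fun q => ?_
  rw [← hf (s (φ q)) (hs.mem _) _ (hφ q), add_sub_cancel]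

theorem quotientSum_sup_right {A' : AddSubgroup V} (hf : IsPeriodicOn A' (B ⊔ A') f)
    (hfin : (B ⊓ A').relIndex B ≠ 0) :
    quotientSum (B ⊓ A') B f = quotientSum A' (B ⊔ A') f := by
  have := fintypeQuotient hfin
  have hs := isRepSystem_out (B ⊓ A') B
  rw [quotientSum_eq_sum (hf.mono inf_le_right le_sup_left) hs, quotientSum_eq_sum hf hs.sup_right]

end AddCommMonoid

theorem quotientSum_sup_eq_mul {R : Type*} [CommSemiring R] {f : V → R} {B₁ B₂ : AddSubgroup V}
    (hf : IsPeriodicOn (B₁ ⊓ B₂) (B₁ ⊔ B₂) f)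
    (hmul : ∀ x ∈ B₁, ∀ y ∈ B₂, f (x + y) = f x * f y) (h₁ : (B₁ ⊓ B₂).relIndex B₁ ≠ 0)
    (h₂ : (B₁ ⊓ B₂).relIndex B₂ ≠ 0) :
    quotientSum (B₁ ⊓ B₂) (B₁ ⊔ B₂) f =
      quotientSum (B₁ ⊓ B₂) B₁ f * quotientSum (B₁ ⊓ B₂) B₂ f := by
  have := fintypeQuotient h₁
  have := fintypeQuotient h₂
  have hs₁ := isRepSystem_out (B₁ ⊓ B₂) B₁
  have hs₂ := isRepSystem_out (B₁ ⊓ B₂) B₂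
  rw [quotientSum_eq_sum hf (hs₁.sup_right.trans inf_le_right le_sup_right hs₂),
    quotientSum_eq_sum (hf.mono le_rfl le_sup_left) hs₁,
    quotientSum_eq_sum (hf.mono le_rfl le_sup_right) hs₂, Finset.sum_mul_sum, Fintype.sum_prod_type]
  exact Finset.sum_congr rfl fun i _ => Finset.sum_congr rfl fun j _ =>
    hmul _ (hs₁.mem i) _ (hs₂.mem j)

section IsDomain

variable {R : Type*} [CommRing R] [IsDomain R]

theorem quotientSum_eq_zero_of_map_add_eq_mul {g : V → R}
    (hg : ∀ x ∈ B, ∀ y ∈ B, g (x + y) = g x * g y) (hA : ∀ a ∈ A, g a = 1) (hAB : A ≤ B)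
    (hfin : A.relIndex B ≠ 0) {y : V} (hy : y ∈ B) (hgy : g y ≠ 1) : quotientSum A B g = 0 := by
  have := fintypeQuotient hfin
  have hs := isRepSystem_out A B
  have hper : IsPeriodicOn A B g := fun b hb a ha => by rw [hg b hb a (hAB ha), hA a ha, mul_one]
  have hshift := quotientSum_eq_sum hper (hs.add_right hy)
  rw [Finset.sum_congr rfl fun i _ => hg _ (hs.mem i) y hy, ← Finset.sum_mul,
    ← quotientSum_eq_sum hper hs] at hshift
  exact by_contra fun h0 => hgy (mul_left_cancel₀ h0 (by rw [← hshift, mul_one]))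

/-- If `f` is a quadratic function with associated pairing `ψ`, isotropic on `L`, and `M` is the
orthogonal of `L` in `M'`, then the classes outside `M / L` cancel. -/
theorem quotientSum_eq_relIndex_mul {L' L M M' : AddSubgroup V} (hL : L' ≤ L) (hLM : L ≤ M)
    (hM : M ≤ M') {f : V → R} {ψ : V → V → R} (hf : ∀ x y, f (x + y) = f x * f y * ψ x y)
    (hfL : ∀ x ∈ L, f x = 1) (hψ : ∀ x y y', ψ x (y + y') = ψ x y * ψ x y')
    (hψL' : ∀ x ∈ M', ∀ y ∈ L', ψ x y = 1) (hmem : ∀ x ∈ M', x ∈ M ↔ ∀ y ∈ L, ψ x y = 1)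
    (hfinL : L'.relIndex L ≠ 0) (hfinM : L.relIndex M' ≠ 0) :
    quotientSum L' M' f = L'.relIndex L * quotientSum L M f := by
  classical
  have := fintypeQuotient hfinL
  have := fintypeQuotient hfinM
  have hs := isRepSystem_out L M'
  have ht := isRepSystem_out L' L
  set s := fun q : M' ⧸ L.addSubgroupOf M' => ((Quotient.out q : M') : V)
  have hper' : IsPeriodicOn L' M' f := fun b hb a ha => by
    rw [hf, hfL a (hL ha), hψL' b hb a ha, mul_one, mul_one]
  have hper : IsPeriodicOn L M f := fun b hb a ha => by
    rw [hf, hfL a ha, (hmem b (hM hb)).1 hb a ha, mul_one, mul_one]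
  have hfiber : ∀ i, ∑ j : L ⧸ L'.addSubgroupOf L, f (s i + (Quotient.out j : L)) =
      if s i ∈ M then L'.relIndex L * f (s i) else 0 := fun i => by
    have hterm : ∀ j : L ⧸ L'.addSubgroupOf L,
        f (s i + (Quotient.out j : L)) = f (s i) * ψ (s i) (Quotient.out j : L) := fun j => by
      rw [hf, hfL _ (ht.mem j), mul_one]
    rw [Finset.sum_congr rfl fun j _ => hterm j, ← Finset.mul_sum]
    split_ifs with hi
    · rw [Finset.sum_congr rfl fun j _ => (hmem _ (hs.mem i)).1 hi _ (ht.mem j),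
        ← ht.card_eq_relIndex]
      simp [Nat.card_eq_fintype_card, mul_comm]
    · obtain ⟨y, hy, hne⟩ : ∃ y ∈ L, ψ (s i) y ≠ 1 := by
        simpa using (hmem _ (hs.mem i)).not.mp hi
      have hzero := quotientSum_eq_zero_of_map_add_eq_mul (g := ψ (s i))
        (fun x _ y _ => hψ _ x y) (hψL' _ (hs.mem i)) hL hfinL hy hne
      rw [quotientSum_eq_sum (fun b _ a ha => by rw [hψ, hψL' _ (hs.mem i) a ha, mul_one]) ht]
        at hzero
      rw [hzero, mul_zero]
  rw [quotientSum_eq_sum hper' (hs.trans hL (hLM.trans hM) ht),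
    quotientSum_eq_sum hper (hs.restrict hLM hM), Fintype.sum_prod_type,
    Finset.sum_congr rfl fun i _ => hfiber i, ← Finset.sum_filter, ← Finset.mul_sum,
    Finset.sum_subtype (p := fun i => s i ∈ M) _ (by simp)]

end IsDomain

end QuotientSum

/-! ### Milgram's formula -/

section Milgram

open Complex

open scoped Real

/-- The additive character `x ↦ exp (2πix)` of `ℚ`. -/
noncomputable def ratChar : AddChar ℚ ℂ where
  toFun x := cexp (2 * π * I * (x : ℂ))
  map_zero_eq_one' := by simp
  map_add_eq_mul' x y := by rw [← Complex.exp_add]; push_cast; ring_nf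

theorem ratChar_apply (x : ℚ) : ratChar x = cexp (2 * π * I * (x : ℂ)) := rfl

theorem ratChar_eq_one_iff {x : ℚ} : ratChar x = 1 ↔ ∃ n : ℤ, x = n := by
  rw [ratChar_apply, Complex.exp_eq_one_iff]
  refine exists_congr fun n => ?_
  rw [mul_comm, mul_left_inj' two_pi_I_ne_zero]
  norm_cast

theorem ratChar_intCast (n : ℤ) : ratChar n = 1 := ratChar_eq_one_iff.mpr ⟨n, rfl⟩

theorem ratChar_sum {ι : Type*} (s : Finset ι) (g : ι → ℚ) :
    ratChar (∑ i ∈ s, g i) = ∏ i ∈ s, ratChar (g i) := by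
  classical
  induction s using Finset.induction_on with
  | empty => simp
  | insert a s ha ih =>
    rw [Finset.sum_insert ha, Finset.prod_insert ha, AddChar.map_add_eq_mul, ih]

/-- The phase of the one-dimensional Gauss sum attached to the form `a x²`, which is
`exp (± iπ / 4)` according to the sign of `a`. -/
noncomputable def signPhase (a : ℚ) : ℂ :=
  if 0 < a then cexp (I * π / 4) else cexp (-(I * π / 4))

theorem signPhase_mul_of_pos {a : ℚ} (ha : 0 < a) (b : ℚ) : signPhase (a * b) = signPhase b := by
  simp only [signPhase, mul_pos_iff_of_pos_left ha]

theorem sum_ratChar_mul_div_sq {a : ℤ} (ha : a ≠ 0) :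
    ∑ r : Fin (2 * a.natAbs), ratChar (a * (((r : ℕ) : ℚ) / (2 * a.natAbs : ℕ)) ^ 2) =
      √(2 * a.natAbs) * signPhase a := by
  have hm := Int.natAbs_ne_zero.mpr ha
  have hsum := sum_exp_sq_div_four_mul hm
  have hm' : (a.natAbs : ℂ) ≠ 0 := mod_cast hm
  rcases lt_or_gt_of_ne ha with hneg | hpos
  · have ha' : (a : ℚ) = -(a.natAbs : ℚ) := by
      rw [← Int.cast_natCast, Int.ofNat_natAbs_of_nonpos hneg.le]; simp
    have hconj : (starRingEnd ℂ) (cexp (I * π / 4)) = signPhase a := by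
      rw [signPhase, if_neg (by exact_mod_cast hneg.not_gt), ← Complex.exp_conj]
      congr 1
      rw [map_div₀, map_mul, conj_I, conj_ofReal, conj_ofNat]
      ring
    rw [← hconj, ← conj_ofReal, ← map_mul, ← hsum, map_sum]
    refine Finset.sum_congr rfl fun r _ => ?_
    rw [← Complex.exp_conj, ratChar_apply, ha']
    congr 1
    simp only [map_mul, map_div₀, map_pow, conj_I, conj_ofReal, conj_natCast, conj_ofNat]
    push_cast
    field_simp
    norm_num
    ring
  · have ha' : (a : ℚ) = (a.natAbs : ℚ) := by
      rw [← Int.cast_natCast, Int.natAbs_of_nonneg hpos.le]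
    rw [signPhase, if_pos (by exact_mod_cast hpos), ← hsum]
    refine Finset.sum_congr rfl fun r _ => ?_
    rw [ratChar_apply, ha']
    congr 1
    push_cast
    field_simp
    norm_num
    ring

theorem isRepSystem_natCast_div {n : ℕ} (hn : n ≠ 0) :
    IsRepSystem (Int.castAddHom ℚ).range
      ((Int.castAddHom ℚ).range.comap (AddMonoidHom.mulLeft (n : ℚ)))
      fun k : Fin n => ((k : ℕ) : ℚ) / n where
  mem k := ⟨k, by simp; field_simp⟩
  exists_sub_mem := by
    rintro q ⟨m, hm : (m : ℚ) = n * q⟩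
    have hn' : (n : ℤ) ≠ 0 := mod_cast hn
    have hmod := Int.emod_nonneg m hn'
    have hlt := Int.emod_lt_of_pos m (by lia : (0 : ℤ) < n)
    refine ⟨⟨(m % n).toNat, by lia⟩, m / n, ?_⟩
    have hdiv : ((m % n).toNat : ℚ) + n * ((m / n : ℤ) : ℚ) = m := by
      rw [← Int.cast_natCast (m % n).toNat, Int.toNat_of_nonneg hmod]
      exact_mod_cast Int.emod_add_mul_ediv m n
    have hn'' : (n : ℚ) ≠ 0 := mod_cast hn
    simp only [Int.coe_castAddHom]
    field_simp
    linarith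
  eq_of_sub_mem := by
    rintro k l ⟨m, hm : (m : ℚ) = k / n - l / n⟩
    have hn' : (n : ℚ) ≠ 0 := mod_cast hn
    have hkl : ((k : ℕ) : ℤ) - ((l : ℕ) : ℤ) = n * m := by
      field_simp at hm
      rw [← Int.cast_inj (α := ℚ)]
      push_cast
      linear_combination -hm
    have habs : |((k : ℕ) : ℤ) - ((l : ℕ) : ℤ)| < n := abs_lt.mpr ⟨by omega, by omega⟩
    have := Int.eq_zero_of_abs_lt_dvd ⟨m, hkl⟩ habs
    exact Fin.ext (by lia)

variable {V : Type*} [AddCommGroup V] [Module ℚ V] {B : LinearMap.BilinForm ℚ V}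

/-- The dual of `L` with respect to the form `2 B`, the bilinear form associated with the
quadratic form `x ↦ B x x`. -/
def evenDual (B : LinearMap.BilinForm ℚ V) (L : AddSubgroup V) : AddSubgroup V where
  carrier := {x | ∀ y ∈ L, ∃ n : ℤ, 2 * B x y = n}
  zero_mem' := fun y _ => ⟨0, by simp⟩
  add_mem' := fun {x x'} hx hx' y hy => by
    obtain ⟨n, hn⟩ := hx y hy
    obtain ⟨m, hm⟩ := hx' y hy
    exact ⟨n + m, by rw [map_add, LinearMap.add_apply, mul_add, hn, hm, Int.cast_add]⟩
  neg_mem' := fun {x} hx y hy => by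
    obtain ⟨n, hn⟩ := hx y hy
    exact ⟨-n, by rw [map_neg, LinearMap.neg_apply, mul_neg, hn, Int.cast_neg]⟩

theorem evenDual_anti {L L' : AddSubgroup V} (h : L' ≤ L) : evenDual B L ≤ evenDual B L' :=
  fun _ hx y hy => hx y (h hy)

theorem le_evenDual (hB : B.IsSymm) {L : AddSubgroup V} (hL : ∀ x ∈ L, ∃ n : ℤ, B x x = n) :
    L ≤ evenDual B L := by
  intro x hx y hy
  obtain ⟨n, hn⟩ := hL _ (L.add_mem hx hy)
  obtain ⟨m, hm⟩ := hL _ hx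
  obtain ⟨k, hk⟩ := hL _ hy
  refine ⟨n - m - k, ?_⟩
  push_cast
  rw [← hn, ← hm, ← hk]
  simp only [map_add, LinearMap.add_apply]
  rw [hB.eq y x]
  ring

theorem ratChar_add_self (hB : B.IsSymm) (x y : V) :
    ratChar (B (x + y) (x + y)) = ratChar (B x x) * ratChar (B y y) * ratChar (2 * B x y) := by
  rw [← AddChar.map_add_eq_mul, ← AddChar.map_add_eq_mul]
  simp only [map_add, LinearMap.add_apply]
  rw [hB.eq y x]
  ring_nf

theorem isPeriodicOn_ratChar (hB : B.IsSymm) {L : AddSubgroup V}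
    (hL : ∀ x ∈ L, ∃ n : ℤ, B x x = n) :
    IsPeriodicOn L (evenDual B L) fun x => ratChar (B x x) := fun x hx y hy => by
  simp only
  rw [ratChar_add_self hB, ratChar_eq_one_iff.mpr (hL y hy), ratChar_eq_one_iff.mpr (hx y hy),
    mul_one, mul_one]

theorem quotientSum_ratChar_eq_relIndex_mul (hB : B.IsSymm) {L L' : AddSubgroup V}
    (hL : ∀ x ∈ L, ∃ n : ℤ, B x x = n) (hL' : L' ≤ L) (hfin : L'.relIndex (evenDual B L') ≠ 0) :
    L'.relIndex L ≠ 0 ∧ L.relIndex (evenDual B L) ≠ 0 ∧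
      quotientSum L' (evenDual B L') (fun x => ratChar (B x x)) =
        L'.relIndex L * quotientSum L (evenDual B L) fun x => ratChar (B x x) := by
  have hLD := le_evenDual hB hL
  have hDD := evenDual_anti (B := B) hL'
  rw [← AddSubgroup.relIndex_mul_relIndex _ L _ hL' (hLD.trans hDD)] at hfin
  have hfinL := left_ne_zero_of_mul hfin
  have hfinM := right_ne_zero_of_mul hfin
  refine ⟨hfinL, left_ne_zero_of_mul
    ((AddSubgroup.relIndex_mul_relIndex L _ _ hLD hDD).trans_ne hfinM), ?_⟩
  exact quotientSum_eq_relIndex_mul hL' hLD hDD (ψ := fun x y => ratChar (2 * B x y))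
    (ratChar_add_self hB) (fun x hx => ratChar_eq_one_iff.mpr (hL x hx))
    (fun x y y' => by simp only [map_add, mul_add, AddChar.map_add_eq_mul])
    (fun x hx y hy => ratChar_eq_one_iff.mpr (hx y hy))
    (fun x _ => forall₂_congr fun y _ => ratChar_eq_one_iff.symm) hfinL hfinM

variable {ι : Type*} {e : Module.Basis ι ℚ V}

theorem mem_span_int_iff (x : V) :
    x ∈ (Submodule.span ℤ (Set.range e)).toAddSubgroup ↔
      ∀ i, e.repr x i ∈ (Int.castAddHom ℚ).range := by
  rw [Submodule.mem_toAddSubgroup, Module.Basis.mem_span_iff_repr_mem ℤ e x]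
  rfl

theorem exists_smul_basis_mem (e : Module.Basis ι ℚ V) {L : AddSubgroup V}
    (hfull : ∀ x : V, ∃ N : ℕ, N ≠ 0 ∧ N • x ∈ L) :
    ∃ (N : ι → ℕ) (e' : Module.Basis ι ℚ V),
      ∀ i, N i ≠ 0 ∧ e' i = (N i : ℚ) • e i ∧ e' i ∈ L := by
  choose N hN hNL using fun i => hfull (e i)
  refine ⟨N, e.isUnitSMul fun i => (Nat.cast_ne_zero.mpr (hN i) : (N i : ℚ) ≠ 0).isUnit,
    fun i => ⟨hN i, Module.Basis.isUnitSMul_apply _ i, ?_⟩⟩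
  rw [Module.Basis.isUnitSMul_apply, Nat.cast_smul_eq_nsmul]
  exact hNL i

section Fintype

variable [Fintype ι]

theorem apply_eq_sum_of_isOrthoᵢ (he : B.IsOrthoᵢ e) (x y : V) :
    B x y = ∑ i, B (e i) (e i) * e.repr x i * e.repr y i := by
  classical
  conv_lhs => rw [← e.sum_repr x, ← e.sum_repr y]
  simp only [map_sum, LinearMap.sum_apply, map_smul, LinearMap.smul_apply, smul_eq_mul]
  refine Finset.sum_congr rfl fun i _ => ?_
  rw [Finset.sum_eq_single i (fun j _ hj => by
    rw [LinearMap.isOrthoᵢ_def.mp he j i hj, mul_zero]) (by simp)]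
  ring

theorem IsRepSystem.sum_smul_basis {A C : AddSubgroup V} {A₁ C₁ : ι → AddSubgroup ℚ}
    (hA : ∀ x, x ∈ A ↔ ∀ i, e.repr x i ∈ A₁ i) (hC : ∀ x, x ∈ C ↔ ∀ i, e.repr x i ∈ C₁ i)
    {κ : ι → Type*} {s : ∀ i, κ i → ℚ} (hs : ∀ i, IsRepSystem (A₁ i) (C₁ i) (s i)) :
    IsRepSystem A C fun k : ∀ i, κ i => ∑ i, s i (k i) • e i where
  mem k := (hC _).mpr fun i => by rw [e.repr_sum_self]; exact (hs i).mem _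
  exists_sub_mem x hx := by
    choose k hk using fun i => (hs i).exists_sub_mem _ ((hC x).mp hx i)
    exact ⟨k, (hA _).mpr fun i => by rw [map_sub, Finsupp.sub_apply, e.repr_sum_self]; exact hk i⟩
  eq_of_sub_mem k l h := funext fun i => (hs i).eq_of_sub_mem _ _ <| by
    simpa only [map_sub, Finsupp.sub_apply, e.repr_sum_self] using (hA _).mp h i

end Fintype

theorem mem_evenDual_span_int_iff [Finite ι] (he : B.IsOrthoᵢ e) {a : ι → ℤ}
    (ha : ∀ i, B (e i) (e i) = a i) (x : V) :
    x ∈ evenDual B (Submodule.span ℤ (Set.range e)).toAddSubgroup ↔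
      ∀ i, e.repr x i ∈ (Int.castAddHom ℚ).range.comap
        (AddMonoidHom.mulLeft ((2 * (a i).natAbs : ℕ) : ℚ)) := by
  classical
  have := Fintype.ofFinite ι
  have hcomap : ∀ i, (e.repr x i ∈ (Int.castAddHom ℚ).range.comap
      (AddMonoidHom.mulLeft ((2 * (a i).natAbs : ℕ) : ℚ))) ↔
      ∃ n : ℤ, 2 * a i * e.repr x i = n := fun i => by
    change (∃ n : ℤ, (n : ℚ) = (2 * (a i).natAbs : ℕ) * e.repr x i) ↔ _
    rcases Int.natAbs_eq (a i) with h | h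
    · have h' : (a i : ℚ) = (a i).natAbs := by conv_lhs => rw [h, Int.cast_natCast]
      rw [h']; push_cast
      exact exists_congr fun n => eq_comm
    · have h' : (a i : ℚ) = -(a i).natAbs := by conv_lhs => rw [h, Int.cast_neg, Int.cast_natCast]
      rw [h', ← (Equiv.neg ℤ).exists_congr_right]
      refine exists_congr fun n => ?_
      push_cast [Equiv.neg_apply]
      constructor <;> intro h <;> linarith
  rw [forall_congr' hcomap]
  constructor
  · intro h i
    obtain ⟨n, hn⟩ := h (e i) (Submodule.subset_span ⟨i, rfl⟩)
    refine ⟨n, ?_⟩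
    rw [← hn, apply_eq_sum_of_isOrthoᵢ he,
      Finset.sum_eq_single i (fun j _ hj => by simp [hj.symm]) (by simp)]
    simp [ha, mul_assoc]
  · intro h y hy
    choose n hn using h
    choose m hm using (mem_span_int_iff y).mp hy
    refine ⟨∑ i, n i * m i, ?_⟩
    rw [apply_eq_sum_of_isOrthoᵢ he, Finset.mul_sum]
    push_cast
    refine Finset.sum_congr rfl fun i _ => ?_
    rw [← hn, ← hm, ha]
    simp only [Int.coe_castAddHom]
    ring

theorem exists_int_eq_of_mem_span [Finite ι] (he : B.IsOrthoᵢ e) {a : ι → ℤ}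
    (ha : ∀ i, B (e i) (e i) = a i) {x : V}
    (hx : x ∈ (Submodule.span ℤ (Set.range e)).toAddSubgroup) : ∃ n : ℤ, B x x = n := by
  have := Fintype.ofFinite ι
  choose m hm using (mem_span_int_iff x).mp hx
  refine ⟨∑ i, a i * m i * m i, ?_⟩
  rw [apply_eq_sum_of_isOrthoᵢ he]
  push_cast
  exact Finset.sum_congr rfl fun i _ => by rw [ha, ← hm]; rfl

variable [Fintype ι]

theorem quotientSum_ratChar_span (hB : B.IsSymm) (he : B.IsOrthoᵢ e) {a : ι → ℤ}
    (ha0 : ∀ i, a i ≠ 0) (ha : ∀ i, B (e i) (e i) = a i) {L : AddSubgroup V}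
    (hL : L = (Submodule.span ℤ (Set.range e)).toAddSubgroup) :
    L.relIndex (evenDual B L) ≠ 0 ∧ ∃ c : ℝ, 0 < c ∧
      quotientSum L (evenDual B L) (fun x => ratChar (B x x)) =
        c * ∏ i, signPhase (B (e i) (e i)) := by
  classical
  subst hL
  have hn : ∀ i, 2 * (a i).natAbs ≠ 0 := fun i => by simpa using ha0 i
  have : ∀ i, NeZero (2 * (a i).natAbs) := fun i => ⟨hn i⟩
  have hs := IsRepSystem.sum_smul_basis (e := e) mem_span_int_iff
    (mem_evenDual_span_int_iff he ha) fun i => isRepSystem_natCast_div (hn i)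
  refine ⟨by rw [← hs.card_eq_relIndex]; exact Nat.card_ne_zero.mpr ⟨inferInstance, inferInstance⟩,
    ∏ i, √(2 * (a i).natAbs), Finset.prod_pos fun i _ => ?_, ?_⟩
  · have := Int.natAbs_pos.mpr (ha0 i)
    positivity
  · rw [quotientSum_eq_sum (isPeriodicOn_ratChar hB fun x => exists_int_eq_of_mem_span he ha) hs]
    push_cast
    rw [← Finset.prod_mul_distrib, Finset.prod_congr rfl fun i _ => by
      rw [ha, ← sum_ratChar_mul_div_sq (ha0 i)], Finset.prod_univ_sum, Fintype.piFinset_univ]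
    refine Finset.sum_congr rfl fun k _ => ?_
    rw [apply_eq_sum_of_isOrthoᵢ he, ratChar_sum]
    refine Finset.prod_congr rfl fun i _ => ?_
    rw [e.repr_sum_self, ha, mul_assoc, ← sq]
    push_cast
    rfl

/-- Milgram's formula, without the absolute value. -/
theorem quotientSum_ratChar_evenDual (hB : B.IsSymm) (he : B.IsOrthoᵢ e)
    (he0 : ∀ i, B (e i) (e i) ≠ 0) {L : AddSubgroup V} (hL : ∀ x ∈ L, ∃ n : ℤ, B x x = n)
    (hfull : ∀ x : V, ∃ N : ℕ, N ≠ 0 ∧ N • x ∈ L) :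
    L.relIndex (evenDual B L) ≠ 0 ∧ ∃ c : ℝ, 0 < c ∧
      quotientSum L (evenDual B L) (fun x => ratChar (B x x)) =
        c * ∏ i, signPhase (B (e i) (e i)) := by
  obtain ⟨N, e', hN⟩ := exists_smul_basis_mem e hfull
  have hN' : ∀ i, (N i : ℚ) ≠ 0 := fun i => mod_cast (hN i).1
  choose a ha using fun i => hL (e' i) (hN i).2.2
  have hsq : ∀ i, B (e' i) (e' i) = (N i : ℚ) ^ 2 * B (e i) (e i) := fun i => by
    rw [(hN i).2.1]; simp only [map_smul, LinearMap.smul_apply, smul_eq_mul]; ring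
  have he' : B.IsOrthoᵢ e' := LinearMap.isOrthoᵢ_def.mpr fun i j hij => by
    simp [(hN _).2.1, LinearMap.isOrthoᵢ_def.mp he i j hij]
  have hsub : (Submodule.span ℤ (Set.range e')).toAddSubgroup ≤ L := by
    have : Submodule.span ℤ (Set.range e') ≤ AddSubgroup.toIntSubmodule L :=
      Submodule.span_le.mpr (by rintro _ ⟨i, rfl⟩; exact (hN i).2.2)
    exact this
  have ha0 : ∀ i, a i ≠ 0 := fun i => by
    rw [← Int.cast_ne_zero (α := ℚ), ← ha, hsq]
    exact mul_ne_zero (pow_ne_zero 2 (hN' i)) (he0 i)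
  obtain ⟨hfin, c, hc, hsum⟩ := quotientSum_ratChar_span hB he' ha0 ha rfl
  obtain ⟨hfinL, hfinM, heq⟩ := quotientSum_ratChar_eq_relIndex_mul hB hL hsub hfin
  refine ⟨hfinM, c / ((Submodule.span ℤ (Set.range e')).toAddSubgroup.relIndex L : ℝ),
    div_pos hc (by positivity), ?_⟩
  rw [heq, Finset.prod_congr rfl fun i _ => by
    rw [hsq, signPhase_mul_of_pos (by have := hN' i; positivity)]] at hsum
  push_cast
  rw [div_mul_eq_mul_div, ← hsum, mul_div_cancel_left₀ _ (Nat.cast_ne_zero.mpr hfinL)]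

end Milgram

/-! ### Trace forms -/

section TraceForm

open NumberField.mixedEmbedding QuadraticForm

/-- The bilinear form `(x, y) ↦ Tr (u x y)`. -/
noncomputable def twistedTraceForm (R : Type*) {A : Type*} [CommRing R] [CommRing A] [Algebra R A]
    (u : A) : LinearMap.BilinForm R A :=
  (Algebra.traceForm R A).compLeft (LinearMap.mulLeft R u)

theorem twistedTraceForm_apply {R A : Type*} [CommRing R] [CommRing A] [Algebra R A] (u x y : A) :
    twistedTraceForm R u x y = Algebra.trace R A (u * x * y) := rfl

theorem isSymm_twistedTraceForm {R A : Type*} [CommRing R] [CommRing A] [Algebra R A] (u : A) :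
    (twistedTraceForm R u).IsSymm :=
  ⟨fun x y => by simp [twistedTraceForm_apply, mul_right_comm]⟩

theorem eq_zero_of_twistedTraceForm_eq_zero {F L : Type*} [Field F] [Field L] [Algebra F L]
    [FiniteDimensional F L] [Algebra.IsSeparable F L] {u x : L} (hu : u ≠ 0)
    (h : ∀ y, twistedTraceForm F u x y = 0) : x = 0 :=
  (mul_eq_zero.mp ((traceForm_nondegenerate F L).1 (u * x) h)).resolve_left hu

theorem exists_isOrthoᵢ_twistedTraceForm {F L : Type*} [Field F] [NeZero (2 : F)] [Field L]
    [Algebra F L] [FiniteDimensional F L] [Algebra.IsSeparable F L] {u : L} (hu : u ≠ 0) :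
    ∃ e : Module.Basis (Fin (Module.finrank F L)) F L, (twistedTraceForm F u).IsOrthoᵢ e ∧
      ∀ i, twistedTraceForm F u (e i) (e i) ≠ 0 := by
  have := invertibleOfNonzero (two_ne_zero (α := F))
  obtain ⟨e, he⟩ := LinearMap.BilinForm.exists_orthogonal_basis
    (LinearMap.BilinForm.isSymm_iff.mp (isSymm_twistedTraceForm (R := F) u))
  refine ⟨e, he, fun i hi => e.ne_zero i (eq_zero_of_twistedTraceForm_eq_zero (F := F) hu
    fun y => ?_)⟩
  suffices h : twistedTraceForm F u (e i) = 0 by rw [h, LinearMap.zero_apply]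
  refine e.ext fun j => ?_
  rcases eq_or_ne i j with rfl | hij
  · exact hi
  · exact he hij

variable {K}

theorem trace_mixedEmbedding (x : K) :
    Algebra.trace ℝ (mixedSpace K) (mixedEmbedding K x) = (Algebra.trace ℚ K x : ℝ) := by
  classical
  rw [Algebra.trace_eq_matrix_trace (latticeBasis K), Algebra.trace_eq_matrix_trace
    (integralBasis K)]
  simp only [Matrix.trace, Matrix.diag_apply, Algebra.leftMulMatrix_eq_repr_mul, Rat.cast_sum]
  refine Finset.sum_congr rfl fun i _ => ?_
  rw [latticeBasis_apply, ← map_mul, latticeBasis_repr_apply]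

/-- The quadratic form `x ↦ Tr (ω x²)` on `K ⊗ ℝ`, realised as the mixed space. -/
noncomputable def realTraceForm (ω : K) : QuadraticForm ℝ (mixedSpace K) :=
  (twistedTraceForm ℝ (mixedEmbedding K ω)).toQuadraticMap

theorem twistedTraceForm_mixedEmbedding (ω x y : K) :
    twistedTraceForm ℝ (mixedEmbedding K ω) (mixedEmbedding K x) (mixedEmbedding K y) =
      (twistedTraceForm ℚ ω x y : ℝ) := by
  rw [twistedTraceForm_apply, twistedTraceForm_apply, ← map_mul, ← map_mul, trace_mixedEmbedding]

theorem sigPos_realTraceForm {ω : K} {e : Module.Basis (Fin (Module.finrank ℚ K)) ℚ K}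
    (he : (twistedTraceForm ℚ ω).IsOrthoᵢ e) (he0 : ∀ i, twistedTraceForm ℚ ω (e i) (e i) ≠ 0) :
    sigPos (realTraceForm ω) = Finset.card {i | 0 < twistedTraceForm ℚ ω (e i) (e i)} := by
  have hortho : (twistedTraceForm ℝ (mixedEmbedding K ω)).IsOrthoᵢ (mixedEmbedding K ∘ e) :=
    LinearMap.isOrthoᵢ_def.mpr fun i j hij => by
      rw [Function.comp_apply, Function.comp_apply, twistedTraceForm_mixedEmbedding,
        LinearMap.isOrthoᵢ_def.mp he i j hij, Rat.cast_zero]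
  have hindep : LinearIndependent ℝ (mixedEmbedding K ∘ e) := by
    refine LinearMap.linearIndependent_of_isOrthoᵢ hortho fun i => ?_
    rw [Function.comp_apply, twistedTraceForm_mixedEmbedding]
    exact_mod_cast he0 i
  have : Nonempty (Fin (Module.finrank ℚ K)) := ⟨⟨0, Module.finrank_pos⟩⟩
  let b := basisOfLinearIndependentOfCardEqFinrank hindep
    (by rw [Fintype.card_fin, NumberField.mixedEmbedding.finrank])
  have hb : ⇑b = mixedEmbedding K ∘ e := coe_basisOfLinearIndependentOfCardEqFinrank _ _
  have hrepr : (realTraceForm ω).basisRepr b = QuadraticMap.weightedSumSquares ℝ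
      fun i => (twistedTraceForm ℚ ω (e i) (e i) : ℝ) := by
    rw [QuadraticMap.basisRepr_eq_of_iIsOrtho]
    · simp_rw [hb, ← twistedTraceForm_mixedEmbedding]
      rfl
    · rw [realTraceForm, QuadraticMap.associated_left_inverse ℝ (isSymm_twistedTraceForm _).eq, hb]
      exact hortho
  have hequiv : (realTraceForm ω).Equivalent (QuadraticMap.weightedSumSquares ℝ
      fun i => (twistedTraceForm ℚ ω (e i) (e i) : ℝ)) :=
    hrepr ▸ ⟨(realTraceForm ω).isometryEquivBasisRepr b⟩
  rw [QuadraticForm.sigPos_of_equiv_weightedSumSquares hequiv]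
  simp [Set.ncard_eq_toFinset_card']

theorem exists_mul_self_eq_mixedEmbedding {F : Type*} [Field F] {α : F}
    (hα : ∀ φ : F →+* ℝ, 0 < φ α) : ∃ t : mixedSpace F, t * t = mixedEmbedding F α := by
  choose z hz using fun w : {w : InfinitePlace F // w.IsComplex} =>
    IsAlgClosed.exists_eq_mul_self (w.1.embedding α)
  refine ⟨⟨fun w => √(InfinitePlace.embedding_of_isReal w.2 α), z⟩, ?_⟩
  ext w
  · exact Real.mul_self_sqrt (hα _).le
  · exact (hz w).symm

theorem sigPos_realTraceForm_mul {F : Type*} [Field F] {α : F} (hα0 : α ≠ 0)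
    (hα : ∀ φ : F →+* ℝ, 0 < φ α) (ω : F) :
    sigPos (realTraceForm (α * ω)) = sigPos (realTraceForm ω) := by
  obtain ⟨t, ht⟩ := exists_mul_self_eq_mixedEmbedding hα
  obtain ⟨u, rfl⟩ : IsUnit t := isUnit_of_mul_isUnit_left (ht ▸ hα0.isUnit.map (mixedEmbedding F))
  refine QuadraticMap.Equivalent.sigPos_eq
    ⟨⟨LinearEquiv.ofLinearMap (LinearMap.mulLeft ℝ (u : mixedSpace F))
      (LinearMap.mulLeft ℝ (↑u⁻¹ : mixedSpace F)) (LinearMap.ext u.mul_inv_cancel_left)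
      (LinearMap.ext u.inv_mul_cancel_left), fun x => ?_⟩⟩
  change Algebra.trace ℝ (mixedSpace F) (mixedEmbedding F ω * (u * x) * (u * x)) =
    Algebra.trace ℝ (mixedSpace F) (mixedEmbedding F (α * ω) * x * x)
  rw [map_mul (mixedEmbedding F), ← ht]
  congr 1
  ring

/-- The phase `exp (iπ (p - q) / 4)` of the Gauss sums of the trace form `x ↦ Tr (ω x²)`, whose
signature is `(p, q)`. -/
noncomputable def tracePhase (ω : K) : ℂ :=
  Complex.exp (Complex.I * Real.pi / 4) ^ sigPos (realTraceForm ω) *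
    Complex.exp (-(Complex.I * Real.pi / 4)) ^ (Module.finrank ℚ K - sigPos (realTraceForm ω))

theorem tracePhase_ne_zero (ω : K) : tracePhase ω ≠ 0 :=
  mul_ne_zero (pow_ne_zero _ (Complex.exp_ne_zero _)) (pow_ne_zero _ (Complex.exp_ne_zero _))

theorem tracePhase_mul {α : K} (hα0 : α ≠ 0) (hα : ∀ φ : K →+* ℝ, 0 < φ α) (ω : K) :
    tracePhase (α * ω) = tracePhase ω := by
  rw [tracePhase, tracePhase, sigPos_realTraceForm_mul hα0 hα]

theorem prod_signPhase_eq_tracePhase {ω : K} {e : Module.Basis (Fin (Module.finrank ℚ K)) ℚ K}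
    (he : (twistedTraceForm ℚ ω).IsOrthoᵢ e) (he0 : ∀ i, twistedTraceForm ℚ ω (e i) (e i) ≠ 0) :
    ∏ i, signPhase (twistedTraceForm ℚ ω (e i) (e i)) = tracePhase ω := by
  have hcard := Finset.card_filter_add_card_filter_not (s := Finset.univ)
    fun i => 0 < twistedTraceForm ℚ ω (e i) (e i)
  rw [Finset.card_univ, Fintype.card_fin] at hcard
  simp only [signPhase]
  rw [Finset.prod_ite, Finset.prod_const, Finset.prod_const, tracePhase,
    sigPos_realTraceForm he he0, Nat.sub_eq_of_eq_add' hcard.symm]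

theorem quotientSum_ratChar_twistedTraceForm {ω : K} (hω : ω ≠ 0) {L : AddSubgroup K}
    (hL : ∀ x ∈ L, ∃ n : ℤ, twistedTraceForm ℚ ω x x = n)
    (hfull : ∀ x : K, ∃ N : ℕ, N ≠ 0 ∧ N • x ∈ L) :
    L.relIndex (evenDual (twistedTraceForm ℚ ω) L) ≠ 0 ∧ ∃ c : ℝ, 0 < c ∧
      quotientSum L (evenDual (twistedTraceForm ℚ ω) L)
        (fun x => ratChar (twistedTraceForm ℚ ω x x)) = c * tracePhase ω := by
  obtain ⟨e, he, he0⟩ := exists_isOrthoᵢ_twistedTraceForm (F := ℚ) hω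
  rw [← prod_signPhase_eq_tracePhase he he0]
  exact quotientSum_ratChar_evenDual (isSymm_twistedTraceForm ω) he he0 hL hfull

end TraceForm

/-! ### Gauss sums of trace forms -/

section FractionalIdealLattices

variable {K} {ω x y : K} {b B J M N a : FractionalIdeal (𝓞 K)⁰ K}

theorem spanSingleton_ne_zero (hx : x ≠ 0) : ⟪x⟫ ≠ 0 := spanSingleton_ne_zero_iff.mpr hx

theorem spanSingleton_coe_le_one (x : 𝓞 K) : ⟪(x : K)⟫ ≤ 1 :=
  spanSingleton_le_iff_mem.mpr (coe_mem_one _ x)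

theorem spanSingleton_two_le_one : ⟪(2 : K)⟫ ≤ 1 := mod_cast spanSingleton_coe_le_one (2 : 𝓞 K)

theorem coe_mul_mem {F : Type*} [Field F] {b : FractionalIdeal (𝓞 F)⁰ F} {x : F} (r : 𝓞 F)
    (hx : x ∈ b) : (r : F) * x ∈ b := by
  have := (b : Submodule (𝓞 F) F).smul_mem r hx
  rwa [Algebra.smul_def] at this

theorem mul_mem_of_mem_div (hM : M ≠ 0) (hx : x ∈ b / M) (hy : y ∈ M) : x * y ∈ b :=
  (mem_div_iff_of_ne_zero hM).mp hx y hy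

theorem le_div_self_of_le_one (hM : M ≠ 0) (hM1 : M ≤ 1) : b ≤ b / M :=
  (le_div_iff_mul_le hM).mpr (mul_le_of_le_one_right' hM1)

/-- A fractional ideal as an additive subgroup of `K`. -/
def lattice {F : Type*} [Field F] (b : FractionalIdeal (𝓞 F)⁰ F) : AddSubgroup F :=
  (b : Submodule (𝓞 F) F).toAddSubgroup

theorem mem_lattice {F : Type*} [Field F] {b : FractionalIdeal (𝓞 F)⁰ F} {x : F} :
    x ∈ lattice b ↔ x ∈ b := Iff.rfl

theorem lattice_mono {F : Type*} [Field F] {b B : FractionalIdeal (𝓞 F)⁰ F} (h : b ≤ B) :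
    lattice b ≤ lattice B := fun _ hx => h hx

theorem lattice_add {F : Type*} [Field F] (b B : FractionalIdeal (𝓞 F)⁰ F) :
    lattice (b + B) = lattice b ⊔ lattice B := by
  ext x
  simp only [mem_lattice, FractionalIdeal.mem_add, AddSubgroup.mem_sup]

theorem exists_nsmul_mem_lattice (hb : b ≠ 0) (x : K) : ∃ N : ℕ, N ≠ 0 ∧ N • x ∈ lattice b := by
  obtain ⟨y, hy, hyb⟩ := exists_ne_zero_mem_isInteger hb
  have hyK : (algebraMap (𝓞 K) K) y ≠ 0 := RingOfIntegers.coe_ne_zero_iff.mpr hy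
  have halg : IsAlgebraic ℤ (x / algebraMap (𝓞 K) K y) :=
    (IsFractionRing.isAlgebraic_iff ℤ ℚ K).mpr (Algebra.IsAlgebraic.isAlgebraic _)
  obtain ⟨n, hn, hint⟩ := halg.exists_integral_multiple
  have hmem : n • x ∈ lattice b := by
    have : n • (x / algebraMap (𝓞 K) K y) * algebraMap (𝓞 K) K y ∈ b :=
      coe_mul_mem ⟨_, hint⟩ hyb
    rwa [smul_mul_assoc, div_mul_cancel₀ _ hyK] at this
  refine ⟨n.natAbs, Int.natAbs_ne_zero.mpr hn, ?_⟩
  rw [← natCast_zsmul, ← Int.sign_mul_self, mul_zsmul]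
  exact zsmul_mem hmem _

variable (K) in
/-- The inverse different, the dual of `𝓞 K` under the trace form. -/
noncomputable def codifferent : FractionalIdeal (𝓞 K)⁰ K := FractionalIdeal.dual ℤ ℚ 1

theorem codifferent_ne_zero : codifferent K ≠ 0 := dual_ne_zero ℤ ℚ one_ne_zero

theorem mem_codifferent :
    x ∈ codifferent K ↔ ∀ r : 𝓞 K, ∃ n : ℤ, Algebra.trace ℚ K (x * r) = n := by
  rw [codifferent, mem_dual (one_ne_zero (α := FractionalIdeal (𝓞 K)⁰ K))]
  simp [FractionalIdeal.mem_one_iff, Algebra.traceForm_apply, eq_comm]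

theorem exists_trace_eq_intCast (hx : x ∈ codifferent K) : ∃ n : ℤ, Algebra.trace ℚ K x = n := by
  simpa using mem_codifferent.mp hx 1

theorem exists_twistedTraceForm_eq_intCast (h : ⟪ω⟫ * (b * B) ≤ codifferent K) (hx : x ∈ b)
    (hy : y ∈ B) : ∃ n : ℤ, twistedTraceForm ℚ ω x y = n := by
  rw [twistedTraceForm_apply, mul_assoc]
  exact exists_trace_eq_intCast
    (h (mul_mem_mul (mem_spanSingleton_self _ _) (mul_mem_mul hx hy)))

theorem two_mul_twistedTraceForm (ω x y : K) :
    2 * twistedTraceForm ℚ ω x y = Algebra.trace ℚ K (2 * ω * x * y) := by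
  rw [twistedTraceForm_apply, ← smul_eq_mul, ← map_smul, Algebra.smul_def, map_ofNat]
  ring_nf

theorem evenDual_lattice (hω : ω ≠ 0) (hb : b ≠ 0) :
    evenDual (twistedTraceForm ℚ ω) (lattice b) =
      lattice (codifferent K / (⟪2 * ω⟫ * b)) := by
  have h0 : ⟪2 * ω⟫ * b ≠ 0 :=
    mul_ne_zero (spanSingleton_ne_zero (mul_ne_zero two_ne_zero hω)) hb
  ext x
  rw [mem_lattice, mem_div_iff_of_ne_zero h0]
  refine ⟨fun hx y hy => ?_, fun hx y hy => ?_⟩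
  · obtain ⟨z, hz, rfl⟩ := mem_singleton_mul.mp hy
    refine mem_codifferent.mpr fun r => ?_
    obtain ⟨n, hn⟩ := hx (r * z) (coe_mul_mem r hz)
    exact ⟨n, by rw [← hn, two_mul_twistedTraceForm]; ring_nf⟩
  · obtain ⟨n, hn⟩ := exists_trace_eq_intCast
      (hx (2 * ω * y) (mul_mem_mul (mem_spanSingleton_self _ _) hy))
    exact ⟨n, by rw [← hn, two_mul_twistedTraceForm]; ring_nf⟩

/-- The Gauss sum of the quadratic form `x ↦ Tr (ω x²)` on `(b / M) / b`. It is meaningful when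
this form is integral on `b` and `Tr (2ωxy)` is integral for `x ∈ b` and `y ∈ b / M`. -/
noncomputable def traceGaussSum (ω : K) (b M : FractionalIdeal (𝓞 K)⁰ K) : ℂ :=
  quotientSum (lattice b) (lattice (b / M)) fun x => ratChar (twistedTraceForm ℚ ω x x)

theorem traceGaussSum_eq_mul_tracePhase (hω : ω ≠ 0) (hb : b ≠ 0) (hJ : J ≠ 0) (hJ1 : J ≤ 1)
    (h : ⟪ω⟫ * b ^ 2 = J * codifferent K) :
    (lattice b).relIndex (lattice (b / (⟪2⟫ * J))) ≠ 0 ∧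
      ∃ c : ℝ, 0 < c ∧ traceGaussSum ω b (⟪2⟫ * J) = c * tracePhase ω := by
  have h2 : ⟪(2 : K)⟫ ≠ 0 := spanSingleton_ne_zero two_ne_zero
  have hω0 := spanSingleton_ne_zero hω
  have hdual : b / (⟪2⟫ * J) = codifferent K / (⟪2 * ω⟫ * b) := by
    rw [← spanSingleton_mul_spanSingleton, div_eq_div_iff (mul_ne_zero h2 hJ)
      (mul_ne_zero (mul_ne_zero h2 hω0) hb)]
    calc b * (⟪2⟫ * ⟪ω⟫ * b) = ⟪2⟫ * (⟪ω⟫ * b ^ 2) := by ring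
      _ = codifferent K * (⟪2⟫ * J) := by rw [h]; ring
  rw [traceGaussSum, hdual, ← evenDual_lattice hω hb]
  refine quotientSum_ratChar_twistedTraceForm hω (fun x hx => ?_) (exists_nsmul_mem_lattice hb)
  refine exists_twistedTraceForm_eq_intCast (b := b) (B := b) ?_ hx hx
  rw [← pow_two, h]
  exact mul_le_of_le_one_left' hJ1

theorem relIndex_lattice_div_ne_zero (hb : b ≠ 0) (hM : M ≠ 0) (hM1 : M ≤ 1) :
    (lattice b).relIndex (lattice (b / M)) ≠ 0 := by
  have hC := codifferent_ne_zero (K := K)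
  obtain ⟨r, hr, hω⟩ := exists_ne_zero_mem_isInteger
    (mul_ne_zero (div_ne_zero hC (pow_ne_zero 2 hb)) hM)
  set ω := algebraMap (𝓞 K) K r
  have hω0 : ω ≠ 0 := RingOfIntegers.coe_ne_zero_iff.mpr hr
  have hs := spanSingleton_ne_zero hω0
  have hJM : ⟪ω⟫ * b ^ 2 / codifferent K ≤ M := by
    rw [div_le_iff₀ (zero_lt_iff.mpr hC), ← le_div_iff₀ (by positivity)]
    refine (spanSingleton_le_iff_mem.mpr hω).trans_eq ?_
    field_simp
  refine mt (AddSubgroup.relIndex_eq_zero_of_le_right (lattice_mono ?_))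
    (traceGaussSum_eq_mul_tracePhase hω0 hb (J := ⟪ω⟫ * b ^ 2 / codifferent K) (by positivity)
      (hJM.trans hM1) (div_mul_cancel₀ _ hC).symm).1
  have h2 := spanSingleton_ne_zero (two_ne_zero (α := K))
  gcongr
  exact (mul_le_of_le_one_left' spanSingleton_two_le_one).trans hJM

section Coprime

variable (hM : M ≠ 0) (hN : N ≠ 0) (hM1 : M ≤ 1) (hN1 : N ≤ 1) (hMN : M + N = 1)

include hM hN hMN

theorem lattice_div_mul :
    lattice (b / (M * N)) = lattice (b / M) ⊔ lattice (b / N) := by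
  rw [← lattice_add]
  congr 1
  calc b / (M * N) = b / (M * N) * (M + N) := by rw [hMN, mul_one]
    _ = b / M + b / N := by field_simp; ring

include hM1 hN1

theorem lattice_eq_inf : lattice b = lattice (b / M) ⊓ lattice (b / N) := by
  refine le_antisymm (le_inf (lattice_mono (le_div_self_of_le_one hM hM1))
    (lattice_mono (le_div_self_of_le_one hN hN1))) fun x hx => ?_
  obtain ⟨m, hm, n, hn, h⟩ := (FractionalIdeal.mem_add M N 1).mp (hMN ▸ one_mem_one _)
  rw [← mul_one x, ← h, mul_add]
  exact add_mem (mul_mem_of_mem_div hM hx.1 hm) (mul_mem_of_mem_div hN hx.2 hn)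

end Coprime

end FractionalIdealLattices

section GaussSumFiniteField

variable {k R : Type*} [Field k] [Fintype k] [DecidableEq k] [CommRing R]

theorem sum_sq_eq_sum_quadraticChar_add_one (hk : ringChar k ≠ 2) (g : k → R) :
    ∑ r, g (r ^ 2) = ∑ t, ((quadraticChar k t : R) + 1) * g t := by
  rw [← Finset.sum_fiberwise (s := Finset.univ) (g := fun r : k => r ^ 2)]
  refine Finset.sum_congr rfl fun t _ => ?_
  have hcard := quadraticChar_card_sqrts hk t
  rw [Set.toFinset_ofPred] at hcard
  rw [Finset.sum_congr rfl (g := fun _ => g t) fun r hr => by rw [(Finset.mem_filter.mp hr).2],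
    Finset.sum_const, nsmul_eq_mul, ← Int.cast_natCast, hcard, Int.cast_add, Int.cast_one]

variable [IsDomain R]

theorem sum_addChar_sq_eq_gaussSum (hk : ringChar k ≠ 2) {ψ : AddChar k R} (hψ : ψ ≠ 1) :
    ∑ r, ψ (r ^ 2) = gaussSum ((quadraticChar k).ringHomComp (Int.castRingHom R)) ψ := by
  rw [sum_sq_eq_sum_quadraticChar_add_one hk fun t => ψ t]
  simp only [add_mul, one_mul, Finset.sum_add_distrib, AddChar.sum_eq_zero_of_ne_one hψ, add_zero,
    gaussSum, MulChar.ringHomComp_apply, eq_intCast]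

theorem sum_addChar_mul_sq (hk : ringChar k ≠ 2) {ψ : AddChar k R} (hψ : ψ ≠ 1) {a : k}
    (ha : a ≠ 0) : ∑ r, ψ (a * r ^ 2) = quadraticChar k a * ∑ r, ψ (r ^ 2) := by
  have hshift : ψ.mulShift a ≠ 1 := AddChar.IsPrimitive.of_ne_one hψ ha
  have hsq : (quadraticChar k a : R) * quadraticChar k a = 1 := by
    rw [← Int.cast_mul, ← pow_two, quadraticChar_sq_one ha, Int.cast_one]
  have hgauss := gaussSum_mulShift ((quadraticChar k).ringHomComp (Int.castRingHom R)) ψ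
    (Units.mk0 a ha)
  rw [Units.val_mk0, MulChar.ringHomComp_apply, eq_intCast] at hgauss
  simp_rw [← AddChar.mulShift_apply]
  rw [sum_addChar_sq_eq_gaussSum hk hψ, sum_addChar_sq_eq_gaussSum hk hshift, ← hgauss,
    ← mul_assoc, hsq, one_mul]

end GaussSumFiniteField

theorem exists_addChar_quotient {R M : Type*} [CommRing R] [CommMonoid M] {I : Ideal R}
    {ψ : AddChar R M} (hψ : ∀ r ∈ I, ψ r = 1) :
    ∃ Ψ : AddChar (R ⧸ I) M, ∀ r, Ψ (Ideal.Quotient.mk I r) = ψ r :=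
  ⟨AddChar.toAddMonoidHomEquiv.symm
    (QuotientAddGroup.lift I.toAddSubgroup ψ.toAddMonoidHom hψ), fun _ => rfl⟩

section TraceGaussSum

variable {K} {ω x y : K} {b B J M N a : FractionalIdeal (𝓞 K)⁰ K} {v : HeightOneSpectrum (𝓞 K)}

theorem ratChar_twistedTraceForm_add (h : ⟪2 * ω⟫ * (b * B) ≤ codifferent K) (hx : x ∈ b)
    (hy : y ∈ B) : ratChar (twistedTraceForm ℚ ω (x + y) (x + y)) =
      ratChar (twistedTraceForm ℚ ω x x) * ratChar (twistedTraceForm ℚ ω y y) := by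
  obtain ⟨n, hn⟩ := exists_twistedTraceForm_eq_intCast h hx hy
  rw [ratChar_add_self (isSymm_twistedTraceForm ω), two_mul_twistedTraceForm,
    ← twistedTraceForm_apply, hn, ratChar_intCast, mul_one]

theorem isPeriodicOn_ratChar_twistedTraceForm (h₁ : ⟪ω⟫ * b ^ 2 ≤ codifferent K)
    (h₂ : ⟪2 * ω⟫ * (B * b) ≤ codifferent K) :
    IsPeriodicOn (lattice b) (lattice B) fun x => ratChar (twistedTraceForm ℚ ω x x) := by
  intro x hx y hy
  obtain ⟨n, hn⟩ := exists_twistedTraceForm_eq_intCast (b := b) (by rwa [← pow_two]) hy hy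
  simp only [ratChar_twistedTraceForm_add h₂ hx hy, hn, ratChar_intCast, mul_one]

theorem traceGaussSum_mul_eq (hb : b ≠ 0) (hM : M ≠ 0) (hN : N ≠ 0) (hM1 : M ≤ 1) (hN1 : N ≤ 1)
    (hMN : M + N = 1) (h₁ : ⟪ω⟫ * b ^ 2 ≤ codifferent K)
    (h₂ : ⟪2 * ω⟫ * b ^ 2 ≤ M * N * codifferent K) :
    traceGaussSum ω b (M * N) = traceGaussSum ω b M * traceGaussSum ω b N := by
  have hinf := lattice_eq_inf (b := b) hM hN hM1 hN1 hMN
  have hdiv : ⟪2 * ω⟫ * b ^ 2 / (M * N) ≤ codifferent K :=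
    (div_le_iff₀' (zero_lt_iff.mpr (mul_ne_zero hM hN))).mpr h₂
  have hper := isPeriodicOn_ratChar_twistedTraceForm (B := b / (M * N)) h₁
    (by convert hdiv using 1; field_simp)
  have hmul : ∀ x ∈ lattice (b / M), ∀ y ∈ lattice (b / N), ratChar (twistedTraceForm ℚ ω (x + y)
      (x + y)) = ratChar (twistedTraceForm ℚ ω x x) * ratChar (twistedTraceForm ℚ ω y y) :=
    fun x hx y hy => ratChar_twistedTraceForm_add (by convert hdiv using 1; field_simp) hx hy
  have hfinM := relIndex_lattice_div_ne_zero hb hM hM1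
  have hfinN := relIndex_lattice_div_ne_zero hb hN hN1
  rw [lattice_div_mul hM hN hMN, hinf] at hper
  rw [hinf] at hfinM hfinN
  rw [traceGaussSum, traceGaussSum, traceGaussSum, lattice_div_mul hM hN hMN, hinf]
  exact quotientSum_sup_eq_mul hper hmul hfinM hfinN

theorem traceGaussSum_div_eq (hb : b ≠ 0) (hM : M ≠ 0) (ha : a ≠ 0) (hM1 : M ≤ 1) (ha1 : a ≤ 1)
    (hMa : M + a = 1) (h₁ : ⟪ω⟫ * b ^ 2 ≤ a ^ 2 * codifferent K)
    (h₂ : ⟪2 * ω⟫ * b ^ 2 ≤ a ^ 2 * M * codifferent K) :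
    traceGaussSum ω (b / a) M = traceGaussSum ω b M := by
  have hinf := lattice_eq_inf (b := b) hM ha hM1 ha1 hMa
  have hdiv₁ := (div_le_iff₀' (by positivity)).mpr h₁
  have hdiv₂ := (div_le_iff₀' (by positivity)).mpr h₂
  have hper := isPeriodicOn_ratChar_twistedTraceForm (ω := ω) (b := b / a) (B := b / (M * a))
    (by convert hdiv₁ using 1; field_simp) (by convert hdiv₂ using 1; field_simp)
  have hfin := relIndex_lattice_div_ne_zero hb hM hM1
  rw [hinf] at hfin
  rw [lattice_div_mul hM ha hMa] at hper
  rw [traceGaussSum, traceGaussSum, div_div, mul_comm a, lattice_div_mul hM ha hMa, hinf]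
  exact (quotientSum_sup_right hper hfin).symm

theorem coeIdeal_asIdeal_ne_zero (v : HeightOneSpectrum (𝓞 K)) :
    (v.asIdeal : FractionalIdeal (𝓞 K)⁰ K) ≠ 0 := coeIdeal_ne_zero.mpr v.ne_bot

theorem coe_mem_coeIdeal {F : Type*} [Field F] {I : Ideal (𝓞 F)} {r : 𝓞 F} :
    (r : F) ∈ (I : FractionalIdeal (𝓞 F)⁰ F) ↔ r ∈ I := by
  refine ⟨fun h => ?_, mem_coeIdeal_of_mem _⟩
  obtain ⟨s, hs, hrs⟩ := (mem_coeIdeal _).mp h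
  rwa [← RingOfIntegers.coe_injective hrs]

theorem eq_or_eq_div_of_le_of_le (hb : b ≠ 0) (h₁ : b ≤ B) (h₂ : B ≤ b / v.asIdeal) :
    B = b ∨ B = b / v.asIdeal := by
  have hv := coeIdeal_asIdeal_ne_zero v
  have hle : B * v.asIdeal / b ≤ 1 :=
    (div_le_iff₀' (zero_lt_iff.mpr hb)).mpr (by rwa [mul_one, ← le_div_iff_mul_le hv])
  obtain ⟨I, hI⟩ := le_one_iff_exists_coeIdeal.mp hle
  have hB : B = b / v.asIdeal * I := by rw [hI]; field_simp
  have hvI : v.asIdeal ≤ I := by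
    rw [← coeIdeal_le_coeIdeal K, hI, le_div_iff₀ (zero_lt_iff.mpr hb), mul_comm]
    gcongr
  rcases v.isMaximal.out.le_iff.mp hvI with rfl | rfl
  · exact Or.inr (by rw [hB, coeIdeal_top, mul_one])
  · exact Or.inl (by rw [hB, div_mul_cancel₀ _ hv])

theorem exists_mem_div_notMem (hb : b ≠ 0) (v : HeightOneSpectrum (𝓞 K)) :
    ∃ x ∈ b / (v.asIdeal : FractionalIdeal (𝓞 K)⁰ K), x ∉ b := by
  refine SetLike.not_le_iff_exists.mp fun hle => v.isPrime.ne_top (top_le_iff.mp ?_)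
  rw [← coeIdeal_le_coeIdeal K, coeIdeal_top]
  refine le_of_mul_le_mul_left ?_ (zero_lt_iff.mpr hb)
  rwa [mul_one, ← div_le_iff₀ (zero_lt_iff.mpr (coeIdeal_asIdeal_ne_zero v))]

section UniformizingElement

variable (hx : x ∈ b / v.asIdeal) (hxb : x ∉ b)

include hx hxb

theorem spanSingleton_add_eq_div (hb : b ≠ 0) : ⟪x⟫ + b = b / v.asIdeal := by
  refine (eq_or_eq_div_of_le_of_le hb le_add_self ?_).resolve_left fun h => hxb ?_
  · rw [← sup_eq_add]
    exact sup_le (spanSingleton_le_iff_mem.mpr hx)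
      (le_div_self_of_le_one (coeIdeal_asIdeal_ne_zero v) coeIdeal_le_one)
  · rw [← h, ← spanSingleton_le_iff_mem]
    exact le_self_add

theorem mem_asIdeal_of_coe_mul_mem {r : 𝓞 K} (hr : r * x ∈ b) : r ∈ v.asIdeal := by
  by_contra hrv
  obtain ⟨s, i, hi, hsi⟩ := v.isMaximal.exists_inv hrv
  refine hxb ?_
  have hsi' : (s : K) * r + i = 1 := by exact_mod_cast congrArg (algebraMap (𝓞 K) K) hsi
  rw [show x = s * (r * x) + x * i by linear_combination (-x) * hsi']
  exact (lattice b).add_mem (coe_mul_mem s hr)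
    (mul_mem_of_mem_div (coeIdeal_asIdeal_ne_zero v) hx (coe_mem_coeIdeal.mpr hi))

theorem isRepSystem_quotient_asIdeal (hb : b ≠ 0) :
    IsRepSystem (lattice b) (lattice (b / v.asIdeal))
      fun r : 𝓞 K ⧸ v.asIdeal => ((Quotient.out r : 𝓞 K) : K) * x where
  mem r := coe_mul_mem _ hx
  exists_sub_mem y hy := by
    rw [mem_lattice, ← spanSingleton_add_eq_div hx hxb hb, FractionalIdeal.mem_add] at hy
    obtain ⟨_, hz, w, hw, rfl⟩ := hy
    obtain ⟨r, rfl⟩ := (mem_spanSingleton _).mp hz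
    set r' : 𝓞 K := Quotient.out (Ideal.Quotient.mk v.asIdeal r)
    refine ⟨Ideal.Quotient.mk _ r, ?_⟩
    rw [Algebra.smul_def, show algebraMap (𝓞 K) K r * x + w - r' * x = w + x * ((r - r' : 𝓞 K) : K)
      by push_cast; ring]
    exact add_mem hw (mul_mem_of_mem_div (coeIdeal_asIdeal_ne_zero v) hx
      (coe_mem_coeIdeal.mpr (Ideal.Quotient.eq.mp (Ideal.Quotient.mk_out _).symm)))
  eq_of_sub_mem r s hrs := by
    rw [← sub_mul, ← map_sub] at hrs
    simpa only [Ideal.Quotient.mk_out] using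
      Ideal.Quotient.eq.mpr (mem_asIdeal_of_coe_mul_mem hx hxb hrs)

end UniformizingElement

end TraceGaussSum

/-! ### Quadratic residue symbols -/

section ResidueSymbol

variable {K} {ω x y c : K} {b : FractionalIdeal (𝓞 K)⁰ K} {v : HeightOneSpectrum (𝓞 K)}
  {α : 𝓞 K}

noncomputable local instance (v : HeightOneSpectrum (𝓞 K)) : Field (𝓞 K ⧸ v.asIdeal) :=
  Ideal.Quotient.field _

noncomputable local instance (v : HeightOneSpectrum (𝓞 K)) : Fintype (𝓞 K ⧸ v.asIdeal) :=
  have := Ideal.finiteQuotientOfFreeOfNeBot _ v.ne_bot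
  Fintype.ofFinite _

open scoped Classical in
/-- The quadratic residue symbol modulo the prime `v`. -/
noncomputable def residueSymbol (v : HeightOneSpectrum (𝓞 K)) : 𝓞 K →* ℤ :=
  (quadraticChar (𝓞 K ⧸ v.asIdeal)).toMonoidHom.comp (Ideal.Quotient.mk v.asIdeal)

open scoped Classical in
theorem residueSymbol_apply (v : HeightOneSpectrum (𝓞 K)) (α : 𝓞 K) :
    residueSymbol v α = quadraticChar (𝓞 K ⧸ v.asIdeal) (Ideal.Quotient.mk v.asIdeal α) := rfl

theorem mk_ne_zero_of_notMem {R : Type*} [CommRing R] {I : Ideal R} {r : R} (hr : r ∉ I) :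
    Ideal.Quotient.mk I r ≠ 0 :=
  mt Ideal.Quotient.eq_zero_iff_mem.mp hr

theorem residueSymbol_sq (hα : α ∉ v.asIdeal) : residueSymbol v α ^ 2 = 1 :=
  open scoped Classical in quadraticChar_sq_one (mk_ne_zero_of_notMem hα)

theorem residueSymbol_eq_neg_one_iff (α : 𝓞 K) :
    residueSymbol v α = -1 ↔ ¬IsSquare (Ideal.Quotient.mk v.asIdeal α) :=
  open scoped Classical in quadraticChar_neg_one_iff_not_isSquare

theorem ringChar_quotient_ne_two {R : Type*} [CommRing R] {I : Ideal R} (h2 : (2 : R) ∉ I) :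
    ringChar (R ⧸ I) ≠ 2 := fun hc =>
  mk_ne_zero_of_notMem h2 (by rw [map_ofNat]; exact_mod_cast (ringChar.spec _ 2).mpr hc.dvd)

/-- The character `r ↦ e(Tr(cr))` of the additive group `𝓞 K`. -/
noncomputable def traceChar (c : K) : AddChar (𝓞 K) ℂ :=
  ratChar.compAddMonoidHom
    (((Algebra.trace ℚ K).toAddMonoidHom.comp (AddMonoidHom.mulLeft c)).comp
      (algebraMap (𝓞 K) K).toAddMonoidHom)

theorem traceChar_apply (c : K) (r : 𝓞 K) :
    traceChar c r = ratChar (Algebra.trace ℚ K (c * r)) := rfl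

theorem traceChar_eq_one_iff : traceChar c = 1 ↔ c ∈ codifferent K := by
  simp only [AddChar.ext_iff, traceChar_apply, AddChar.one_apply, ratChar_eq_one_iff,
    mem_codifferent]

theorem spanSingleton_mul_div_le_codifferent (hle : ⟪ω⟫ * b ^ 2 ≤ v.asIdeal * codifferent K) :
    ⟪ω⟫ * (b / v.asIdeal * b) ≤ codifferent K := by
  have hv := coeIdeal_asIdeal_ne_zero v
  calc ⟪ω⟫ * (b / v.asIdeal * b) = ⟪ω⟫ * b ^ 2 / v.asIdeal := by field_simp
    _ ≤ codifferent K := (div_le_iff₀' (zero_lt_iff.mpr hv)).mpr hle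

theorem traceChar_mul_sq_eq_one (hle : ⟪ω⟫ * b ^ 2 ≤ v.asIdeal * codifferent K)
    (hx : x ∈ b / v.asIdeal) {r : 𝓞 K} (hr : r ∈ v.asIdeal) : traceChar (ω * x ^ 2) r = 1 := by
  obtain ⟨n, hn⟩ := exists_twistedTraceForm_eq_intCast (spanSingleton_mul_div_le_codifferent hle)
    hx (mul_mem_of_mem_div (coeIdeal_asIdeal_ne_zero v) hx (coe_mem_coeIdeal.mpr hr))
  rw [traceChar_apply, ← ratChar_intCast n, ← hn, twistedTraceForm_apply]
  ring_nf

theorem mul_sq_notMem_codifferent (hb : b ≠ 0) (hle : ⟪ω⟫ * b ^ 2 ≤ v.asIdeal * codifferent K)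
    (hx : x ∈ b / v.asIdeal) (hxb : x ∉ b)
    (hnle : ¬⟪ω⟫ * b ^ 2 ≤ v.asIdeal ^ 2 * codifferent K) :
    ω * x ^ 2 ∉ codifferent K := fun hmem => hnle <| by
  have hv := coeIdeal_asIdeal_ne_zero v
  have hdiv := spanSingleton_mul_div_le_codifferent hle
  have hsq : ⟪ω⟫ * (b / v.asIdeal) ^ 2 =
      ⟪ω * x ^ 2⟫ + (⟪ω⟫ * (⟪x⟫ * b) + ⟪ω⟫ * (b / v.asIdeal * b)) := by
    rw [← spanSingleton_mul_spanSingleton, ← spanSingleton_pow,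
      ← spanSingleton_add_eq_div hx hxb hb]
    ring
  have hle' : ⟪ω⟫ * (b / v.asIdeal) ^ 2 ≤ codifferent K := by
    rw [hsq, ← sup_eq_add, ← sup_eq_add]
    refine sup_le (spanSingleton_le_iff_mem.mpr hmem) (sup_le (le_trans ?_ hdiv) hdiv)
    gcongr
    exact spanSingleton_le_iff_mem.mpr hx
  rwa [div_pow, ← mul_div_assoc, div_le_iff₀' (by positivity)] at hle'

theorem traceGaussSum_asIdeal_eq_sum (hb : b ≠ 0)
    (hle : ⟪ω⟫ * b ^ 2 ≤ v.asIdeal * codifferent K) (hx : x ∈ b / v.asIdeal) (hxb : x ∉ b)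
    {Ψ : AddChar (𝓞 K ⧸ v.asIdeal) ℂ}
    (hΨ : ∀ r, Ψ (Ideal.Quotient.mk _ r) = traceChar (ω * x ^ 2) r) (α : 𝓞 K) :
    traceGaussSum (α * ω) b v.asIdeal = ∑ r, Ψ (Ideal.Quotient.mk _ α * r ^ 2) := by
  have hα := spanSingleton_coe_le_one α
  have hdiv := spanSingleton_mul_div_le_codifferent hle
  have hper : IsPeriodicOn (lattice b) (lattice (b / v.asIdeal))
      fun x => ratChar (twistedTraceForm ℚ (α * ω) x x) := by
    refine isPeriodicOn_ratChar_twistedTraceForm ?_ ?_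
    · rw [← spanSingleton_mul_spanSingleton, mul_assoc]
      exact ((mul_le_of_le_one_left' hα).trans hle).trans (mul_le_of_le_one_left' coeIdeal_le_one)
    · rw [← spanSingleton_mul_spanSingleton, ← spanSingleton_mul_spanSingleton, mul_assoc,
        mul_assoc]
      exact (mul_le_of_le_one_left' spanSingleton_two_le_one).trans
        ((mul_le_of_le_one_left' hα).trans hdiv)
  rw [traceGaussSum, quotientSum_eq_sum hper (isRepSystem_quotient_asIdeal hx hxb hb)]
  refine Finset.sum_congr rfl fun r _ => ?_
  obtain ⟨r, rfl⟩ := Ideal.Quotient.mk_surjective r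
  set s : 𝓞 K := Quotient.out (Ideal.Quotient.mk v.asIdeal r)
  rw [show Ideal.Quotient.mk v.asIdeal r = Ideal.Quotient.mk _ s from
    (Ideal.Quotient.mk_out _).symm, ← map_pow, ← map_mul, hΨ, traceChar_apply,
    twistedTraceForm_apply]
  push_cast
  ring_nf

theorem traceGaussSum_mul_asIdeal (hb : b ≠ 0) (hle : ⟪ω⟫ * b ^ 2 ≤ v.asIdeal * codifferent K)
    (hnle : ¬⟪ω⟫ * b ^ 2 ≤ v.asIdeal ^ 2 * codifferent K) (h2 : (2 : 𝓞 K) ∉ v.asIdeal)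
    (hα : α ∉ v.asIdeal) :
    traceGaussSum (α * ω) b v.asIdeal = residueSymbol v α * traceGaussSum ω b v.asIdeal := by
  classical
  obtain ⟨x, hx, hxb⟩ := exists_mem_div_notMem hb v
  obtain ⟨Ψ, hΨ⟩ := exists_addChar_quotient fun r => traceChar_mul_sq_eq_one hle hx (r := r)
  have hΨ1 : Ψ ≠ 1 := fun h => mul_sq_notMem_codifferent hb hle hx hxb hnle <|
    traceChar_eq_one_iff.mp <| by ext r; rw [← hΨ, h]; rfl
  have hone := traceGaussSum_asIdeal_eq_sum hb hle hx hxb hΨ 1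
  simp only [map_one, one_mul] at hone
  rw [traceGaussSum_asIdeal_eq_sum hb hle hx hxb hΨ, hone, residueSymbol_apply,
    sum_addChar_mul_sq (ringChar_quotient_ne_two h2) hΨ1 (mk_ne_zero_of_notMem hα)]

end ResidueSymbol

/-! ### Quadratic reciprocity -/

section Reciprocity

variable {K} {ω β : K} {b c : FractionalIdeal (𝓞 K)⁰ K} {v : HeightOneSpectrum (𝓞 K)}
  {S T : Finset (HeightOneSpectrum (𝓞 K))} {α : 𝓞 K}

theorem coeIdeal_add_coeIdeal_eq_one_iff {I J : Ideal (𝓞 K)} :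
    (I : FractionalIdeal (𝓞 K)⁰ K) + (J : FractionalIdeal (𝓞 K)⁰ K) = 1 ↔ IsCoprime I J := by
  rw [Ideal.isCoprime_iff_sup_eq, ← coeIdeal_sup, ← coeIdeal_top, coeIdeal_inj]

theorem spanSingleton_two_eq_coeIdeal : ⟪(2 : K)⟫ = (Ideal.span {(2 : 𝓞 K)} : Ideal (𝓞 K)) := by
  rw [coeIdeal_span_singleton, map_ofNat]

theorem isCoprime_asIdeal_iff {R : Type*} [CommRing R] [IsDedekindDomain R] {I : Ideal R}
    {v : HeightOneSpectrum R} : IsCoprime I v.asIdeal ↔ ¬I ≤ v.asIdeal := by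
  rw [Ideal.isCoprime_iff_sup_eq, ← v.isMaximal.out.lt_iff, right_lt_sup]

theorem isCoprime_span_singleton_asIdeal_iff {R : Type*} [CommRing R] [IsDedekindDomain R] {r : R}
    {v : HeightOneSpectrum R} : IsCoprime (Ideal.span {r}) v.asIdeal ↔ r ∉ v.asIdeal := by
  rw [isCoprime_asIdeal_iff, Ideal.span_singleton_le_iff_mem]

/-- The squarefree ideal with the given prime factors. -/
noncomputable def primeProd {R : Type*} [CommRing R] [IsDedekindDomain R]
    (S : Finset (HeightOneSpectrum R)) : Ideal R := ∏ v ∈ S, v.asIdeal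

section PrimeProd

variable {R : Type*} [CommRing R] [IsDedekindDomain R] {I : Ideal R} {v : HeightOneSpectrum R}
  {S T : Finset (HeightOneSpectrum R)}

theorem primeProd_ne_bot (S : Finset (HeightOneSpectrum R)) : primeProd S ≠ ⊥ :=
  Finset.prod_ne_zero_iff.mpr fun v _ => v.ne_bot

theorem primeProd_cons (hv : v ∉ S) : primeProd (S.cons v hv) = v.asIdeal * primeProd S :=
  Finset.prod_cons hv

theorem isCoprime_primeProd (h : ∀ v ∈ S, IsCoprime I v.asIdeal) : IsCoprime I (primeProd S) :=
  IsCoprime.prod_right h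

theorem isCoprime_primeProd_asIdeal (hv : v ∉ S) : IsCoprime (primeProd S) v.asIdeal :=
  IsCoprime.prod_left fun _ hw => HeightOneSpectrum.isCoprime_of_ne _ _ (ne_of_mem_of_not_mem hw hv)

theorem primeProd_le (hv : v ∈ S) : primeProd S ≤ v.asIdeal :=
  Ideal.le_of_dvd (Finset.dvd_prod_of_mem _ hv)

theorem not_primeProd_le_sq (hv : v ∈ S) : ¬primeProd S ≤ v.asIdeal ^ 2 := by
  classical
  rw [← Finset.insert_erase hv, ← Finset.cons_eq_insert _ _ (Finset.notMem_erase v S),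
    primeProd_cons, pow_two, ← Ideal.dvd_iff_le, mul_dvd_mul_iff_left v.ne_bot, Ideal.dvd_iff_le]
  exact isCoprime_asIdeal_iff.mp (isCoprime_primeProd_asIdeal (Finset.notMem_erase v S))

end PrimeProd

/-- Totally positive integers generating the square of an ideal. -/
structure IsTotPosSingular {F : Type*} [Field F] (α : 𝓞 F) : Prop where
  ne_zero : α ≠ 0
  pos : ∀ φ : F →+* ℝ, 0 < φ α
  exists_span_eq_sq : ∃ A : Ideal (𝓞 F), Ideal.span {α} = A ^ 2

/-- The normalization `(ω) b² = ∏ v ∈ S, v · 𝔡⁻¹` with `S` odd, for which the Gauss sum of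
`Tr (ω x²)` on `b` splits into a part at `2` and quadratic Gauss sums at the primes of `S`. -/
structure IsGaussDatum (ω : K) (b : FractionalIdeal (𝓞 K)⁰ K)
    (S : Finset (HeightOneSpectrum (𝓞 K))) : Prop where
  ne_zero : ω ≠ 0
  ideal_ne_zero : b ≠ 0
  two_notMem : ∀ v ∈ S, (2 : 𝓞 K) ∉ v.asIdeal
  eq : FractionalIdeal.spanSingleton (𝓞 K)⁰ ω * b ^ 2 = primeProd S * codifferent K

theorem IsGaussDatum.le (D : IsGaussDatum ω b S) : ⟪ω⟫ * b ^ 2 ≤ codifferent K :=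
  D.eq.trans_le (mul_le_of_le_one_left' coeIdeal_le_one)

theorem spanSingleton_coe_mul_le (α : 𝓞 K) (h : ⟪ω⟫ * b ^ 2 ≤ c) : ⟪α * ω⟫ * b ^ 2 ≤ c := by
  rw [← spanSingleton_mul_spanSingleton, mul_assoc]
  exact (mul_le_of_le_one_left' (spanSingleton_coe_le_one α)).trans h

theorem traceGaussSum_two_mul_primeProd (hb : b ≠ 0) (hS : ∀ v ∈ S, (2 : 𝓞 K) ∉ v.asIdeal)
    (h : ⟪ω⟫ * b ^ 2 ≤ primeProd S * codifferent K) :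
    traceGaussSum ω b (⟪(2 : K)⟫ * (primeProd S : FractionalIdeal (𝓞 K)⁰ K)) =
      traceGaussSum ω b ⟪(2 : K)⟫ * ∏ v ∈ S, traceGaussSum ω b v.asIdeal := by
  induction S using Finset.cons_induction with
  | empty => simp [primeProd]
  | cons v S hv ih =>
    have h2 := spanSingleton_ne_zero (two_ne_zero (α := K))
    have hJ : (primeProd S : FractionalIdeal (𝓞 K)⁰ K) ≠ 0 :=
      coeIdeal_ne_zero.mpr (primeProd_ne_bot S)
    have hcop : IsCoprime (Ideal.span {2} * primeProd S) v.asIdeal :=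
      (isCoprime_span_singleton_asIdeal_iff.mpr (hS v (Finset.mem_cons_self v S))).mul_left
        (isCoprime_primeProd_asIdeal hv)
    rw [primeProd_cons, coeIdeal_mul] at h
    have h1 : ⟪ω⟫ * b ^ 2 ≤ primeProd S * codifferent K :=
      h.trans (by gcongr; exact mul_le_of_le_one_left' coeIdeal_le_one)
    rw [Finset.prod_cons, mul_left_comm, ← ih (fun w hw => hS w (Finset.mem_cons_of_mem hw)) h1,
      primeProd_cons, coeIdeal_mul, mul_left_comm, mul_comm, mul_comm (traceGaussSum ω b v.asIdeal)]
    refine traceGaussSum_mul_eq hb (mul_ne_zero h2 hJ) (coeIdeal_asIdeal_ne_zero v) ?_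
      coeIdeal_le_one ?_ (h1.trans (mul_le_of_le_one_left' coeIdeal_le_one)) ?_
    · exact mul_le_one' spanSingleton_two_le_one coeIdeal_le_one
    · rwa [spanSingleton_two_eq_coeIdeal, ← coeIdeal_mul, coeIdeal_add_coeIdeal_eq_one_iff]
    · rw [← spanSingleton_mul_spanSingleton]
      calc ⟪2⟫ * ⟪ω⟫ * b ^ 2 = ⟪2⟫ * (⟪ω⟫ * b ^ 2) := by ring
        _ ≤ ⟪(2 : K)⟫ * ((v.asIdeal : FractionalIdeal (𝓞 K)⁰ K) *
              (primeProd S : FractionalIdeal (𝓞 K)⁰ K) * codifferent K) := by gcongr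
        _ = _ := by ring

theorem IsGaussDatum.traceGaussSum_mul_asIdeal (D : IsGaussDatum ω b S) (hv : v ∈ S)
    (hα : α ∉ v.asIdeal) :
    traceGaussSum (α * ω) b v.asIdeal = residueSymbol v α * traceGaussSum ω b v.asIdeal := by
  have hC := zero_lt_iff.mpr (codifferent_ne_zero (K := K))
  refine ArmitageFrohlich.traceGaussSum_mul_asIdeal D.ideal_ne_zero ?_ ?_ (D.two_notMem v hv) hα
  · rw [D.eq]
    gcongr
    exact primeProd_le hv
  · rw [D.eq, mul_le_mul_iff_left₀ hC, ← coeIdeal_pow, coeIdeal_le_coeIdeal]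
    exact not_primeProd_le_sq hv

/-- By Milgram's formula both `ω` and `αω` give Gauss sums with the phase of their common
signature, while the prime factors differ by residue symbols. -/
theorem IsGaussDatum.exists_traceGaussSum_mul_eq (D : IsGaussDatum ω b S) (hα : IsTotPosSingular α)
    (hα2 : IsCoprime (Ideal.span {2}) (Ideal.span {α})) (hαS : ∀ v ∈ S, α ∉ v.asIdeal) :
    traceGaussSum ω b ⟪(2 : K)⟫ ≠ 0 ∧ ∃ r : ℝ, 0 < r ∧
      traceGaussSum (α * ω) b ⟪(2 : K)⟫ * ∏ v ∈ S, (residueSymbol v α : ℂ) =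
        r * traceGaussSum ω b ⟪(2 : K)⟫ := by
  obtain ⟨A, hA⟩ := hα.exists_span_eq_sq
  have hb := D.ideal_ne_zero
  have hαK : (α : K) ≠ 0 := RingOfIntegers.coe_ne_zero_iff.mpr hα.ne_zero
  have hspan : ⟪(α : K)⟫ = (A : FractionalIdeal (𝓞 K)⁰ K) ^ 2 := by
    rw [← coeIdeal_span_singleton, hA, coeIdeal_pow]
  have hA0 : (A : FractionalIdeal (𝓞 K)⁰ K) ≠ 0 := fun h0 =>
    spanSingleton_ne_zero hαK (by rw [hspan, h0, zero_pow two_ne_zero])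
  have h20 := spanSingleton_ne_zero (two_ne_zero (α := K))
  have hJ : (primeProd S : FractionalIdeal (𝓞 K)⁰ K) ≠ 0 :=
    coeIdeal_ne_zero.mpr (primeProd_ne_bot S)
  have hcop : IsCoprime (Ideal.span {2} * primeProd S) A := by
    rw [← IsCoprime.pow_right_iff two_pos, ← hA]
    exact hα2.mul_left (isCoprime_primeProd fun v hv =>
      isCoprime_span_singleton_asIdeal_iff.mpr (hαS v hv)).symm
  obtain ⟨-, c₁, hc₁, h₁⟩ := traceGaussSum_eq_mul_tracePhase D.ne_zero hb hJ coeIdeal_le_one D.eq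
  obtain ⟨-, c₂, hc₂, h₂⟩ := traceGaussSum_eq_mul_tracePhase (ω := α * ω) (b := b / A)
    (mul_ne_zero hαK D.ne_zero) (div_ne_zero hb hA0) hJ coeIdeal_le_one (by
      rw [← D.eq, ← spanSingleton_mul_spanSingleton, hspan]; field_simp)
  rw [tracePhase_mul hαK hα.pos, traceGaussSum_div_eq hb (mul_ne_zero h20 hJ) hA0
    (mul_le_one' spanSingleton_two_le_one coeIdeal_le_one) coeIdeal_le_one
    (by rwa [spanSingleton_two_eq_coeIdeal, ← coeIdeal_mul, coeIdeal_add_coeIdeal_eq_one_iff])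
    (by rw [← spanSingleton_mul_spanSingleton, hspan, mul_assoc]; gcongr; exact D.le)
    (by
      simp only [← spanSingleton_mul_spanSingleton]
      rw [hspan, mul_assoc, mul_assoc, D.eq]
      exact le_of_eq (by ring)),
    traceGaussSum_two_mul_primeProd hb D.two_notMem (spanSingleton_coe_mul_le α D.eq.le),
    Finset.prod_congr rfl fun v hv => D.traceGaussSum_mul_asIdeal hv (hαS v hv),
    Finset.prod_mul_distrib] at h₂
  rw [traceGaussSum_two_mul_primeProd hb D.two_notMem D.eq.le] at h₁
  have hc₁' : (c₁ : ℂ) ≠ 0 := Complex.ofReal_ne_zero.mpr hc₁.ne'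
  have hne := h₁.trans_ne (mul_ne_zero hc₁' (tracePhase_ne_zero ω))
  refine ⟨left_ne_zero_of_mul hne, c₂ / c₁, by positivity,
    mul_right_cancel₀ (right_ne_zero_of_mul hne) ?_⟩
  rw [mul_assoc, h₂, mul_assoc, h₁]
  push_cast
  field_simp

theorem traceGaussSum_mul_of_sub_one_mem (h : ⟪ω⟫ * b ^ 2 ≤ codifferent K)
    (hα : α - 1 ∈ Ideal.span {(4 : 𝓞 K)}) :
    traceGaussSum (α * ω) b ⟪(2 : K)⟫ = traceGaussSum ω b ⟪(2 : K)⟫ := by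
  obtain ⟨γ, hγ⟩ := Ideal.mem_span_singleton'.mp hα
  refine quotientSum_congr fun x hx => ?_
  have h2x : x * 2 ∈ b := mul_mem_of_mem_div (spanSingleton_ne_zero two_ne_zero) hx
    (mem_spanSingleton_self _ _)
  obtain ⟨n, hn⟩ := exists_twistedTraceForm_eq_intCast (b := b) (B := b) (by rwa [← pow_two]) h2x
    (coe_mul_mem γ h2x)
  have hγ' : (α : K) = 1 + γ * 4 := by
    have := congrArg (algebraMap (𝓞 K) K) hγ
    rw [map_mul, map_sub, map_ofNat, map_one] at this
    linear_combination -this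
  have hadd : twistedTraceForm ℚ (α * ω) x x =
      twistedTraceForm ℚ ω x x + twistedTraceForm ℚ ω (x * 2) (γ * (x * 2)) := by
    simp only [twistedTraceForm_apply, ← map_add, hγ']
    ring_nf
  rw [hadd, hn, AddChar.map_add_eq_mul, ratChar_intCast, mul_one]

theorem isCoprime_span_two_of_sub_one_mem {R : Type*} [CommRing R] {α : R}
    (hα : α - 1 ∈ Ideal.span {(4 : R)}) : IsCoprime (Ideal.span {2}) (Ideal.span {α}) := by
  obtain ⟨γ, hγ⟩ := Ideal.mem_span_singleton'.mp hα
  rw [Ideal.isCoprime_span_singleton_iff]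
  exact ⟨-2 * γ, 1, by linear_combination -hγ⟩

theorem prod_residueSymbol_eq_one_of_pos (hα : ∀ v ∈ S, α ∉ v.asIdeal) {r s : ℝ} (hr : 0 < r)
    (hs : 0 < s) (h : s * ∏ v ∈ S, (residueSymbol v α : ℂ) = r) :
    ∏ v ∈ S, residueSymbol v α = 1 := by
  have hsq : (∏ v ∈ S, residueSymbol v α) ^ 2 = 1 := by
    rw [← Finset.prod_pow]
    exact Finset.prod_eq_one fun v hv => residueSymbol_sq (hα v hv)
  refine (sq_eq_one_iff.mp hsq).resolve_right fun hneg => ?_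
  have h' : s * ((∏ v ∈ S, residueSymbol v α : ℤ) : ℝ) = r := by
    rw [← Complex.ofReal_inj]
    push_cast
    exact h
  rw [hneg] at h'
  push_cast at h'
  linarith

theorem IsGaussDatum.prod_residueSymbol_eq_one (D : IsGaussDatum ω b S) (hα : IsTotPosSingular α)
    (hα4 : α - 1 ∈ Ideal.span {(4 : 𝓞 K)}) (hαS : ∀ v ∈ S, α ∉ v.asIdeal) :
    ∏ v ∈ S, residueSymbol v α = 1 := by
  obtain ⟨hne, r, hr, h⟩ :=
    D.exists_traceGaussSum_mul_eq hα (isCoprime_span_two_of_sub_one_mem hα4) hαS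
  rw [traceGaussSum_mul_of_sub_one_mem D.le hα4, mul_comm] at h
  exact prod_residueSymbol_eq_one_of_pos hαS hr one_pos (by simpa using mul_right_cancel₀ hne h)

theorem traceGaussSum_mul_div_of_sub_one_mem (hb : b ≠ 0) (hle : ⟪ω⟫ * b ^ 2 ≤ codifferent K)
    {β : 𝓞 K} (hβ4 : β - 1 ∈ Ideal.span {(4 : 𝓞 K)}) {I c : Ideal (𝓞 K)} (hc : c ≠ ⊥)
    (h : Ideal.span {β} = I * c ^ 2) :
    traceGaussSum (β * ω) (b / c) ⟪(2 : K)⟫ = traceGaussSum ω b ⟪(2 : K)⟫ := by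
  have hcop : IsCoprime (Ideal.span {2}) c := by
    have := isCoprime_span_two_of_sub_one_mem hβ4
    rw [h] at this
    exact (IsCoprime.pow_right_iff two_pos).mp this.of_mul_right_right
  have hspan : ⟪(β : K)⟫ ≤ (c : FractionalIdeal (𝓞 K)⁰ K) ^ 2 := by
    rw [← coeIdeal_span_singleton, h, ← coeIdeal_pow, coeIdeal_le_coeIdeal]
    exact Ideal.mul_le_right
  have h₁ : ⟪β * ω⟫ * b ^ 2 ≤ (c : FractionalIdeal (𝓞 K)⁰ K) ^ 2 * codifferent K := by
    rw [← spanSingleton_mul_spanSingleton, mul_assoc]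
    gcongr
  have h₂ : ⟪2 * (β * ω)⟫ * b ^ 2 ≤
      (c : FractionalIdeal (𝓞 K)⁰ K) ^ 2 * ⟪2⟫ * codifferent K := by
    rw [← spanSingleton_mul_spanSingleton, mul_assoc, mul_comm (_ ^ 2), mul_assoc]
    gcongr
  rw [traceGaussSum_div_eq hb (spanSingleton_ne_zero two_ne_zero) (coeIdeal_ne_zero.mpr hc)
    spanSingleton_two_le_one coeIdeal_le_one (by
      rwa [spanSingleton_two_eq_coeIdeal, coeIdeal_add_coeIdeal_eq_one_iff]) h₁ h₂,
    traceGaussSum_mul_of_sub_one_mem hle hβ4]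

section Extend

variable [DecidableEq (HeightOneSpectrum (𝓞 K))]

theorem IsGaussDatum.mul (D : IsGaussDatum ω b S) (hT : ∀ v ∈ T, (2 : 𝓞 K) ∉ v.asIdeal)
    (hST : Disjoint S T) (hβ : β ≠ 0) (hc : c ≠ 0) (h : ⟪β⟫ = primeProd T * c ^ 2) :
    IsGaussDatum (β * ω) (b / c) (S ∪ T) where
  ne_zero := mul_ne_zero hβ D.ne_zero
  ideal_ne_zero := div_ne_zero D.ideal_ne_zero hc
  two_notMem v hv := (Finset.mem_union.mp hv).elim (D.two_notMem v) (hT v)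
  eq := by
    have hprod : primeProd (S ∪ T) = primeProd S * primeProd T := Finset.prod_union hST
    rw [← spanSingleton_mul_spanSingleton, h, hprod, coeIdeal_mul, div_pow]
    calc primeProd T * c ^ 2 * ⟪ω⟫ * (b ^ 2 / c ^ 2) = primeProd T * (⟪ω⟫ * b ^ 2) := by field_simp
      _ = _ := by rw [D.eq]; ring

/-- Quadratic reciprocity for `α` and `β`, where the total positivity of `α` and its congruence
modulo `4` remove the contributions of the places above `∞` and `2`. -/
theorem IsGaussDatum.prod_residueSymbol_eq_one_of_spanSingleton_eq (D : IsGaussDatum ω b S)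
    (hT : ∀ v ∈ T, (2 : 𝓞 K) ∉ v.asIdeal) (hST : Disjoint S T) (hβ : β ≠ 0) (hc : c ≠ 0)
    (h : ⟪β⟫ = primeProd T * c ^ 2) (hα : IsTotPosSingular α)
    (hα4 : α - 1 ∈ Ideal.span {(4 : 𝓞 K)}) (hαST : ∀ v ∈ S ∪ T, α ∉ v.asIdeal) :
    ∏ v ∈ T, residueSymbol v α = 1 := by
  have hprod := (D.mul hT hST hβ hc h).prod_residueSymbol_eq_one hα hα4 hαST
  rwa [Finset.prod_union hST, D.prod_residueSymbol_eq_one hα hα4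
    fun v hv => hαST v (Finset.mem_union_left _ hv), one_mul] at hprod

/-- Here the congruence on `β` takes care of the places above `2`. -/
theorem IsGaussDatum.prod_residueSymbol_eq_one_of_span_eq (D : IsGaussDatum ω b S)
    (hT : ∀ v ∈ T, (2 : 𝓞 K) ∉ v.asIdeal) (hST : Disjoint S T) {β : 𝓞 K} (hβ : β ≠ 0)
    (hβ4 : β - 1 ∈ Ideal.span {(4 : 𝓞 K)}) {c : Ideal (𝓞 K)} (hc : c ≠ ⊥)
    (h : Ideal.span {β} = primeProd T * c ^ 2) (hα : IsTotPosSingular α)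
    (hα2 : IsCoprime (Ideal.span {2}) (Ideal.span {α})) (hαST : ∀ v ∈ S ∪ T, α ∉ v.asIdeal) :
    ∏ v ∈ T, residueSymbol v α = 1 := by
  have hspan : ⟪(β : K)⟫ = primeProd T * (c : FractionalIdeal (𝓞 K)⁰ K) ^ 2 := by
    rw [← coeIdeal_span_singleton, h, coeIdeal_mul, coeIdeal_pow]
  have D' := D.mul hT hST (RingOfIntegers.coe_ne_zero_iff.mpr hβ) (coeIdeal_ne_zero.mpr hc) hspan
  obtain ⟨hne, r, hr, h₁⟩ := D.exists_traceGaussSum_mul_eq hα hα2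
    fun v hv => hαST v (Finset.mem_union_left _ hv)
  obtain ⟨-, s, hs, h₂⟩ := D'.exists_traceGaussSum_mul_eq hα hα2 hαST
  rw [mul_left_comm, traceGaussSum_mul_div_of_sub_one_mem D.ideal_ne_zero D.le hβ4 hc h,
    traceGaussSum_mul_div_of_sub_one_mem D.ideal_ne_zero (spanSingleton_coe_mul_le α D.le) hβ4 hc h,
    Finset.prod_union hST, ← mul_assoc, h₁] at h₂
  refine prod_residueSymbol_eq_one_of_pos
    (fun v hv => hαST v (Finset.mem_union_right _ hv)) hs hr (mul_right_cancel₀ hne ?_)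
  linear_combination h₂

end Extend

end Reciprocity

/-! ### Pole of the Dedekind zeta function -/

section EulerSum

open scoped ENNReal

variable {ι κ : Type*}

/-- The formal expansion `∑ ∏ a, w a ^ m a` of the Euler product `∏ a, (1 - w a)⁻¹`. -/
noncomputable def eulerSum (w : ι → ℝ≥0∞) : ℝ≥0∞ := ∑' m : ι →₀ ℕ, m.prod fun a n => w a ^ n

theorem eulerSum_sum (w : ι ⊕ κ → ℝ≥0∞) :
    eulerSum w = eulerSum (w ∘ Sum.inl) * eulerSum (w ∘ Sum.inr) := by
  unfold eulerSum
  rw [← ENNReal.tsum_mul_right]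
  simp only [← ENNReal.tsum_mul_left]
  rw [← Finsupp.sumFinsuppEquivProdFinsupp.symm.tsum_eq, ENNReal.tsum_prod']
  exact tsum_congr fun m => tsum_congr fun n => Finsupp.prod_sumElim m n _

theorem eulerSum_le_of_injective {w : ι → ℝ≥0∞} {w' : κ → ℝ≥0∞} {f : ι → κ}
    (hf : Function.Injective f) (hw : ∀ a, w a ≤ w' (f a)) : eulerSum w ≤ eulerSum w' := by
  refine le_trans (ENNReal.tsum_le_tsum fun m => ?_)
    (ENNReal.tsum_comp_le_tsum_of_injective (Finsupp.mapDomain_injective (M := ℕ) hf) _)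
  rw [Finsupp.prod_mapDomain_index_inj hf]
  exact Finset.prod_le_prod' fun a _ => pow_le_pow_left' (hw a) _

theorem eulerSum_comp_equiv (e : ι ≃ κ) (w : κ → ℝ≥0∞) : eulerSum (w ∘ e) = eulerSum w :=
  le_antisymm (eulerSum_le_of_injective e.injective fun _ => le_rfl)
    (eulerSum_le_of_injective e.symm.injective fun a => by simp)

theorem eulerSum_unit (w : Unit → ℝ≥0∞) : eulerSum w = (1 - w ())⁻¹ := by
  rw [← ENNReal.tsum_geometric, eulerSum, ← (Finsupp.uniqueEquiv ()).symm.tsum_eq]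
  exact tsum_congr fun n => by simp

theorem eulerSum_le_two_pow [Finite ι] {w : ι → ℝ≥0∞} (hw : ∀ a, w a ≤ 2⁻¹) :
    eulerSum w ≤ 2 ^ Nat.card ι := by
  induction ι using Finite.induction_empty_option with
  | of_equiv e ih =>
    rw [← eulerSum_comp_equiv e, ← Nat.card_congr e]
    exact ih fun a => hw (e a)
  | h_empty => simp [eulerSum]
  | h_option ih =>
    have hnone : (1 - w none)⁻¹ ≤ 2 := by
      rw [ENNReal.inv_le_iff_inv_le, ← ENNReal.one_sub_inv_two]
      exact tsub_le_tsub_left (hw none) 1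
    rw [← eulerSum_comp_equiv (Equiv.optionEquivSumPUnit _).symm, eulerSum_sum, eulerSum_unit,
      Finite.card_option, pow_succ]
    exact mul_le_mul' (ih fun a => hw a) hnone

theorem eulerSum_sq_le {S : Finset ι} {w : ι → ℝ≥0∞} {w' : κ → ℝ≥0∞} (hw : ∀ a ∈ S, w a ≤ 2⁻¹)
    {f : {a // a ∉ S} ⊕ {a // a ∉ S} → κ} (hf : Function.Injective f)
    (hfw : ∀ x, w (Sum.elim (↑) (↑) x) ≤ w' (f x)) :
    eulerSum w ^ 2 ≤ (2 ^ S.card) ^ 2 * eulerSum w' := by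
  classical
  rw [← eulerSum_comp_equiv (Equiv.sumCompl (· ∈ S)), eulerSum_sum, mul_pow]
  refine mul_le_mul' (pow_le_pow_left' ?_ 2) ?_
  · exact (eulerSum_le_two_pow fun a : {a // a ∈ S} => hw a a.2).trans_eq (by simp)
  · rw [pow_two]
    exact (eulerSum_sum (w ∘ Sum.elim (Subtype.val : {a // a ∉ S} → ι) Subtype.val)).ge.trans
      (eulerSum_le_of_injective hf hfw)

end EulerSum

section IdealZeta

open Ideal Filter Topology
open scoped ENNReal

/-- The Dedekind zeta function at a real point, with values in `[0, ∞]`. -/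
noncomputable def idealZeta (s : ℝ) : ℝ≥0∞ :=
  ∑' I : {I : Ideal (𝓞 K) // I ≠ ⊥}, (absNorm I.1 : ℝ≥0∞) ^ (-s)

/-- The variable `N(v)⁻ˢ` attached to a prime ideal in the Euler product of `idealZeta`. -/
noncomputable def primeWeight (s : ℝ) (v : HeightOneSpectrum (𝓞 K)) : ℝ≥0∞ :=
  (absNorm v.asIdeal : ℝ≥0∞) ^ (-s)

theorem natCast_rpow_neg_anti {s : ℝ} (hs : 0 ≤ s) {m n : ℕ} (h : m ≤ n) :
    (n : ℝ≥0∞) ^ (-s) ≤ (m : ℝ≥0∞) ^ (-s) := by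
  rw [ENNReal.rpow_neg, ENNReal.rpow_neg, ENNReal.inv_le_inv]
  gcongr

section

variable {K}

theorem two_le_absNorm_asIdeal (v : HeightOneSpectrum (𝓞 K)) : 2 ≤ absNorm v.asIdeal := by
  have h0 : absNorm v.asIdeal ≠ 0 := absNorm_eq_zero_iff.not.mpr v.ne_bot
  have h1 : absNorm v.asIdeal ≠ 1 := absNorm_eq_one_iff.not.mpr v.isPrime.ne_top
  lia

theorem primeWeight_le_two_inv {s : ℝ} (hs : 1 ≤ s) (v : HeightOneSpectrum (𝓞 K)) :
    primeWeight K s v ≤ 2⁻¹ :=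
  calc primeWeight K s v ≤ ((2 : ℕ) : ℝ≥0∞) ^ (-s) :=
        natCast_rpow_neg_anti (by linarith) (two_le_absNorm_asIdeal v)
    _ ≤ ((2 : ℕ) : ℝ≥0∞) ^ (-1 : ℝ) :=
        ENNReal.rpow_le_rpow_of_exponent_le (by norm_num) (by linarith)
    _ = 2⁻¹ := ENNReal.rpow_neg_one 2

theorem absNorm_prod_asIdeal_rpow (s : ℝ) (m : HeightOneSpectrum (𝓞 K) →₀ ℕ) :
    (absNorm (m.prod fun v n => v.asIdeal ^ n) : ℝ≥0∞) ^ (-s) =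
      m.prod fun v n => primeWeight K s v ^ n := by
  simp only [Finsupp.prod, map_prod, map_pow, Nat.cast_prod, Nat.cast_pow, primeWeight]
  rw [← ENNReal.prod_rpow_of_ne_top fun v _ => by finiteness]
  refine Finset.prod_congr rfl fun v _ => ?_
  rw [← ENNReal.rpow_natCast, ← ENNReal.rpow_natCast, ← ENNReal.rpow_mul, ← ENNReal.rpow_mul,
    mul_comm]

end

theorem bijective_prod_asIdeal {R : Type*} [CommRing R] [IsDedekindDomain R] : Function.Bijective
    fun m : HeightOneSpectrum R →₀ ℕ => (⟨m.prod fun v n => v.asIdeal ^ n,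
      Finset.prod_ne_zero_iff.mpr fun v _ => pow_ne_zero _ v.ne_bot⟩ : {I : Ideal R // I ≠ ⊥}) := by
  classical
  have prod_eq (m : HeightOneSpectrum R →₀ ℕ) : (m.prod fun v n => v.asIdeal ^ n) =
      (m.toMultiset.map HeightOneSpectrum.asIdeal).prod := by
    rw [Finsupp.toMultiset_map, Finsupp.prod_toMultiset,
      Finsupp.prod_mapDomain_index_inj fun v w => HeightOneSpectrum.ext]
  have factors_eq (m : HeightOneSpectrum R →₀ ℕ) :
      UniqueFactorizationMonoid.normalizedFactors (m.prod fun v n => v.asIdeal ^ n) =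
        m.toMultiset.map HeightOneSpectrum.asIdeal := by
    rw [prod_eq]
    refine UniqueFactorizationMonoid.normalizedFactors_prod_of_prime fun p hp => ?_
    obtain ⟨v, -, rfl⟩ := Multiset.mem_map.1 hp
    exact v.prime
  constructor
  · intro m n h
    have hfactors := congrArg UniqueFactorizationMonoid.normalizedFactors (congrArg Subtype.val h)
    simp only [factors_eq] at hfactors
    exact Multiset.toFinsupp.symm.injective
      (Multiset.map_injective (fun v w => HeightOneSpectrum.ext) hfactors)
  · rintro ⟨I, hI⟩
    suffices ∃ m : HeightOneSpectrum R →₀ ℕ, (m.prod fun v n => v.asIdeal ^ n) = I from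
      this.imp fun m => Subtype.ext
    induction I using UniqueFactorizationMonoid.induction_on_prime with
    | h₁ => exact (hI rfl).elim
    | h₂ I hu => exact ⟨0, by simp [Ideal.isUnit_iff.1 hu, Ideal.one_eq_top]⟩
    | h₃ I p hI' hp ih =>
      obtain ⟨m, rfl⟩ := ih hI'
      refine ⟨.single ⟨p, Ideal.isPrime_of_prime hp, hp.ne_zero⟩ 1 + m, ?_⟩
      rw [Finsupp.prod_add_index' (by simp) fun v => pow_add _, Finsupp.prod_single_index (by simp),
        pow_one]

theorem idealZeta_eq_eulerSum (s : ℝ) : idealZeta K s = eulerSum (primeWeight K s) := by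
  rw [idealZeta, ← (Equiv.ofBijective _ bijective_prod_asIdeal).tsum_eq]
  exact tsum_congr (absNorm_prod_asIdeal_rpow s)

theorem toReal_idealZeta (s : ℝ) : ((idealZeta K s).toReal : ℂ) = dedekindZeta K s := by
  let norm (I : {I : Ideal (𝓞 K) // I ≠ ⊥}) : ℕ := absNorm I.1
  have hcard (n : ℕ) (hn : n ≠ 0) :
      ENat.card (norm ⁻¹' {n}) = Nat.card {I : Ideal (𝓞 K) // absNorm I = n} := by
    have : Finite {I : Ideal (𝓞 K) // absNorm I = n} := finite_setOfPred_absNorm_eq n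
    rw [← ENat.card_eq_coe_natCard]
    refine ENat.card_congr
      ⟨fun I => ⟨I.1, I.2⟩, fun I => ⟨⟨I, ?_⟩, I.2⟩, fun _ => rfl, fun _ => rfl⟩
    exact fun h => hn (I.2.symm.trans (absNorm_eq_zero_iff.mpr h))
  have hzeta : idealZeta K s = ∑' n, ENat.card (norm ⁻¹' {n}) * (n : ℝ≥0∞) ^ (-s) := by
    rw [idealZeta, ← ENNReal.tsum_fiberwise _ norm]
    refine tsum_congr fun n => ?_
    rw [← ENNReal.tsum_const]
    exact tsum_congr fun I => congrArg (fun n : ℕ => (n : ℝ≥0∞) ^ (-s)) I.2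
  have hterm (n : ℕ) : (ENat.card (norm ⁻¹' {n}) * (n : ℝ≥0∞) ^ (-s)) =
      ENNReal.ofReal (if n = 0 then 0 else
        Nat.card {I : Ideal (𝓞 K) // absNorm I = n} * (n : ℝ) ^ (-s)) := by
    split_ifs with hn
    · have : IsEmpty (norm ⁻¹' {n}) :=
        ⟨fun I => I.1.2 (absNorm_eq_zero_iff.mp (I.2.trans hn))⟩
      simp [Set.isEmpty_coe_sort.mp this]
    · rw [hcard n hn, ENNReal.ofReal_mul (by positivity), ENNReal.ofReal_natCast,
        ← ENNReal.ofReal_rpow_of_pos (by positivity), ENNReal.ofReal_natCast]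
      rfl
  simp only [hterm] at hzeta
  rw [hzeta, ENNReal.tsum_toReal_eq (fun n => ENNReal.ofReal_ne_top), Complex.ofReal_tsum,
    dedekindZeta, LSeries]
  refine tsum_congr fun n => ?_
  rw [ENNReal.toReal_ofReal (by positivity), LSeries.term_def]
  split_ifs
  · rfl
  · push_cast
    rw [Complex.ofReal_cpow n.cast_nonneg, Complex.ofReal_neg, Complex.cpow_neg, div_eq_mul_inv,
      Complex.ofReal_natCast]

theorem tendsto_sub_one_mul_toReal_idealZeta :
    Tendsto (fun s : ℝ => (s - 1) * (idealZeta K s).toReal) (𝓝[>] 1)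
      (𝓝 (dedekindZeta_residue K)) := by
  rw [Complex.isometry_ofReal.isEmbedding.tendsto_nhds_iff]
  simpa [Function.comp_def, toReal_idealZeta] using tendsto_sub_one_mul_dedekindZeta_nhdsGT K

theorem not_forall_idealZeta_sq_le (L : Type*) [Field L] [NumberField L] {C : ℝ≥0∞} (hC : C ≠ ∞) :
    ¬∀ s > 1, idealZeta K s ^ 2 ≤ C * idealZeta L s := by
  intro h
  have hsub : Tendsto (fun s : ℝ => s - 1) (𝓝[>] 1) (𝓝 0) := by
    simpa using (tendsto_id (x := 𝓝[>] (1 : ℝ))).mono_right nhdsWithin_le_nhds |>.sub_const 1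
  have hL := tendsto_sub_one_mul_toReal_idealZeta L
  have hres : dedekindZeta_residue K ^ 2 ≤ C.toReal * dedekindZeta_residue L * 0 := by
    refine le_of_tendsto_of_tendsto ((tendsto_sub_one_mul_toReal_idealZeta K).pow 2)
      ((hL.const_mul C.toReal).mul hsub) ?_
    filter_upwards [self_mem_nhdsWithin, hL.eventually_ne (dedekindZeta_residue_ne_zero L)]
      with s hs hL0
    have hfin : idealZeta L s ≠ ∞ := fun htop => hL0 (by simp [htop])
    have hle := ENNReal.toReal_mono (ENNReal.mul_ne_top hC hfin) (h s hs)
    rw [ENNReal.toReal_pow, ENNReal.toReal_mul] at hle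
    calc ((s - 1) * (idealZeta K s).toReal) ^ 2
        = (s - 1) ^ 2 * (idealZeta K s).toReal ^ 2 := mul_pow _ _ _
      _ ≤ (s - 1) ^ 2 * (C.toReal * (idealZeta L s).toReal) := by gcongr
      _ = C.toReal * ((s - 1) * (idealZeta L s).toReal) * (s - 1) := by ring
  have := pow_pos (dedekindZeta_residue_pos K) 2
  linarith

/-- Otherwise the zeta function of `L` would have at least a double pole at `1`. -/
theorem not_injective_of_absNorm_le {L : Type*} [Field L] [NumberField L]
    {S : Finset (HeightOneSpectrum (𝓞 K))}
    {f : {v // v ∉ S} ⊕ {v // v ∉ S} → HeightOneSpectrum (𝓞 L)}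
    (hf : ∀ x, absNorm (f x).asIdeal ≤
      absNorm (Sum.elim (↑) (↑) x : HeightOneSpectrum (𝓞 K)).asIdeal) : ¬Function.Injective f := by
  intro hinj
  refine not_forall_idealZeta_sq_le K L (C := (2 ^ S.card) ^ 2) (by finiteness) fun s hs => ?_
  rw [idealZeta_eq_eulerSum, idealZeta_eq_eulerSum]
  exact eulerSum_sq_le (fun v _ => primeWeight_le_two_inv hs.le v) hinj fun x =>
    natCast_rpow_neg_anti (by linarith) (hf x)

end IdealZeta

/-! ### Primes with nontrivial residue symbol -/

section SplitPrimes

variable {R S : Type*} [CommRing R] [CommRing S] [Algebra R S]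

theorem exists_mem_primesOver_ne [Algebra.IsIntegral R S] [FaithfulSMul R S] (τ : S ≃ₐ[R] S)
    {θ : S} {a : R} (hθ : θ ^ 2 = algebraMap R S a) (hτ : τ θ = -θ) {𝔭 : Ideal R} [𝔭.IsPrime]
    (h2 : 2 ∉ 𝔭) (ha : a ∉ 𝔭) (hsq : IsSquare (Ideal.Quotient.mk 𝔭 a)) :
    ∃ P ∈ 𝔭.primesOver S, ∃ Q ∈ 𝔭.primesOver S, P ≠ Q := by
  obtain ⟨⟨P, hP, hP𝔭⟩⟩ := 𝔭.nonempty_primesOver (S := S)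
  refine ⟨P, ⟨hP, hP𝔭⟩, P.comap τ, ⟨inferInstance, inferInstance⟩, fun hPτ => ?_⟩
  have hτP {x : S} (hx : x ∈ P) : τ x ∈ P := by rwa [hPτ] at hx
  have hmem (x : R) : algebraMap R S x ∈ P ↔ x ∈ 𝔭 := by
    rw [← Ideal.mem_comap, ← Ideal.under_def, ← hP𝔭.over]
  obtain ⟨⟨r⟩, hr⟩ := hsq
  have hra : a - r * r ∈ 𝔭 := Ideal.Quotient.eq.mp hr
  have hr𝔭 : r ∉ 𝔭 := fun h => ha <| by simpa using 𝔭.add_mem hra (𝔭.mul_mem_left r h)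
  have h2r : algebraMap R S (2 * r) ∉ P := fun h =>
    (Ideal.IsPrime.mem_or_mem ‹_› ((hmem _).mp h)).elim h2 hr𝔭
  have hfactor : (θ - algebraMap R S r) * (θ + algebraMap R S r) ∈ P := by
    convert (hmem _).mpr hra using 1
    rw [map_sub, map_mul, ← hθ]
    ring
  rcases hP.mem_or_mem hfactor with h | h
  · refine h2r ?_
    convert P.neg_mem (P.add_mem h (hτP h)) using 1
    simp only [map_mul, map_ofNat, map_sub, hτ, AlgEquiv.commutes]
    ring
  · refine h2r ?_
    convert P.add_mem h (hτP h) using 1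
    simp only [map_mul, map_ofNat, map_add, hτ, AlgEquiv.commutes]
    ring

theorem inertiaDeg_eq_one_of_primesOver_ne [IsDomain R] [Module.Finite R S] [Module.Flat R S]
    (hrank : Module.finrank R S = 2) {𝔭 : Ideal R} [𝔭.IsPrime] {P Q : Ideal S}
    (hP : P ∈ 𝔭.primesOver S) (hQ : Q ∈ 𝔭.primesOver S) (hPQ : P ≠ Q) :
    P.inertiaDeg R = 1 := by
  classical
  have : Finite (𝔭.primesOver S) := Algebra.QuasiFinite.finite_primesOver 𝔭
  let _ := Fintype.ofFinite (𝔭.primesOver S)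
  have hpos (q : 𝔭.primesOver S) : 0 < q.1.ramificationIdx R * q.1.inertiaDeg R := by
    have := q.2.1
    exact Nat.mul_pos (q.1.ramificationIdx_pos R) (q.1.inertiaDeg_pos R)
  have hsum : ∑ q ∈ ({⟨P, hP⟩, ⟨Q, hQ⟩} : Finset (𝔭.primesOver S)),
      q.1.ramificationIdx R * q.1.inertiaDeg R ≤ 2 :=
    hrank ▸ 𝔭.sum_ramification_inertia_eq_finrank S ▸
      Finset.sum_le_sum_of_subset (Finset.subset_univ _)
  rw [Finset.sum_pair (by simpa using hPQ)] at hsum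
  have hP1 : P.ramificationIdx R * P.inertiaDeg R = 1 := by
    have := hpos ⟨P, hP⟩
    have := hpos ⟨Q, hQ⟩
    lia
  exact Nat.eq_one_of_mul_eq_one_left hP1

end SplitPrimes

section QuadraticExtension

variable {K}

theorem finrank_ringOfIntegers (L : Type*) [Field L] [NumberField L] [Algebra K L] :
    Module.finrank (𝓞 K) (𝓞 L) = Module.finrank K L :=
  (IsFractionRing.finrank_eq (𝓞 K) K (𝓞 L) L).symm

universe u in
theorem exists_quadratic_extension {K : Type u} [Field K] [NumberField K] {α : 𝓞 K}
    (hα : ¬IsSquare (α : K)) :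
    ∃ (L : Type u) (_ : Field L) (_ : NumberField L) (_ : Algebra K L),
      Module.finrank K L = 2 ∧
        ∃ (τ : 𝓞 L ≃ₐ[𝓞 K] 𝓞 L) (θ : 𝓞 L), θ ^ 2 = algebraMap (𝓞 K) (𝓞 L) α ∧ τ θ = -θ := by
  have : Fact (∀ r : K, r ^ 2 ≠ α + 0 * r) :=
    ⟨fun r hr => hα ⟨r, by rw [← sq, hr, zero_mul, add_zero]⟩⟩
  let L := QuadraticAlgebra K (α : K) 0
  have : NumberField L := NumberField.of_module_finite K L
  have hω : (QuadraticAlgebra.omega : L) ^ 2 = algebraMap K L α := by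
    rw [sq, QuadraticAlgebra.omega_mul_omega_eq_algebraMap, map_zero, zero_mul, add_zero]
  have hint : IsIntegral ℤ (QuadraticAlgebra.omega : L) :=
    .of_pow two_pos (hω ▸ (RingOfIntegers.isIntegral_coe α).algebraMap)
  let σ : L ≃ₐ[K] L := .ofRingEquiv (f := starRingAut) fun x => by
    ext <;> simp [L, starRingAut_apply]
  refine ⟨L, inferInstance, inferInstance, inferInstance, QuadraticAlgebra.finrank_eq_two _ _,
    RingOfIntegers.mapAlgEquiv σ, ⟨QuadraticAlgebra.omega, hint⟩, ?_, ?_⟩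
  · exact RingOfIntegers.ext hω
  · refine RingOfIntegers.ext (?_ : star (QuadraticAlgebra.omega : L) = -QuadraticAlgebra.omega)
    ext <;> simp

theorem finite_setOf_mem_asIdeal {R : Type*} [CommRing R] [IsDedekindDomain R] {x : R}
    (hx : x ≠ 0) : {v : IsDedekindDomain.HeightOneSpectrum R | x ∈ v.asIdeal}.Finite := by
  convert Ideal.finite_factors (Ideal.span_singleton_eq_bot.not.mpr hx)
  simp [Ideal.dvd_span_singleton]

theorem exists_heightOneSpectrum_ne {L : Type*} [Field L] [NumberField L] [Algebra K L]
    (hrank : Module.finrank K L = 2) {τ : 𝓞 L ≃ₐ[𝓞 K] 𝓞 L} {θ : 𝓞 L} {α : 𝓞 K}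
    (hθ : θ ^ 2 = algebraMap (𝓞 K) (𝓞 L) α) (hτ : τ θ = -θ) {v : HeightOneSpectrum (𝓞 K)}
    (h2 : 2 ∉ v.asIdeal) (hα : α ∉ v.asIdeal) (hsq : IsSquare (Ideal.Quotient.mk v.asIdeal α)) :
    ∃ P Q : HeightOneSpectrum (𝓞 L), P ≠ Q ∧ ∀ w, w = P ∨ w = Q →
      w.asIdeal.under (𝓞 K) = v.asIdeal ∧ w.asIdeal.absNorm = v.asIdeal.absNorm := by
  obtain ⟨P, hP, Q, hQ, hPQ⟩ := exists_mem_primesOver_ne τ hθ hτ h2 hα hsq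
  have hne {I : Ideal (𝓞 L)} (hI : I ∈ v.asIdeal.primesOver (𝓞 L)) : I ≠ ⊥ := by
    have := hI.2
    exact Ideal.ne_bot_of_liesOver_of_ne_bot v.ne_bot I
  have habs {I J : Ideal (𝓞 L)} (hI : I ∈ v.asIdeal.primesOver (𝓞 L))
      (hJ : J ∈ v.asIdeal.primesOver (𝓞 L)) (hIJ : I ≠ J) :
      I.under (𝓞 K) = v.asIdeal ∧ I.absNorm = v.asIdeal.absNorm := by
    have := hI.1
    have hover := hI.2
    rw [← Ideal.absNorm_pow_inertiaDeg v.asIdeal I, inertiaDeg_eq_one_of_primesOver_ne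
      ((finrank_ringOfIntegers L).trans hrank) hI hJ hIJ, pow_one]
    exact ⟨hover.over.symm, rfl⟩
  refine ⟨⟨P, hP.1, hne hP⟩, ⟨Q, hQ.1, hne hQ⟩,
    fun h => hPQ (congrArg HeightOneSpectrum.asIdeal h), ?_⟩
  rintro _ (rfl | rfl)
  exacts [habs hP hQ hPQ, habs hQ hP hPQ.symm]

/-- Otherwise almost every prime would split in `K(√α)`. -/
theorem exists_notMem_residueSymbol_eq_neg_one {α : 𝓞 K} (hα : ¬IsSquare (α : K))
    (S : Finset (HeightOneSpectrum (𝓞 K))) :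
    ∃ v ∉ S, 2 ∉ v.asIdeal ∧ α ∉ v.asIdeal ∧ residueSymbol v α = -1 := by
  classical
  by_contra! hsymb
  obtain ⟨L, _, _, _, hrank, τ, θ, hθ, hτ⟩ := exists_quadratic_extension hα
  have hα0 : α ≠ 0 := by rintro rfl; simp at hα
  have hfin := finite_setOf_mem_asIdeal (mul_ne_zero (two_ne_zero' (𝓞 K)) hα0)
  set S' := S ∪ hfin.toFinset
  have hsplit (v : {v // v ∉ S'}) : ∃ P Q : HeightOneSpectrum (𝓞 L), P ≠ Q ∧
      ∀ w, w = P ∨ w = Q →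
        w.asIdeal.under (𝓞 K) = v.1.asIdeal ∧ w.asIdeal.absNorm = v.1.asIdeal.absNorm := by
    obtain ⟨v, hv⟩ := v
    simp only [S', Finset.mem_union, not_or, hfin.mem_toFinset, Set.mem_ofPred_eq,
      v.isPrime.mul_mem_iff_mem_or_mem] at hv
    refine exists_heightOneSpectrum_ne hrank hθ hτ hv.2.1 hv.2.2 (of_not_not fun hns => ?_)
    exact hsymb v hv.1 hv.2.1 hv.2.2 ((residueSymbol_eq_neg_one_iff α).mpr hns)
  choose P Q hPQ hover using hsplit
  have hunder {v v' : {v // v ∉ S'}} {w : HeightOneSpectrum (𝓞 L)} (h : w = P v ∨ w = Q v)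
      (h' : w = P v' ∨ w = Q v') : v = v' :=
    Subtype.ext <| HeightOneSpectrum.ext <| (hover v w h).1.symm.trans (hover v' w h').1
  refine not_injective_of_absNorm_le K (f := Sum.elim P Q) ?_ ?_
  · rintro (v | v)
    exacts [(hover v _ (.inl rfl)).2.le, (hover v _ (.inr rfl)).2.le]
  · rintro (v | v) (v' | v') h
    · exact congrArg _ (hunder (.inl rfl) (.inl h))
    · exact (hPQ v (hunder (.inl rfl) (.inr h) ▸ h)).elim
    · exact (hPQ v' (hunder (.inl rfl) (.inr h.symm) ▸ h.symm)).elim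
    · exact congrArg _ (hunder (.inr rfl) (.inr h))

end QuadraticExtension

section Dedekind

variable {R : Type*} [CommRing R] [IsDedekindDomain R]

theorem exists_eq_primeProd_mul_sq {N : Ideal R} (hN : N ≠ ⊥) :
    ∃ (S : Finset (HeightOneSpectrum R)) (B : Ideal R), B ≠ ⊥ ∧ N = primeProd S * B ^ 2 := by
  classical
  induction N using UniqueFactorizationMonoid.induction_on_prime with
  | h₁ => exact absurd rfl hN
  | h₂ N hu =>
    refine ⟨∅, ⊤, top_ne_bot, ?_⟩
    rw [Ideal.isUnit_iff.mp hu, primeProd, Finset.prod_empty, ← Ideal.one_eq_top, one_pow, one_mul]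
  | h₃ N p hN₀ hp ih =>
    obtain ⟨S, B, hB, rfl⟩ := ih hN₀
    obtain ⟨v, rfl⟩ : ∃ v : HeightOneSpectrum R, v.asIdeal = p :=
      ⟨⟨p, Ideal.isPrime_of_prime hp, hp.ne_zero⟩, rfl⟩
    by_cases hv : v ∈ S
    · refine ⟨S.erase v, v.asIdeal * B, mul_ne_zero hp.ne_zero hB, ?_⟩
      rw [primeProd, primeProd, ← Finset.mul_prod_erase _ _ hv]
      ring
    · exact ⟨S.cons v hv, B, hB, by rw [primeProd_cons, mul_assoc]⟩

theorem exists_span_singleton_eq_mul_isCoprime {J m : Ideal R} (hJ : J ≠ ⊥) (hm : m ≠ ⊥) :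
    ∃ x N, x ≠ 0 ∧ Ideal.span {x} = J * N ∧ IsCoprime N m := by
  obtain ⟨x, hx, hsup⟩ : ∃ x, x ≠ 0 ∧ m * J ⊔ Ideal.span {x} = J := by
    obtain ⟨x, hx⟩ := exists_sup_span_eq (Ideal.mul_le_right : m * J ≤ J) (mul_ne_zero hm hJ)
    rcases eq_or_ne x 0 with rfl | hx₀
    · rw [Ideal.span_singleton_zero, sup_bot_eq] at hx
      obtain ⟨y, hyJ, hy⟩ := Submodule.exists_mem_ne_zero_of_ne_bot hJ
      exact ⟨y, hy, by rwa [hx, sup_eq_left, Ideal.span_singleton_le_iff_mem]⟩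
    · exact ⟨x, hx₀, hx⟩
  obtain ⟨N, hN⟩ := Ideal.dvd_iff_le.mpr (le_sup_right.trans_eq hsup)
  refine ⟨x, N, hx, hN, ?_⟩
  rw [Ideal.isCoprime_iff_sup_eq]
  apply mul_left_cancel₀ hJ
  rw [Ideal.mul_sup, ← hN, sup_comm, mul_comm J, hsup, Ideal.mul_top]

theorem exists_spanSingleton_mul_eq_isCoprime {F : Type*} [Field F] [Algebra R F]
    [IsFractionRing R F] {I : FractionalIdeal R⁰ F} (hI : I ≠ 0) {m : Ideal R} (hm : m ≠ ⊥) :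
    ∃ (x : F) (N : Ideal R), x ≠ 0 ∧ N ≠ ⊥ ∧ spanSingleton R⁰ x * I = N ∧ IsCoprime N m := by
  obtain ⟨d, J, hd, hJ⟩ := exists_eq_spanSingleton_mul I⁻¹
  have hJ₀ : J ≠ ⊥ := by
    rintro rfl
    rw [coeIdeal_bot, mul_zero] at hJ
    exact inv_ne_zero hI hJ
  obtain ⟨x, N, hx, hN, hcop⟩ := exists_span_singleton_eq_mul_isCoprime hJ₀ hm
  have hN₀ : N ≠ ⊥ := by
    rintro rfl
    rw [Ideal.mul_bot, Ideal.span_singleton_eq_bot] at hN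
    exact hx hN
  have hinj := FaithfulSMul.algebraMap_injective R F
  refine ⟨algebraMap R F x / algebraMap R F d, N, div_ne_zero ?_ ?_, hN₀, ?_, hcop⟩
  · rwa [map_ne_zero_iff _ hinj]
  · rwa [map_ne_zero_iff _ hinj]
  · have hJ₁ : (J : FractionalIdeal R⁰ F) ≠ 0 := coeIdeal_ne_zero.mpr hJ₀
    rw [div_eq_mul_inv, ← spanSingleton_mul_spanSingleton, ← coeIdeal_span_singleton, hN,
      coeIdeal_mul, mul_assoc, mul_comm _ I, ← mul_inv_cancel_right₀ hJ₁ (spanSingleton R⁰ _),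
      ← hJ, ← mul_assoc I, mul_inv_cancel₀ hI, one_mul, mul_comm, ← mul_assoc]
    simp [hJ₁]

end Dedekind

section SeparatingPrimes

variable {K}

theorem exists_isGaussDatum {M : 𝓞 K} (hM : M ≠ 0) :
    ∃ (ω : K) (b : FractionalIdeal (𝓞 K)⁰ K) (S : Finset (HeightOneSpectrum (𝓞 K))),
      IsGaussDatum ω b S ∧ ∀ v ∈ S, M ∉ v.asIdeal := by
  have hd := codifferent_ne_zero (K := K)
  obtain ⟨x, N, hx, hN₀, hN, hcop⟩ :=
    exists_spanSingleton_mul_eq_isCoprime (inv_ne_zero hd) (m := Ideal.span {2 * M}) (by simp [hM])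
  obtain ⟨S, B, hB, rfl⟩ := exists_eq_primeProd_mul_sq hN₀
  have h2M : ∀ v ∈ S, 2 * M ∉ v.asIdeal := fun v hv => by
    rw [← isCoprime_span_singleton_asIdeal_iff]
    exact hcop.symm.of_isCoprime_of_dvd_right
      (Ideal.dvd_iff_le.mpr (Ideal.mul_le_left.trans (primeProd_le hv)))
  have hB' : (B : FractionalIdeal (𝓞 K)⁰ K) ≠ 0 := coeIdeal_ne_zero.mpr hB
  refine ⟨x, (B : FractionalIdeal (𝓞 K)⁰ K)⁻¹, S, ⟨hx, inv_ne_zero hB',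
    fun v hv h => h2M v hv (Ideal.mul_mem_right _ _ h), ?_⟩,
    fun v hv h => h2M v hv (Ideal.mul_mem_left _ _ h)⟩
  rw [mul_inv_eq_iff_eq_mul₀ hd, coeIdeal_mul, coeIdeal_pow] at hN
  rw [hN]
  field_simp

theorem exists_finset_prod_eq_neg_one {Q ι : Type*} [Group Q] [Finite Q] {χ : ι → Q → ℤ}
    {S : Finset ι} (hmul : ∀ v ∉ S, ∀ c d, χ v (c * d) = χ v c * χ v d)
    (hsq : ∀ v ∉ S, ∀ c, χ v c ^ 2 = 1)
    (hneg : ∀ c ≠ 1, ∀ S' : Finset ι, ∃ v ∉ S', χ v c = -1) {n : ℕ} (hn : 2 ^ n ≤ Nat.card Q) :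
    ∃ V : Finset ι, V.card = n ∧ Disjoint S V ∧
      ∀ T ⊆ V, T.Nonempty → ∃ c, ∏ v ∈ T, χ v c = -1 := by
  classical
  have := Fintype.ofFinite Q
  induction n with
  | zero => exact ⟨∅, rfl, Finset.disjoint_empty_right S,
      fun T hT hne => absurd (Finset.subset_empty.mp hT) hne.ne_empty⟩
  | succ n ih =>
    obtain ⟨V, hV, hSV, hT⟩ := ih ((Nat.pow_le_pow_right two_pos n.le_succ).trans hn)
    have hcard : V.powerset.card < (Finset.univ : Finset Q).card := by
      rw [Finset.card_powerset, hV, Finset.card_univ, ← Nat.card_eq_fintype_card]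
      exact (Nat.pow_lt_pow_succ one_lt_two).trans_le hn
    obtain ⟨a, -, b, -, hab, hfilter⟩ := Finset.exists_ne_map_eq_of_card_lt_of_maps_to hcard
      (f := fun c => V.filter (χ · c = -1))
      (fun c _ => Finset.mem_powerset.mpr (Finset.filter_subset _ V))
    have hker : ∀ v ∈ V, χ v (a⁻¹ * b) = 1 := fun v hv => by
      have hvS := Finset.disjoint_right.mp hSV hv
      have heq : χ v a = χ v b := by
        have hiff : χ v a = -1 ↔ χ v b = -1 := by
          simpa [hv] using Finset.ext_iff.mp hfilter v
        rcases sq_eq_one_iff.mp (hsq v hvS a) with ha | ha <;>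
        rcases sq_eq_one_iff.mp (hsq v hvS b) with hb | hb <;> simp_all
      have h := hmul v hvS a (a⁻¹ * b)
      rw [mul_inv_cancel_left, ← heq] at h
      have ha : χ v a ≠ 0 := fun h0 => by simpa [h0] using hsq v hvS a
      exact mul_left_cancel₀ ha (by rw [← h, mul_one])
    obtain ⟨w, hw, hneg⟩ := hneg (a⁻¹ * b) (by rwa [Ne, inv_mul_eq_one]) (S ∪ V)
    rw [Finset.mem_union, not_or] at hw
    refine ⟨V.cons w hw.2, by rw [Finset.card_cons, hV], ?_, fun T hTV hne => ?_⟩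
    · rw [Finset.cons_eq_insert, Finset.disjoint_insert_right]
      exact ⟨hw.1, hSV⟩
    · rw [Finset.cons_eq_insert, Finset.subset_insert_iff] at hTV
      by_cases hwT : w ∈ T
      · exact ⟨a⁻¹ * b, by rw [← Finset.mul_prod_erase _ _ hwT, hneg,
          Finset.prod_congr rfl fun v hv => hker v (hTV hv), Finset.prod_const_one, mul_one]⟩
      · rw [Finset.erase_eq_of_notMem hwT] at hTV
        exact hT T hTV hne

theorem residueSymbol_eq_of_isSquare_mul {v : HeightOneSpectrum (𝓞 K)} {α β : 𝓞 K}
    (hα : α ∉ v.asIdeal) (hβ : β ∉ v.asIdeal) (h : IsSquare ((α : K) * β)) :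
    residueSymbol v α = residueSymbol v β := by
  obtain ⟨s, hs⟩ := h
  have hint : IsIntegral (𝓞 K) (s ^ 2) := by
    rw [pow_two, ← hs, ← map_mul]
    exact isIntegral_algebraMap
  obtain ⟨r, rfl⟩ := IsIntegrallyClosed.exists_algebraMap_eq_of_isIntegral_pow two_pos hint
  have hr : α * β = r ^ 2 := by
    apply RingOfIntegers.coe_injective
    rw [map_mul, hs, map_pow, pow_two]
  have hrv : r ∉ v.asIdeal := fun hr' => by
    have := hr ▸ Ideal.pow_mem_of_mem _ hr' 2 two_pos
    exact (v.isPrime.mem_or_mem this).elim hα hβ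
  have hprod : residueSymbol v α * residueSymbol v β = 1 := by
    rw [← map_mul, hr, map_pow, residueSymbol_sq hrv]
  calc residueSymbol v α = residueSymbol v α * residueSymbol v β ^ 2 := by
        rw [residueSymbol_sq hβ, mul_one]
    _ = residueSymbol v β := by rw [pow_two, ← mul_assoc, hprod, one_mul]

theorem exists_quotient_representatives {F : Type*} [Field F] {Y : Subgroup Fˣ}
    (hY : Subgroup.square Fˣ ≤ Y) {P : 𝓞 F → Prop}
    (hP : ∀ y ∈ Y, ∃ (t : Fˣ) (x : 𝓞 F), (x : F) = y * t ^ 2 ∧ P x) :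
    ∃ x : Y ⧸ (Subgroup.square Fˣ).subgroupOf Y → 𝓞 F, (∀ c, x c ≠ 0) ∧ (∀ c, P (x c)) ∧
      (∀ c d, IsSquare ((x (c * d) : F) * (x c * x d : 𝓞 F))) ∧
      ∀ c ≠ 1, ¬IsSquare (x c : F) := by
  have hrep : ∀ c : Y ⧸ (Subgroup.square Fˣ).subgroupOf Y,
      ∃ (x : 𝓞 F) (y : Y), y = c ∧ (x : F) = (y : Fˣ) ∧ P x := fun c => by
    obtain ⟨⟨y, hy⟩, rfl⟩ := QuotientGroup.mk_surjective c
    obtain ⟨t, x, hx, hPx⟩ := hP y hy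
    have ht : t ^ 2 ∈ Subgroup.square Fˣ := Subgroup.mem_square.mpr (.sq t)
    refine ⟨x, ⟨y * t ^ 2, mul_mem hy (hY ht)⟩, ?_, by simpa using hx, hPx⟩
    rw [eq_comm, QuotientGroup.eq, Subgroup.mem_subgroupOf]
    simpa using ht
  choose x y hyc hxy hPx using hrep
  have hunit (a : Fˣ) : IsSquare (a : F) ↔ a ∈ Subgroup.square Fˣ := by
    rw [Subgroup.mem_square]
    refine ⟨fun ⟨r, hr⟩ => ?_, fun h => h.map (Units.coeHom F)⟩
    have hr₀ : r ≠ 0 := left_ne_zero_of_mul (hr ▸ a.ne_zero)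
    exact ⟨Units.mk0 r hr₀, Units.ext hr⟩
  refine ⟨x, fun c hc => (y c : Fˣ).ne_zero (by rw [← hxy, hc]; simp), hPx, fun c d => ?_,
    fun c hc hsq => hc ?_⟩
  · have hcd : (y (c * d))⁻¹ * (y c * y d) ∈ (Subgroup.square Fˣ).subgroupOf Y := by
      rw [← QuotientGroup.eq, QuotientGroup.mk_mul, hyc, hyc, hyc]
    have h : (y (c * d) : Fˣ) * (y c * y d : Y) ∈ Subgroup.square Fˣ := by
      have := mul_mem (Subgroup.mem_square.mpr (.sq (y (c * d) : Fˣ))) hcd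
      rwa [pow_two, Subgroup.coe_subtype, Subgroup.coe_mul, Subgroup.coe_inv,
        mul_assoc, mul_inv_cancel_left] at this
    simpa [hxy] using (hunit _).mpr h
  · rw [hxy, hunit] at hsq
    rw [← hyc c, QuotientGroup.eq_one_iff]
    exact hsq

theorem exists_relIndex_square_eq_two_pow {G : Type*} [CommGroup G] {Y : Subgroup G}
    (hfin : (Subgroup.square G).relIndex Y ≠ 0) : ∃ n, (Subgroup.square G).relIndex Y = 2 ^ n := by
  have : ((Subgroup.square G).subgroupOf Y).FiniteIndex := ⟨hfin⟩
  refine IsPGroup.iff_card.mp fun c => ⟨1, ?_⟩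
  obtain ⟨y, rfl⟩ := QuotientGroup.mk_surjective c
  rw [pow_one, ← QuotientGroup.mk_pow, QuotientGroup.eq_one_iff]
  exact Subgroup.mem_square.mpr (.sq _)

theorem exists_separating_primes {Y : Subgroup Kˣ} (hY : Subgroup.square Kˣ ≤ Y)
    (hfin : (Subgroup.square Kˣ).relIndex Y ≠ 0) {P : 𝓞 K → Prop}
    (hP : ∀ y ∈ Y, ∃ (t : Kˣ) (x : 𝓞 K), (x : K) = y * t ^ 2 ∧ P x) :
    ∃ (ω : K) (b : FractionalIdeal (𝓞 K)⁰ K) (S V : Finset (HeightOneSpectrum (𝓞 K))),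
      IsGaussDatum ω b S ∧ Disjoint S V ∧ (∀ v ∈ V, (2 : 𝓞 K) ∉ v.asIdeal) ∧
      (Subgroup.square Kˣ).relIndex Y = 2 ^ V.card ∧
      ∀ T ⊆ V, T.Nonempty → ∃ α, P α ∧ (∀ v ∈ S, α ∉ v.asIdeal) ∧
        (∀ v ∈ V, α ∉ v.asIdeal) ∧ ∏ v ∈ T, residueSymbol v α = -1 := by
  classical
  set Q := Y ⧸ (Subgroup.square Kˣ).subgroupOf Y
  have : ((Subgroup.square Kˣ).subgroupOf Y).FiniteIndex := ⟨hfin⟩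
  let := Fintype.ofFinite Q
  obtain ⟨x, hx₀, hPx, hmul, hns⟩ := exists_quotient_representatives hY hP
  have hM : 2 * ∏ c, x c ≠ 0 :=
    mul_ne_zero two_ne_zero (Finset.prod_ne_zero_iff.mpr fun c _ => hx₀ c)
  obtain ⟨ω, b, S, D, hMS⟩ := exists_isGaussDatum hM
  set B := (finite_setOf_mem_asIdeal hM).toFinset
  have hxB {v : HeightOneSpectrum (𝓞 K)} (h : 2 * ∏ c, x c ∉ v.asIdeal) (c : Q) :
      x c ∉ v.asIdeal := fun hc =>
    h (Ideal.mem_of_dvd _ ((Finset.dvd_prod_of_mem x (Finset.mem_univ c)).mul_left 2) hc)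
  have hMB {v : HeightOneSpectrum (𝓞 K)} (hv : v ∉ S ∪ B) : 2 * ∏ c, x c ∉ v.asIdeal := by
    simpa [B] using fun h => hv (Finset.mem_union_right S h)
  obtain ⟨n, hn⟩ := exists_relIndex_square_eq_two_pow hfin
  obtain ⟨V, hV, hSV, hT⟩ := exists_finset_prod_eq_neg_one (χ := fun v c => residueSymbol v (x c))
    (S := S ∪ B)
    (fun v hv c d => by
      have hcd : x c * x d ∉ v.asIdeal := fun h =>
        (v.isPrime.mem_or_mem h).elim (hxB (hMB hv) c) (hxB (hMB hv) d)
      rw [residueSymbol_eq_of_isSquare_mul (hxB (hMB hv) _) hcd (hmul c d), map_mul])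
    (fun v hv c => residueSymbol_sq (hxB (hMB hv) c))
    (fun c hc S' => by
      obtain ⟨v, hv, -, -, h⟩ := exists_notMem_residueSymbol_eq_neg_one (hns c hc) S'
      exact ⟨v, hv, h⟩)
    hn.ge
  rw [Finset.disjoint_union_left] at hSV
  have hMV : ∀ v ∈ V, 2 * ∏ c, x c ∉ v.asIdeal := fun v hv => hMB fun h =>
    (Finset.mem_union.mp h).elim (Finset.disjoint_right.mp hSV.1 hv)
      (Finset.disjoint_right.mp hSV.2 hv)
  refine ⟨ω, b, S, V, D, hSV.1, fun v hv h => hMV v hv (Ideal.mul_mem_right _ _ h),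
    hn.trans (by rw [hV]), fun T hTV hne => ?_⟩
  obtain ⟨c, hc⟩ := hT T hTV hne
  exact ⟨x c, hPx c, fun v hv => hxB (hMS v hv) c, fun v hv => hxB (hMV v hv) c, hc⟩

end SeparatingPrimes

/-! ### Indices of subgroups of squares -/

section GroupIndex

variable {A B : Type*} [CommGroup A] [CommGroup B]

theorem square_eq_range : Subgroup.square A = (powMonoidHom 2 : A →* A).range := by
  ext a
  exact (isSquare_iff_exists_sq a).trans (exists_congr fun b => eq_comm)

theorem natCard_sq_eq_one [Finite A] :
    Nat.card {a : A // a ^ 2 = 1} = (Subgroup.square A).index := by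
  rw [square_eq_range, Subgroup.index_range]
  rfl

theorem map_square (f : A →* B) (hf : Function.Surjective f) :
    (Subgroup.square A).map f = Subgroup.square B := by
  ext b
  constructor
  · rintro ⟨a, ha, rfl⟩
    exact IsSquare.map f ha
  · rintro ⟨c, rfl⟩
    obtain ⟨a, rfl⟩ := hf c
    exact ⟨a * a, .mul_self a, map_mul f a a⟩

theorem natCard_quotient_sq_eq_one (N : Subgroup A) [Finite (A ⧸ N)] :
    Nat.card {c : A ⧸ N // c ^ 2 = 1} = (Subgroup.square A ⊔ N).index := by
  have hmk := QuotientGroup.mk'_surjective N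
  rw [natCard_sq_eq_one, ← map_square _ hmk, Subgroup.index_map, QuotientGroup.ker_mk',
    MonoidHom.range_eq_top.mpr hmk, Subgroup.index_top, mul_one]

theorem relIndex_comap_powMonoidHom_two (N : Subgroup A) :
    N.relIndex (N.comap (powMonoidHom 2)) = Nat.card {c : A ⧸ N // c ^ 2 = 1} := by
  have hcomap : N.comap (powMonoidHom 2) =
      (powMonoidHom 2 : A ⧸ N →* A ⧸ N).ker.comap (QuotientGroup.mk' N) := by
    ext a
    exact (QuotientGroup.eq_one_iff (N := N) (a ^ 2)).symm
  have hcard := Subgroup.relIndex_ker (N.comap (powMonoidHom 2)) (QuotientGroup.mk' N)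
  rw [QuotientGroup.ker_mk', hcomap,
    Subgroup.map_comap_eq_self_of_surjective (QuotientGroup.mk'_surjective N), ← hcomap] at hcard
  exact hcard

theorem relIndex_comap_mul_relIndex_sup_map (f : A →* B) {N : Subgroup B} {A₁ A₂ : Subgroup A}
    (h : A₁ ≤ A₂) (hN : N.comap f ≤ A₂) :
    A₁.relIndex (N.comap f) * (N ⊔ A₁.map f).relIndex (N ⊔ A₂.map f) = A₁.relIndex A₂ := by
  have hsup : N ⊔ A₂.map f = A₂.map f ⊔ (N ⊔ A₁.map f) := by
    rw [← sup_assoc, sup_comm _ N, sup_assoc, ← Subgroup.map_sup, sup_eq_left.mpr h]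
  have hcomap : (N ⊔ A₁.map f).comap f = N.comap f ⊔ A₁ := by
    refine le_antisymm (fun a ha => ?_) (sup_le (Subgroup.comap_mono le_sup_left)
      (Subgroup.map_le_iff_le_comap.mp le_sup_right))
    obtain ⟨n, hn, _, ⟨a₁, ha₁, rfl⟩, hna⟩ := Subgroup.mem_sup.mp (Subgroup.mem_comap.mp ha)
    refine Subgroup.mem_sup.mpr ⟨a * a₁⁻¹, ?_, a₁, ha₁, inv_mul_cancel_right a a₁⟩
    rwa [Subgroup.mem_comap, map_mul, map_inv, ← hna, mul_inv_cancel_right]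
  rw [hsup, Subgroup.relIndex_sup_right, ← Subgroup.relIndex_comap, hcomap,
    ← Subgroup.relIndex_sup_right (N.comap f) A₁,
    Subgroup.relIndex_mul_relIndex _ _ _ le_sup_right (sup_le hN h)]

theorem relIndex_comap_mul_relIndex_sup_map_of_le (f : A →* B) {N C : Subgroup B}
    {A₁ : Subgroup A} (hN : N ≤ C) (hA₁ : A₁ ≤ C.comap f) :
    A₁.relIndex (N.comap f) * (N ⊔ A₁.map f).relIndex C =
      A₁.relIndex (C.comap f) * (N ⊔ f.range).relIndex C := by
  have hmap : N ⊔ (C.comap f).map f = (N ⊔ f.range) ⊓ C := by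
    rw [Subgroup.map_comap_eq, sup_inf_assoc_of_le _ hN]
  rw [← relIndex_comap_mul_relIndex_sup_map f hA₁ (Subgroup.comap_mono hN), mul_assoc,
    ← Subgroup.inf_relIndex_right (N ⊔ f.range), ← hmap, Subgroup.relIndex_mul_relIndex]
  · exact sup_le_sup_left (Subgroup.map_mono hA₁) N
  · exact sup_le hN (Subgroup.map_comap_le f C)

theorem relIndex_comap_mul_index_sup_map (f : A →* B) (N : Subgroup B) (A₁ : Subgroup A) :
    A₁.relIndex (N.comap f) * (N ⊔ A₁.map f).index = A₁.index * (N ⊔ f.range).index := by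
  have h := relIndex_comap_mul_relIndex_sup_map_of_le f (N := N) (A₁ := A₁) le_top le_top
  rwa [Subgroup.comap_top, Subgroup.relIndex_top_right, Subgroup.relIndex_top_right,
    Subgroup.relIndex_top_right] at h

theorem relIndex_square_ker (f : A →* B) (hB : Function.Injective fun b : B => b ^ 2) :
    (Subgroup.square A).relIndex f.ker = (Subgroup.square f.ker).index := by
  rw [Subgroup.relIndex]
  congr 1
  ext ⟨a, ha⟩
  constructor
  · rintro ⟨t, rfl⟩
    have ht : f t = 1 := hB (by simpa [sq] using ha)
    exact ⟨⟨t, ht⟩, rfl⟩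
  · exact IsSquare.map f.ker.subtype

theorem map_powMonoidHom_two_range (f : A →* B) :
    f.range.map (powMonoidHom 2) = (Subgroup.square A).map f := by
  ext b
  constructor
  · rintro ⟨_, ⟨a, rfl⟩, rfl⟩
    exact ⟨a ^ 2, .sq a, map_pow f a 2⟩
  · rintro ⟨_, ⟨a, rfl⟩, rfl⟩
    exact ⟨f a, ⟨a, rfl⟩, by rw [powMonoidHom_apply, sq, map_mul]⟩

theorem map_powMonoidHom_two_comap_range (f : A →* B) :
    (f.range.comap (powMonoidHom 2)).map (powMonoidHom 2) =
      ((Subgroup.square B).comap f).map f := by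
  ext b
  constructor
  · rintro ⟨c, ⟨a, ha⟩, rfl⟩
    exact ⟨a, Subgroup.mem_comap.mpr (ha ▸ .sq c), ha⟩
  · rintro ⟨a, ⟨c, hc⟩, rfl⟩
    have hc' : powMonoidHom 2 c = f a := (sq c).trans hc.symm
    exact ⟨c, ⟨a, hc'.symm⟩, hc'⟩

theorem relIndex_square_comap_square (f : A →* B) (hB : Function.Injective fun b : B => b ^ 2) :
    (Subgroup.square A).relIndex ((Subgroup.square B).comap f) =
      (Subgroup.square f.ker).index * Nat.card {c : B ⧸ f.range // c ^ 2 = 1} := by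
  have hsq : Subgroup.square A ≤ (Subgroup.square B).comap f := fun _ h => IsSquare.map f h
  have hker : f.ker ≤ (Subgroup.square B).comap f := f.ker_le_comap _
  have hinj : Function.Injective (powMonoidHom 2 : B →* B) := hB
  rw [← relIndex_comap_powMonoidHom_two, ← Subgroup.relIndex_map_map_of_injective _ _ hinj,
    map_powMonoidHom_two_range, map_powMonoidHom_two_comap_range, Subgroup.relIndex_map_map,
    sup_eq_left.mpr hker, ← relIndex_square_ker f hB,
    ← Subgroup.relIndex_sup_left f.ker (Subgroup.square A),
    Subgroup.relIndex_mul_relIndex _ _ _ le_sup_left (sup_le hsq hker)]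

theorem index_ne_zero_and_le_natCard {X : Type*} [Finite X] {H : Subgroup A} (φ : A → X)
    (h : ∀ a b, φ a = φ b → a⁻¹ * b ∈ H) : H.index ≠ 0 ∧ H.index ≤ Nat.card X := by
  have hinj : Function.Injective fun c : A ⧸ H => φ c.out := fun c d hcd => by
    rw [← c.out_eq', ← d.out_eq']
    exact QuotientGroup.eq.mpr (h _ _ hcd)
  have := Finite.of_injective _ hinj
  exact ⟨Subgroup.index_ne_zero_of_finite, Nat.card_le_card_of_injective _ hinj⟩

theorem two_pow_card_le_relIndex {ι : Type*} {H G' : Subgroup A}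
    (hsq : Subgroup.square A ≤ H) (hfin : H.relIndex G' ≠ 0) {V : Finset ι} {g : ι → A}
    (hg : ∀ v ∈ V, g v ∈ G') (hV : ∀ T ⊆ V, T.Nonempty → ∏ v ∈ T, g v ∉ H) :
    2 ^ V.card ≤ H.relIndex G' := by
  classical
  have : Finite (G' ⧸ H.subgroupOf G') := Nat.finite_of_card_ne_zero hfin
  let cls (T : V.powerset) : G' ⧸ H.subgroupOf G' :=
    ((⟨∏ v ∈ T.1, g v, prod_mem fun v hv => hg v (Finset.mem_powerset.mp T.2 hv)⟩ : G') : _)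
  have hcls : Function.Injective cls := by
    rintro ⟨T, hT⟩ ⟨T', hT'⟩ h
    have hmem : (∏ v ∈ T, g v)⁻¹ * ∏ v ∈ T', g v ∈ H :=
      Subgroup.mem_subgroupOf.mp (QuotientGroup.eq.mp h)
    by_contra hne
    refine hV (symmDiff T T') ?_ ?_ ?_
    · exact Finset.symmDiff_subset_union.trans
        (Finset.union_subset (Finset.mem_powerset.mp hT) (Finset.mem_powerset.mp hT'))
    · exact Finset.symmDiff_nonempty.mpr fun h => hne (Subtype.ext h)
    · have hsplit : ∏ v ∈ symmDiff T T', g v =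
          (∏ v ∈ T \ T', g v) ^ 2 * ((∏ v ∈ T, g v)⁻¹ * ∏ v ∈ T', g v) := by
        rw [Finset.symmDiff_def, Finset.prod_union disjoint_sdiff_sdiff, inv_mul_eq_div,
          ← Finset.prod_sdiff_div_prod_sdiff, sq]
        rw [mul_assoc, mul_div_cancel]
      exact hsplit ▸ mul_mem (hsq (.sq _)) hmem
  calc 2 ^ V.card = Nat.card V.powerset := by
        rw [Nat.card_eq_fintype_card, Fintype.card_coe, Finset.card_powerset]
    _ ≤ H.relIndex G' := Nat.card_le_card_of_injective cls hcls

end GroupIndex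

section FinitelyGenerated

variable {A : Type*} [CommGroup A]

theorem index_square_eq_mul (N : Subgroup A) (hN : Function.Injective fun c : A ⧸ N => c ^ 2) :
    (Subgroup.square A).index = (Subgroup.square N).index * (Subgroup.square (A ⧸ N)).index := by
  have hmk := QuotientGroup.mk'_surjective N
  have hker := relIndex_square_ker (QuotientGroup.mk' N) hN
  rw [QuotientGroup.ker_mk'] at hker
  rw [← hker, ← map_square _ hmk, Subgroup.index_map, QuotientGroup.ker_mk',
    MonoidHom.range_eq_top.mpr hmk, Subgroup.index_top, mul_one,
    ← Subgroup.relIndex_sup_right, sup_comm N, Subgroup.relIndex_mul_index le_sup_left]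

theorem index_square_of_isMulTorsionFree [IsMulTorsionFree A] [Module.Finite ℤ (Additive A)] :
    (Subgroup.square A).index = 2 ^ Module.finrank ℤ (Additive A) := by
  rw [← AddSubgroup.index_range_nsmul, ← Subgroup.index_toAddSubgroup]
  congr 1
  ext a
  exact (isSquare_iff_exists_sq _).trans (exists_congr fun b => eq_comm)

theorem index_square_eq_mul_two_pow_finrank [Module.Finite ℤ (Additive A)] :
    (Subgroup.square A).index =
      (Subgroup.square (CommGroup.torsion A)).index * 2 ^ Module.finrank ℤ (Additive A) := by
  have hfin : Module.Finite ℤ (Additive (A ⧸ CommGroup.torsion A)) :=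
    Module.Finite.of_surjective
      (AddMonoidHom.toIntLinearMap (MonoidHom.toAdditive (QuotientGroup.mk' _)))
      (QuotientGroup.mk'_surjective (CommGroup.torsion A))
  have hrank : Module.finrank ℤ (Additive (A ⧸ CommGroup.torsion A)) =
      Module.finrank ℤ (Additive A) := finrank_quotient_torsion_eq (M := Additive A)
  rw [index_square_eq_mul (CommGroup.torsion A) (pow_left_injective two_ne_zero),
    index_square_of_isMulTorsionFree (A := A ⧸ _), hrank]

end FinitelyGenerated

section PrincipalIdeals

variable {R F : Type*} [CommRing R] [Field F] [Algebra R F] [IsFractionRing R F]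

theorem le_one_of_sq_le_one [IsIntegrallyClosed R] {a : FractionalIdeal R⁰ F} (h : a ^ 2 ≤ 1) :
    a ≤ 1 := by
  intro x hx
  obtain ⟨y, hy⟩ := (mem_one_iff _).mp (h (sq a ▸ mul_mem_mul hx hx))
  have hint : IsIntegral R (x ^ 2) := by rw [sq, ← hy]; exact isIntegral_algebraMap
  exact (mem_one_iff _).mpr (IsIntegrallyClosed.isIntegral_iff.mp (hint.of_pow two_pos))

theorem sq_injective_units_fractionalIdeal [IsIntegrallyClosed R] :
    Function.Injective fun a : (FractionalIdeal R⁰ F)ˣ => a ^ 2 := by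
  refine (injective_iff_map_eq_one
    (powMonoidHom 2 : (FractionalIdeal R⁰ F)ˣ →* _)).mpr fun a (ha : a ^ 2 = 1) => ?_
  have hle {c : (FractionalIdeal R⁰ F)ˣ} (hc : c ^ 2 = 1) : c ≤ 1 :=
    le_one_of_sq_le_one (congrArg Units.val hc).le
  refine (hle ha).antisymm ?_
  calc (1 : FractionalIdeal R⁰ F) = (a⁻¹ : (FractionalIdeal R⁰ F)ˣ) * a := (a.inv_mul).symm
    _ ≤ a := mul_le_of_le_one_left' (hle (by rw [inv_pow, ha, inv_one]))

theorem ker_toPrincipalIdeal :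
    (toPrincipalIdeal R F).ker = (Units.map (algebraMap R F : R →* F)).range := by
  have hmem {x : Fˣ} (hx : x ∈ (toPrincipalIdeal R F).ker) : ∃ r, algebraMap R F r = x := by
    rw [MonoidHom.mem_ker, toPrincipalIdeal_eq_iff, Units.val_one] at hx
    exact (mem_one_iff _).mp (hx ▸ mem_spanSingleton_self _ _)
  ext x
  constructor
  · intro hx
    obtain ⟨r, hr⟩ := hmem hx
    obtain ⟨s, hs⟩ := hmem (inv_mem hx)
    have hrs : r * s = 1 := FaithfulSMul.algebraMap_injective R F (by
      rw [map_mul, hr, hs, map_one, Units.mul_inv])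
    exact ⟨⟨r, s, hrs, mul_comm r s ▸ hrs⟩, Units.ext hr⟩
  · rintro ⟨u, rfl⟩
    rw [MonoidHom.mem_ker, toPrincipalIdeal_eq_iff, Units.coe_map, MonoidHom.coe_coe,
      ← coeIdeal_span_singleton, Ideal.span_singleton_eq_top.mpr u.isUnit, coeIdeal_top,
      Units.val_one]

theorem index_square_ker_toPrincipalIdeal :
    (Subgroup.square (toPrincipalIdeal R F).ker).index = (Subgroup.square Rˣ).index := by
  have hinj := Units.map_injective (f := (algebraMap R F : R →* F))
    (FaithfulSMul.algebraMap_injective R F)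
  let e := (MonoidHom.ofInjective hinj).trans (MulEquiv.subgroupCongr ker_toPrincipalIdeal.symm)
  rw [← map_square e.toMonoidHom e.surjective]
  exact Subgroup.index_map_equiv _ e

end PrincipalIdeals

section Units

variable {K}

theorem index_square_torsion_units : (Subgroup.square (CommGroup.torsion (𝓞 K)ˣ)).index = 2 := by
  have hfin : Finite (CommGroup.torsion (𝓞 K)ˣ) := inferInstanceAs (Finite (Units.torsion K))
  have hcyc : IsCyclic (CommGroup.torsion (𝓞 K)ˣ) := inferInstanceAs (IsCyclic (Units.torsion K))
  have hcard : 2 ∣ Nat.card (CommGroup.torsion (𝓞 K)ˣ) := (Units.even_torsionOrder K).two_dvd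
  have hrange := IsCyclic.index_powMonoidHom_range (CommGroup.torsion (𝓞 K)ˣ) 2
  rwa [Nat.gcd_eq_right hcard, ← square_eq_range] at hrange

theorem index_square_units : (Subgroup.square (𝓞 K)ˣ).index = 2 ^ (Units.rank K + 1) := by
  rw [index_square_eq_mul_two_pow_finrank, index_square_torsion_units, Units.finrank_eq, pow_succ']

end Units

/-! ### Singular elements and class groups -/

section Signature

variable (F : Type*) [Field F]

/-- The signs of a nonzero element of a field under its real embeddings. -/
noncomputable def signature : Fˣ →* ((F →+* ℝ) → SignTypeˣ) :=
  MonoidHom.pi fun φ => Units.map ((signHom : ℝ →*₀ SignType).toMonoidHom.comp (φ : F →* ℝ))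

/-- The group of totally positive elements of a field. -/
noncomputable def totPosSubgroup : Subgroup Fˣ := (signature F).ker

variable {F}

theorem mem_totPosSubgroup {x : Fˣ} : x ∈ totPosSubgroup F ↔ ∀ φ : F →+* ℝ, 0 < φ x := by
  rw [totPosSubgroup, MonoidHom.mem_ker, funext_iff]
  exact forall_congr' fun φ => Units.ext_iff.trans sign_eq_one_iff

theorem square_le_totPosSubgroup : Subgroup.square Fˣ ≤ totPosSubgroup F := by
  rintro _ ⟨t, rfl⟩
  refine mem_totPosSubgroup.mpr fun φ => ?_
  rw [Units.val_mul, map_mul]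
  exact mul_self_pos.mpr ((map_ne_zero φ).mpr t.ne_zero)

variable [NumberField F]

theorem natCard_ringHom_real_le : Nat.card (F →+* ℝ) ≤ InfinitePlace.nrRealPlaces F := by
  have hreal (φ : F →+* ℝ) : ComplexEmbedding.IsReal (Complex.ofRealHom.comp φ) := by
    ext x
    exact Complex.conj_ofReal (φ x)
  classical
  rw [← InfinitePlace.card_real_embeddings, ← Nat.card_eq_fintype_card]
  refine Nat.card_le_card_of_injective (fun φ => ⟨_, hreal φ⟩) fun φ ψ h => RingHom.ext fun x => ?_
  exact Complex.ofReal_injective (RingHom.congr_fun (congrArg Subtype.val h) x)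

theorem index_totPosSubgroup_ne_zero : (totPosSubgroup F).index ≠ 0 := by
  rw [totPosSubgroup, Subgroup.index_ker]
  exact Nat.card_pos.ne'

theorem index_totPosSubgroup_le :
    (totPosSubgroup F).index ≤ 2 ^ InfinitePlace.nrRealPlaces F := by
  calc (totPosSubgroup F).index = Nat.card (signature F).range := Subgroup.index_ker _
    _ ≤ Nat.card ((F →+* ℝ) → SignTypeˣ) := Subgroup.card_le_card_group _
    _ = 2 ^ Nat.card (F →+* ℝ) := by
        rw [Nat.card_fun, Nat.card_eq_fintype_card (α := SignTypeˣ)]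
        rfl
    _ ≤ 2 ^ InfinitePlace.nrRealPlaces F := Nat.pow_le_pow_right two_pos natCard_ringHom_real_le

end Signature

section ClassGroups

/-- The elements of a field that generate the square of a fractional ideal; modulo squares they
form the Selmer group of the class group. -/
noncomputable def singularSubgroup : Subgroup Kˣ :=
  (Subgroup.square (FractionalIdeal (𝓞 K)⁰ K)ˣ).comap (toPrincipalIdeal (𝓞 K) K)

variable {K}

theorem square_le_singularSubgroup : Subgroup.square Kˣ ≤ singularSubgroup K :=
  fun _ h => IsSquare.map (toPrincipalIdeal (𝓞 K) K) h

theorem finite_quotient_range :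
    Finite ((FractionalIdeal (𝓞 K)⁰ K)ˣ ⧸ (toPrincipalIdeal (𝓞 K) K).range) :=
  .of_equiv _ (ClassGroup.equiv (R := 𝓞 K) K).toEquiv

theorem natCard_classGroup_sq_eq_one :
    Nat.card {c : ClassGroup (𝓞 K) // c ^ 2 = 1} =
      Nat.card {c : (FractionalIdeal (𝓞 K)⁰ K)ˣ ⧸ (toPrincipalIdeal (𝓞 K) K).range // c ^ 2 = 1} :=
  Nat.card_congr ((ClassGroup.equiv (R := 𝓞 K) K).toEquiv.subtypeEquiv fun c => by
    rw [MulEquiv.toEquiv_eq_coe, MulEquiv.coe_toEquiv, ← _root_.map_pow,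
      EmbeddingLike.map_eq_one_iff])

theorem natCard_classGroup_sq_eq_one_eq_index :
    Nat.card {c : ClassGroup (𝓞 K) // c ^ 2 = 1} =
      (Subgroup.square (FractionalIdeal (𝓞 K)⁰ K)ˣ ⊔ (toPrincipalIdeal (𝓞 K) K).range).index := by
  have := finite_quotient_range (K := K)
  rw [natCard_classGroup_sq_eq_one, natCard_quotient_sq_eq_one]

theorem totPosPrincipalSubgroup_eq_map :
    totPosPrincipalSubgroup K = (totPosSubgroup K).map (toPrincipalIdeal (𝓞 K) K) := by
  ext I
  constructor
  · rintro ⟨x, hx, hI⟩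
    exact ⟨x, mem_totPosSubgroup.mpr hx, Units.ext (by rw [coe_toPrincipalIdeal, hI])⟩
  · rintro ⟨x, hx, rfl⟩
    exact ⟨x, mem_totPosSubgroup.mp hx, coe_toPrincipalIdeal x⟩

theorem finite_narrowClassGroup : Finite (NarrowClassGroup K) := by
  have := finite_quotient_range (K := K)
  refine Nat.finite_of_card_ne_zero (?_ : (totPosPrincipalSubgroup K).index ≠ 0)
  rw [totPosPrincipalSubgroup_eq_map, Subgroup.index_map]
  refine mul_ne_zero (fun h => index_totPosSubgroup_ne_zero (F := K) ?_)
    Subgroup.index_ne_zero_of_finite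
  exact Nat.eq_zero_of_zero_dvd (h ▸ Subgroup.index_dvd_of_le le_sup_left)

theorem relIndex_totPosSubgroup_singularSubgroup_mul_natCard :
    (totPosSubgroup K).relIndex (singularSubgroup K) *
        Nat.card {c : NarrowClassGroup K // c ^ 2 = 1} =
      (totPosSubgroup K).index * Nat.card {c : ClassGroup (𝓞 K) // c ^ 2 = 1} := by
  have := finite_narrowClassGroup (K := K)
  rw [natCard_quotient_sq_eq_one, natCard_classGroup_sq_eq_one_eq_index,
    totPosPrincipalSubgroup_eq_map]
  exact relIndex_comap_mul_index_sup_map _ _ _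

theorem relIndex_square_singularSubgroup :
    (Subgroup.square Kˣ).relIndex (singularSubgroup K) =
      2 ^ (Units.rank K + 1) * Nat.card {c : ClassGroup (𝓞 K) // c ^ 2 = 1} := by
  rw [singularSubgroup, relIndex_square_comap_square _ sq_injective_units_fractionalIdeal,
    index_square_ker_toPrincipalIdeal, index_square_units, natCard_classGroup_sq_eq_one]

end ClassGroups

/-! ### Elements and ideals modulo `4` -/

section Dedekind

variable {R F : Type*} [CommRing R] [IsDedekindDomain R] [Field F] [Algebra R F]
  [IsFractionRing R F]

theorem squarefree_primeProd (S : Finset (HeightOneSpectrum R)) : Squarefree (primeProd S) :=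
  Finset.squarefree_prod_of_pairwise_isCoprime
    (fun _ _ _ _ h => (HeightOneSpectrum.isCoprime_of_ne _ _ h).isRelPrime)
    fun v _ => v.irreducible.squarefree

/-- The square of `J * c` is the integral ideal `J * (r)`, so `J * c` is integral; being squarefree,
`J` divides it, and the quotient is `c`. -/
theorem exists_span_singleton_eq_mul_sq {J : Ideal R} (hJ : Squarefree J) {r : R} (hr : r ≠ 0)
    {c : FractionalIdeal R⁰ F} (h : spanSingleton R⁰ (algebraMap R F r) = J * c ^ 2) :
    ∃ C ≠ ⊥, Ideal.span {r} = J * C ^ 2 := by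
  have hsq : (J * c) ^ 2 = (J * Ideal.span {r} : Ideal R) := by
    rw [coeIdeal_mul, coeIdeal_span_singleton, h]
    ring
  obtain ⟨N, hN⟩ := le_one_iff_exists_coeIdeal.mp
    (le_one_of_sq_le_one (hsq.trans_le coeIdeal_le_one))
  have hNsq : N ^ 2 = J * Ideal.span {r} :=
    (coeIdeal_inj (K := F)).mp (by rw [coeIdeal_pow, hN, hsq])
  obtain ⟨C, rfl⟩ := hJ.isRadical 2 N (hNsq ▸ dvd_mul_right _ _)
  have hspan : Ideal.span {r} = J * C ^ 2 := mul_left_cancel₀ hJ.ne_zero (by rw [← hNsq]; ring)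
  refine ⟨C, ?_, hspan⟩
  rintro rfl
  rw [sq, Ideal.mul_bot, Ideal.mul_bot, Ideal.span_singleton_eq_bot] at hspan
  exact hr hspan

end Dedekind

section SquareModFour

variable (F : Type*) [Field F]

/-- The elements of a field that, up to squares, are integral and congruent to `1` modulo `4`. -/
def squareModFourSubgroup : Subgroup Fˣ where
  carrier := {z | ∃ (t : Fˣ) (x : 𝓞 F),
    algebraMap (𝓞 F) F x = z * t ^ 2 ∧ x - 1 ∈ Ideal.span {(4 : 𝓞 F)}}
  one_mem' := ⟨1, 1, by simp, by simp⟩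
  mul_mem' := by
    rintro z₁ z₂ ⟨t₁, x₁, h₁, hx₁⟩ ⟨t₂, x₂, h₂, hx₂⟩
    refine ⟨t₁ * t₂, x₁ * x₂, ?_, ?_⟩
    · rw [_root_.map_mul, h₁, h₂, Units.val_mul, Units.val_mul]
      ring
    · rw [show x₁ * x₂ - 1 = x₁ * (x₂ - 1) + (x₁ - 1) by ring]
      exact add_mem (Ideal.mul_mem_left _ _ hx₂) hx₁
  inv_mem' := by
    rintro z ⟨t, x, h, hx⟩
    refine ⟨z * t, x, ?_, hx⟩
    rw [h, Units.val_mul, Units.val_inv_eq_inv_val]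
    field_simp [z.ne_zero]

variable {F}

theorem square_le_squareModFourSubgroup : Subgroup.square Fˣ ≤ squareModFourSubgroup F := by
  rintro _ ⟨t, rfl⟩
  exact ⟨t⁻¹, 1, by rw [map_one, Units.val_mul, Units.val_inv_eq_inv_val]; field_simp, by simp⟩

end SquareModFour

section Subgroups

variable {K}

theorem isTotPosSingular_of_mem {z : Kˣ} (hz : z ∈ singularSubgroup K ⊓ totPosSubgroup K)
    {t : Kˣ} {x : 𝓞 K} (hx : algebraMap (𝓞 K) K x = z * t ^ 2) :
    IsTotPosSingular x := by
  have hz' : z * t ^ 2 ∈ singularSubgroup K ⊓ totPosSubgroup K :=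
    mul_mem hz ((le_inf square_le_singularSubgroup square_le_totPosSubgroup) ⟨t, sq t⟩)
  have hx' : algebraMap (𝓞 K) K x = (z * t ^ 2 : Kˣ) := by
    rw [hx, Units.val_mul, Units.val_pow_eq_pow_val]
  have hx₀ : x ≠ 0 := RingOfIntegers.coe_ne_zero_iff.mp (hx' ▸ (z * t ^ 2).ne_zero)
  obtain ⟨c, hc⟩ := hz'.1
  obtain ⟨A, -, hA⟩ := exists_span_singleton_eq_mul_sq (J := 1) squarefree_one hx₀ (F := K)
    (c := c) (by
      rw [hx', ← coe_toPrincipalIdeal, hc, Units.val_mul, Ideal.one_eq_top, coeIdeal_top, one_mul,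
        sq])
  exact ⟨hx₀, fun φ => (mem_totPosSubgroup.mp hz'.2 φ).trans_eq (congrArg φ hx'.symm), A,
    by rw [hA, one_mul]⟩

variable (K)

/-- The fractional ideals that are prime to `2` up to squares of fractional ideals. -/
def oddSubgroup : Subgroup (FractionalIdeal (𝓞 K)⁰ K)ˣ where
  carrier := {c | ∃ (N : Ideal (𝓞 K)) (b : (FractionalIdeal (𝓞 K)⁰ K)ˣ),
    IsCoprime (Ideal.span {(2 : 𝓞 K)}) N ∧
      (c : FractionalIdeal (𝓞 K)⁰ K) = N * (b : FractionalIdeal (𝓞 K)⁰ K) ^ 2}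
  one_mem' := ⟨1, 1, isCoprime_one_right, by simp⟩
  mul_mem' := by
    rintro c₁ c₂ ⟨N₁, b₁, hN₁, hc₁⟩ ⟨N₂, b₂, hN₂, hc₂⟩
    refine ⟨N₁ * N₂, b₁ * b₂, hN₁.mul_right hN₂, ?_⟩
    rw [Units.val_mul, hc₁, hc₂, coeIdeal_mul, Units.val_mul]
    ring
  inv_mem' := by
    rintro c ⟨N, b, hN, hc⟩
    refine ⟨N, b * c⁻¹, hN, ?_⟩
    rw [Units.val_mul, mul_pow, ← mul_assoc, ← hc, sq, Units.mul_inv_cancel_left]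

variable {K}

theorem square_le_oddSubgroup :
    Subgroup.square (FractionalIdeal (𝓞 K)⁰ K)ˣ ≤ oddSubgroup K := by
  rintro _ ⟨b, rfl⟩
  exact ⟨1, b, isCoprime_one_right, by
    rw [Units.val_mul, Ideal.one_eq_top, coeIdeal_top, one_mul, sq]⟩

theorem singularSubgroup_le_comap_oddSubgroup :
    singularSubgroup K ≤ (oddSubgroup K).comap (toPrincipalIdeal (𝓞 K) K) :=
  Subgroup.comap_mono square_le_oddSubgroup

theorem squareModFourSubgroup_le_comap_oddSubgroup :
    squareModFourSubgroup K ≤ (oddSubgroup K).comap (toPrincipalIdeal (𝓞 K) K) := by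
  rintro z ⟨t, x, h, hx⟩
  refine ⟨Ideal.span {x}, (toPrincipalIdeal (𝓞 K) K t)⁻¹, isCoprime_span_two_of_sub_one_mem hx, ?_⟩
  rw [coeIdeal_span_singleton, h, ← spanSingleton_mul_spanSingleton, ← spanSingleton_pow,
    ← coe_toPrincipalIdeal, ← coe_toPrincipalIdeal, mul_assoc, ← mul_pow, Units.mul_inv, one_pow,
    mul_one]

theorem exists_eq_mul_sq_isCoprime_two {z : Kˣ}
    (hz : z ∈ (oddSubgroup K).comap (toPrincipalIdeal (𝓞 K) K)) :
    ∃ (t : Kˣ) (x : 𝓞 K), algebraMap (𝓞 K) K x = z * t ^ 2 ∧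
      IsCoprime (Ideal.span {2}) (Ideal.span {x}) := by
  obtain ⟨N, b, hN, hz⟩ := hz
  obtain ⟨t, M, ht, -, hM, hcop⟩ := exists_spanSingleton_mul_eq_isCoprime b.ne_zero
    (m := Ideal.span {(2 : 𝓞 K)}) (by simp)
  have hspan : ⟪(z * t ^ 2 : K)⟫ = (N * M ^ 2 : Ideal (𝓞 K)) := by
    rw [← spanSingleton_mul_spanSingleton, ← spanSingleton_pow, ← coe_toPrincipalIdeal, hz,
      coeIdeal_mul, coeIdeal_pow, ← hM]
    ring
  obtain ⟨x, hx⟩ := (mem_one_iff _).mp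
    (coeIdeal_le_one (hspan ▸ mem_spanSingleton_self (𝓞 K)⁰ (z * t ^ 2 : K)))
  refine ⟨Units.mk0 t ht, x, hx, ?_⟩
  rw [← hx, ← coeIdeal_span_singleton, coeIdeal_inj] at hspan
  exact hspan ▸ hN.mul_right hcop.symm.pow_right

/-- A prime as an element of the group of fractional ideals. -/
noncomputable def primeUnit (v : HeightOneSpectrum (𝓞 K)) : (FractionalIdeal (𝓞 K)⁰ K)ˣ :=
  Units.mk0 v.asIdeal (coeIdeal_asIdeal_ne_zero v)

theorem primeUnit_mem_oddSubgroup {v : HeightOneSpectrum (𝓞 K)} (hv : (2 : 𝓞 K) ∉ v.asIdeal) :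
    primeUnit v ∈ oddSubgroup K :=
  ⟨v.asIdeal, 1, isCoprime_span_singleton_asIdeal_iff.mpr hv, by simp [primeUnit]⟩

theorem coe_prod_primeUnit (T : Finset (HeightOneSpectrum (𝓞 K))) :
    ((∏ v ∈ T, primeUnit v : (FractionalIdeal (𝓞 K)⁰ K)ˣ) : FractionalIdeal (𝓞 K)⁰ K) =
      primeProd T := by
  rw [Units.coe_prod, primeProd, ← coeIdealHom_apply, map_prod]
  rfl

theorem exists_spanSingleton_eq_of_prod_primeUnit_mem {T : Finset (HeightOneSpectrum (𝓞 K))}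
    {Y : Subgroup Kˣ} (h : ∏ v ∈ T, primeUnit v ∈
      Subgroup.square (FractionalIdeal (𝓞 K)⁰ K)ˣ ⊔ Y.map (toPrincipalIdeal (𝓞 K) K)) :
    ∃ y ∈ Y, ∃ c : FractionalIdeal (𝓞 K)⁰ K, c ≠ 0 ∧ ⟪(y : K)⟫ = primeProd T * c ^ 2 := by
  obtain ⟨_, ⟨c, rfl⟩, _, ⟨y, hy, rfl⟩, h⟩ := Subgroup.mem_sup.mp h
  refine ⟨y, hy, (c⁻¹ : (FractionalIdeal (𝓞 K)⁰ K)ˣ), Units.ne_zero _, ?_⟩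
  rw [← coe_prod_primeUnit, ← h, ← coe_toPrincipalIdeal, ← Units.val_pow_eq_pow_val,
    ← Units.val_mul]
  congr 1
  rw [← sq, mul_right_comm, inv_pow, mul_inv_cancel, one_mul]

end Subgroups

section ModFour

theorem two_dvd_sub_one_of_four_dvd_sq_sub_one {R : Type*} [CommRing R] [IsDomain R]
    [IsIntegrallyClosed R] (h2 : (2 : R) ≠ 0) {x : R} (h : 4 ∣ x ^ 2 - 1) : 2 ∣ x - 1 := by
  obtain ⟨c, hc⟩ := h
  have h2' : (2 : FractionRing R) ≠ 0 := by
    rwa [← map_ofNat (algebraMap R (FractionRing R)), Ne, FaithfulSMul.algebraMap_eq_zero_iff]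
  have hc' : algebraMap R (FractionRing R) x ^ 2 - 1 = 4 * algebraMap R (FractionRing R) c := by
    rw [← map_pow, ← map_one (algebraMap R (FractionRing R)), ← map_sub, hc, map_mul, map_ofNat]
  -- `(x - 1) / 2` is a root of `X ^ 2 + X - c`.
  have hint : IsIntegral R ((algebraMap R (FractionRing R) x - 1) / 2) := by
    refine ⟨Polynomial.X ^ 2 + (Polynomial.X - Polynomial.C c), Polynomial.monic_X_pow_add ?_, ?_⟩
    · rw [Polynomial.degree_X_sub_C]
      exact Nat.one_lt_ofNat
    · simp only [Polynomial.eval₂_sub, Polynomial.eval₂_add, Polynomial.eval₂_pow,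
        Polynomial.eval₂_X, Polynomial.eval₂_C]
      field_simp
      linear_combination hc'
  obtain ⟨y, hy⟩ := IsIntegrallyClosed.isIntegral_iff.mp hint
  refine ⟨y, FaithfulSMul.algebraMap_injective R (FractionRing R) ?_⟩
  rw [map_sub, map_one, map_mul, map_ofNat, hy]
  field_simp

theorem natCard_units_quotient_four_sq_eq_one_le {R : Type*} [CommRing R] [IsDomain R]
    [IsIntegrallyClosed R] (h2 : (2 : R) ≠ 0) [Finite (R ⧸ Ideal.span {(2 : R)})] :
    Nat.card {u : (R ⧸ Ideal.span {(4 : R)})ˣ // u ^ 2 = 1} ≤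
      Nat.card (R ⧸ Ideal.span {(2 : R)}) := by
  have hlift (u : {u : (R ⧸ Ideal.span {(4 : R)})ˣ // u ^ 2 = 1}) :
      ∃ y : R, (u.1 : R ⧸ Ideal.span {(4 : R)}) = Ideal.Quotient.mk _ (1 + 2 * y) := by
    obtain ⟨x, hx⟩ := Ideal.Quotient.mk_surjective (u.1 : R ⧸ Ideal.span {(4 : R)})
    have hsq := congrArg Units.val u.2
    rw [Units.val_pow_eq_pow_val, ← hx, ← map_pow, Units.val_one,
      ← map_one (Ideal.Quotient.mk _), Ideal.Quotient.eq, Ideal.mem_span_singleton] at hsq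
    obtain ⟨y, hy⟩ := two_dvd_sub_one_of_four_dvd_sq_sub_one h2 hsq
    exact ⟨y, by rw [← hx, ← hy, add_sub_cancel]⟩
  choose y hy using hlift
  refine Nat.card_le_card_of_injective (fun u => Ideal.Quotient.mk _ (y u)) fun u w h => ?_
  obtain ⟨d, hd⟩ := Ideal.mem_span_singleton.mp (Ideal.Quotient.eq.mp h)
  refine Subtype.ext (Units.ext ?_)
  rw [hy u, hy w, Ideal.Quotient.eq, Ideal.mem_span_singleton]
  exact ⟨d, by linear_combination 2 * hd⟩

theorem isUnit_mk_span_four {R : Type*} [CommRing R] {x : R}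
    (h : IsCoprime (Ideal.span {2}) (Ideal.span {x})) :
    IsUnit (Ideal.Quotient.mk (Ideal.span {(4 : R)}) x) := by
  obtain ⟨r, s, hrs⟩ := ((Ideal.isCoprime_span_singleton_iff _ _).mp h).pow_left (m := 2)
  refine IsUnit.of_mul_eq_one (Ideal.Quotient.mk _ s) ?_
  rw [← map_mul, ← map_one (Ideal.Quotient.mk _), Ideal.Quotient.eq, Ideal.mem_span_singleton]
  exact ⟨-r, by linear_combination hrs⟩

variable {K}

theorem natCard_quotient_two :
    Nat.card (𝓞 K ⧸ Ideal.span {(2 : 𝓞 K)}) = 2 ^ Module.finrank ℚ K := by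
  have h := Ideal.absNorm_span_natCast (S := 𝓞 K) 2
  rwa [RingOfIntegers.rank, Ideal.absNorm_apply] at h

theorem finite_quotient_span_ofNat (n : ℕ) [n.AtLeastTwo] :
    Finite (𝓞 K ⧸ Ideal.span {(ofNat(n) : 𝓞 K)}) :=
  Ideal.finiteQuotientOfFreeOfNeBot _ (by
    rw [Ne, Ideal.span_singleton_eq_bot]
    exact OfNat.ofNat_ne_zero n)

theorem index_square_units_quotient_four_le :
    (Subgroup.square (𝓞 K ⧸ Ideal.span {(4 : 𝓞 K)})ˣ).index ≤ 2 ^ Module.finrank ℚ K := by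
  have := finite_quotient_span_ofNat (K := K) 2
  have := finite_quotient_span_ofNat (K := K) 4
  rw [← natCard_sq_eq_one, ← natCard_quotient_two]
  exact natCard_units_quotient_four_sq_eq_one_le two_ne_zero

theorem not_isUnit_four : ¬IsUnit (4 : 𝓞 K) := fun h => by
  have h2 : IsUnit (2 : 𝓞 K) :=
    isUnit_of_mul_isUnit_left (y := 2) (by rwa [show (2 * 2 : 𝓞 K) = 4 by norm_num])
  have hcard := natCard_quotient_two (K := K)
  have := Ideal.Quotient.subsingleton_iff.mpr (Ideal.span_singleton_eq_top.mpr h2)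
  rw [Nat.card_unique] at hcard
  exact (Nat.one_lt_two_pow Module.finrank_pos.ne').ne hcard

theorem inv_mul_mem_squareModFourSubgroup {z₁ z₂ t₁ t₂ : Kˣ} {x₁ x₂ : 𝓞 K}
    (h₁ : algebraMap (𝓞 K) K x₁ = z₁ * t₁ ^ 2) (h₂ : algebraMap (𝓞 K) K x₂ = z₂ * t₂ ^ 2)
    {u₁ u₂ : (𝓞 K ⧸ Ideal.span {(4 : 𝓞 K)})ˣ} (hu₁ : u₁.val = Ideal.Quotient.mk _ x₁)
    (hu₂ : u₂.val = Ideal.Quotient.mk _ x₂) (h : u₁⁻¹ * u₂ ∈ Subgroup.square _) :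
    z₁⁻¹ * z₂ ∈ squareModFourSubgroup K := by
  obtain ⟨u, hu⟩ := h
  have hsq : u₁ * u₂ = (u₁ * u) ^ 2 := by
    rw [eq_mul_of_inv_mul_eq hu, mul_pow, sq, sq, mul_assoc]
  obtain ⟨w, hw⟩ := Ideal.Quotient.mk_surjective ((u₁ * u)⁻¹ : (𝓞 K ⧸ _)ˣ).val
  have : Nontrivial (𝓞 K ⧸ Ideal.span {(4 : 𝓞 K)}) :=
    Ideal.Quotient.nontrivial_iff.mpr (mt Ideal.span_singleton_eq_top.mp not_isUnit_four)
  have hw₀ : w ≠ 0 := by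
    rintro rfl
    exact Units.ne_zero _ (hw.symm.trans (map_zero _))
  let w' : Kˣ := Units.mk0 (algebraMap (𝓞 K) K w) (RingOfIntegers.coe_ne_zero_iff.mpr hw₀)
  refine ⟨z₁ * t₁ * t₂ * w', x₁ * x₂ * w ^ 2, ?_, ?_⟩
  · simp only [map_mul, map_pow, h₁, h₂, Units.val_mul, Units.val_inv_eq_inv_val, w',
      Units.val_mk0]
    field_simp
  · rw [← Ideal.Quotient.eq, map_mul, map_mul, map_pow, hw, ← hu₁, ← hu₂, map_one,
      ← Units.val_pow_eq_pow_val, ← Units.val_mul, ← Units.val_mul, Units.val_eq_one,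
      hsq, ← mul_pow, mul_inv_cancel, one_pow]

theorem relIndex_squareModFourSubgroup_comap_oddSubgroup :
    (squareModFourSubgroup K).relIndex ((oddSubgroup K).comap (toPrincipalIdeal (𝓞 K) K)) ≠ 0 ∧
      (squareModFourSubgroup K).relIndex ((oddSubgroup K).comap (toPrincipalIdeal (𝓞 K) K)) ≤
        2 ^ Module.finrank ℚ K := by
  have := finite_quotient_span_ofNat (K := K) 4
  have hrep (z : (oddSubgroup K).comap (toPrincipalIdeal (𝓞 K) K)) :
      ∃ (t : Kˣ) (x : 𝓞 K) (u : (𝓞 K ⧸ Ideal.span {(4 : 𝓞 K)})ˣ),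
        algebraMap (𝓞 K) K x = z.1 * t ^ 2 ∧ u.val = Ideal.Quotient.mk _ x := by
    obtain ⟨t, x, hx, hcop⟩ := exists_eq_mul_sq_isCoprime_two z.2
    exact ⟨t, x, (isUnit_mk_span_four hcop).unit, hx, rfl⟩
  choose t x u hx hu using hrep
  have hindex := index_ne_zero_and_le_natCard
    (H := (squareModFourSubgroup K).subgroupOf _)
    (fun z => (u z : (𝓞 K ⧸ Ideal.span {(4 : 𝓞 K)})ˣ ⧸ Subgroup.square _))
    fun y z h => inv_mul_mem_squareModFourSubgroup (hx y) (hx z) (hu y) (hu z)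
      (QuotientGroup.eq.mp h)
  exact ⟨hindex.1, hindex.2.trans index_square_units_quotient_four_le⟩

end ModFour

/-! ### Rank inequalities -/

section Bounds

variable {K}

theorem natCard_classGroup_sq_eq_one_ne_zero :
    Nat.card {c : ClassGroup (𝓞 K) // c ^ 2 = 1} ≠ 0 :=
  have : Nonempty {c : ClassGroup (𝓞 K) // c ^ 2 = 1} := ⟨1, one_pow 2⟩
  Nat.card_pos.ne'

theorem relIndex_square_ne_zero {Y : Subgroup Kˣ} (hY : Y ≤ singularSubgroup K) :
    (Subgroup.square Kˣ).relIndex Y ≠ 0 := by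
  refine mt (Subgroup.relIndex_eq_zero_of_le_right hY) ?_
  rw [relIndex_square_singularSubgroup]
  exact mul_ne_zero (pow_ne_zero _ two_ne_zero) natCard_classGroup_sq_eq_one_ne_zero

theorem relIndex_square_inf_squareModFourSubgroup_le :
    (Subgroup.square Kˣ).relIndex
        (singularSubgroup K ⊓ totPosSubgroup K ⊓ squareModFourSubgroup K) ≤
      Nat.card {c : ClassGroup (𝓞 K) // c ^ 2 = 1} := by
  classical
  obtain ⟨ω, b, S, V, D, hSV, hV2, hcard, hV⟩ := exists_separating_primes
    (P := fun x => IsTotPosSingular x ∧ x - 1 ∈ Ideal.span {(4 : 𝓞 K)})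
    (le_inf (le_inf square_le_singularSubgroup square_le_totPosSubgroup)
      square_le_squareModFourSubgroup)
    (relIndex_square_ne_zero (inf_le_left.trans inf_le_left))
    (by
      rintro y ⟨hy, t, x, hx, hx4⟩
      exact ⟨t, x, hx, isTotPosSingular_of_mem hy hx, hx4⟩)
  have hindex := natCard_classGroup_sq_eq_one_eq_index (K := K)
  rw [hcard, hindex, ← Subgroup.relIndex_top_right]
  refine two_pow_card_le_relIndex le_sup_left (g := primeUnit) ?_ (fun _ _ => Subgroup.mem_top _)
    fun T hTV hT hmem => ?_
  · rw [Subgroup.relIndex_top_right, ← hindex]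
    exact natCard_classGroup_sq_eq_one_ne_zero
  rw [MonoidHom.range_eq_map] at hmem
  obtain ⟨y, -, c, hc, hy⟩ := exists_spanSingleton_eq_of_prod_primeUnit_mem hmem
  obtain ⟨α, ⟨hα, hα4⟩, hαS, hαV, hprod⟩ := hV T hTV hT
  have hprod' := D.prod_residueSymbol_eq_one_of_spanSingleton_eq (fun v hv => hV2 v (hTV hv))
    (hSV.mono_right hTV) y.ne_zero hc hy hα hα4
    fun v hv => (Finset.mem_union.mp hv).elim (hαS v) fun h => hαV v (hTV h)
  exact absurd (hprod.symm.trans hprod') (by decide)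

theorem relIndex_squareModFourSubgroup_mul_relIndex_oddSubgroup :
    (squareModFourSubgroup K).relIndex (singularSubgroup K) *
        (Subgroup.square (FractionalIdeal (𝓞 K)⁰ K)ˣ ⊔
          (squareModFourSubgroup K).map (toPrincipalIdeal (𝓞 K) K)).relIndex (oddSubgroup K) =
      (squareModFourSubgroup K).relIndex ((oddSubgroup K).comap (toPrincipalIdeal (𝓞 K) K)) *
        (Subgroup.square (FractionalIdeal (𝓞 K)⁰ K)ˣ ⊔
          (toPrincipalIdeal (𝓞 K) K).range).relIndex (oddSubgroup K) :=
  relIndex_comap_mul_relIndex_sup_map_of_le _ square_le_oddSubgroup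
    squareModFourSubgroup_le_comap_oddSubgroup

theorem relIndex_square_sup_range_oddSubgroup :
    (Subgroup.square (FractionalIdeal (𝓞 K)⁰ K)ˣ ⊔
        (toPrincipalIdeal (𝓞 K) K).range).relIndex (oddSubgroup K) ≠ 0 ∧
      (Subgroup.square (FractionalIdeal (𝓞 K)⁰ K)ˣ ⊔
        (toPrincipalIdeal (𝓞 K) K).range).relIndex (oddSubgroup K) ≤
        Nat.card {c : ClassGroup (𝓞 K) // c ^ 2 = 1} := by
  have hne := natCard_classGroup_sq_eq_one_ne_zero (K := K)
  rw [natCard_classGroup_sq_eq_one_eq_index, ← Subgroup.relIndex_top_right] at hne ⊢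
  exact ⟨mt (Subgroup.relIndex_eq_zero_of_le_right le_top) hne,
    Subgroup.relIndex_le_of_le_right le_top hne⟩

theorem relIndex_squareModFourSubgroup_oddSubgroup_ne_zero :
    (squareModFourSubgroup K).relIndex (singularSubgroup K) ≠ 0 ∧
      (Subgroup.square (FractionalIdeal (𝓞 K)⁰ K)ˣ ⊔
        (squareModFourSubgroup K).map (toPrincipalIdeal (𝓞 K) K)).relIndex (oddSubgroup K) ≠ 0 := by
  rw [← mul_ne_zero_iff, relIndex_squareModFourSubgroup_mul_relIndex_oddSubgroup]
  exact mul_ne_zero relIndex_squareModFourSubgroup_comap_oddSubgroup.1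
    relIndex_square_sup_range_oddSubgroup.1

theorem relIndex_square_le_relIndex_oddSubgroup :
    (Subgroup.square Kˣ).relIndex (singularSubgroup K ⊓ totPosSubgroup K) ≤
      (Subgroup.square (FractionalIdeal (𝓞 K)⁰ K)ˣ ⊔
        (squareModFourSubgroup K).map (toPrincipalIdeal (𝓞 K) K)).relIndex (oddSubgroup K) := by
  classical
  obtain ⟨ω, b, S, V, D, hSV, hV2, hcard, hV⟩ := exists_separating_primes
    (P := fun x : 𝓞 K => IsTotPosSingular x ∧ IsCoprime (Ideal.span {2}) (Ideal.span {x}))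
    (le_inf square_le_singularSubgroup square_le_totPosSubgroup)
    (relIndex_square_ne_zero inf_le_left)
    (fun y hy => by
      obtain ⟨t, x, hx, hx2⟩ := exists_eq_mul_sq_isCoprime_two
        (singularSubgroup_le_comap_oddSubgroup hy.1)
      exact ⟨t, x, hx, isTotPosSingular_of_mem hy hx, hx2⟩)
  rw [hcard]
  refine two_pow_card_le_relIndex le_sup_left relIndex_squareModFourSubgroup_oddSubgroup_ne_zero.2
    (fun v hv => primeUnit_mem_oddSubgroup (hV2 v hv)) fun T hTV hT hmem => ?_
  obtain ⟨y, ⟨t, x, hx, hx4⟩, c, -, hy⟩ := exists_spanSingleton_eq_of_prod_primeUnit_mem hmem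
  have hx₀ : x ≠ 0 := RingOfIntegers.coe_ne_zero_iff.mp (by
    rw [hx, ← Units.val_pow_eq_pow_val, ← Units.val_mul]
    exact Units.ne_zero _)
  obtain ⟨C, hC, hxC⟩ := exists_span_singleton_eq_mul_sq (squarefree_primeProd T) hx₀ (by
    rw [hx, ← spanSingleton_mul_spanSingleton, hy, mul_assoc, ← spanSingleton_pow, ← mul_pow])
  obtain ⟨α, ⟨hα, hα2⟩, hαS, hαV, hprod⟩ := hV T hTV hT
  have hprod' := D.prod_residueSymbol_eq_one_of_span_eq (fun v hv => hV2 v (hTV hv))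
    (hSV.mono_right hTV) hx₀ hx4 hC hxC hα hα2
    fun v hv => (Finset.mem_union.mp hv).elim (hαS v) fun h => hαV v (hTV h)
  exact absurd (hprod.symm.trans hprod') (by decide)

theorem relIndex_square_mul_relIndex_squareModFourSubgroup_le :
    (Subgroup.square Kˣ).relIndex (singularSubgroup K ⊓ totPosSubgroup K) *
        (squareModFourSubgroup K).relIndex (singularSubgroup K ⊓ totPosSubgroup K) ≤
      2 ^ Module.finrank ℚ K * Nat.card {c : ClassGroup (𝓞 K) // c ^ 2 = 1} := by
  calc
    _ ≤ _ := mul_le_mul' relIndex_square_le_relIndex_oddSubgroup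
      (Subgroup.relIndex_le_of_le_right inf_le_left
        relIndex_squareModFourSubgroup_oddSubgroup_ne_zero.1)
    _ = _ := (mul_comm _ _).trans relIndex_squareModFourSubgroup_mul_relIndex_oddSubgroup
    _ ≤ _ := mul_le_mul' relIndex_squareModFourSubgroup_comap_oddSubgroup.2
      relIndex_square_sup_range_oddSubgroup.2

end Bounds

section Ranks

variable {K}

theorem relIndex_square_sq_le :
    (Subgroup.square Kˣ).relIndex (singularSubgroup K ⊓ totPosSubgroup K) ^ 2 ≤
      2 ^ Module.finrank ℚ K * Nat.card {c : ClassGroup (𝓞 K) // c ^ 2 = 1} ^ 2 := by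
  have htower := Subgroup.relIndex_mul_relIndex (Subgroup.square Kˣ)
    (singularSubgroup K ⊓ totPosSubgroup K ⊓ squareModFourSubgroup K)
    (singularSubgroup K ⊓ totPosSubgroup K)
    (le_inf (le_inf square_le_singularSubgroup square_le_totPosSubgroup)
      square_le_squareModFourSubgroup) inf_le_left
  rw [Subgroup.inf_relIndex_left] at htower
  calc
    _ = (Subgroup.square Kˣ).relIndex
          (singularSubgroup K ⊓ totPosSubgroup K ⊓ squareModFourSubgroup K) *
        ((Subgroup.square Kˣ).relIndex (singularSubgroup K ⊓ totPosSubgroup K) *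
          (squareModFourSubgroup K).relIndex (singularSubgroup K ⊓ totPosSubgroup K)) := by
      rw [mul_left_comm, htower, sq]
    _ ≤ Nat.card {c : ClassGroup (𝓞 K) // c ^ 2 = 1} *
        (2 ^ Module.finrank ℚ K * Nat.card {c : ClassGroup (𝓞 K) // c ^ 2 = 1}) :=
      mul_le_mul' relIndex_square_inf_squareModFourSubgroup_le
        relIndex_square_mul_relIndex_squareModFourSubgroup_le
    _ = _ := by ring

theorem rank_add_one_eq_nrRealPlaces_add_nrComplexPlaces :
    Units.rank K + 1 = InfinitePlace.nrRealPlaces K + InfinitePlace.nrComplexPlaces K := by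
  rw [← InfinitePlace.card_eq_nrRealPlaces_add_nrComplexPlaces]
  exact Nat.sub_add_cancel Fintype.card_pos

theorem two_pow_nrComplexPlaces_mul_natCard_le :
    2 ^ InfinitePlace.nrComplexPlaces K * Nat.card {c : NarrowClassGroup K // c ^ 2 = 1} ≤
      (Subgroup.square Kˣ).relIndex (singularSubgroup K ⊓ totPosSubgroup K) := by
  have htower := Subgroup.relIndex_mul_relIndex (Subgroup.square Kˣ)
    (singularSubgroup K ⊓ totPosSubgroup K) (singularSubgroup K)
    (le_inf square_le_singularSubgroup square_le_totPosSubgroup) inf_le_left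
  rw [Subgroup.inf_relIndex_left, relIndex_square_singularSubgroup,
    rank_add_one_eq_nrRealPlaces_add_nrComplexPlaces] at htower
  have hnarrow := relIndex_totPosSubgroup_singularSubgroup_mul_natCard (K := K)
  have hpos := Nat.pos_of_ne_zero (natCard_classGroup_sq_eq_one_ne_zero (K := K))
  set a := (Subgroup.square Kˣ).relIndex (singularSubgroup K ⊓ totPosSubgroup K)
  set h := Nat.card {c : ClassGroup (𝓞 K) // c ^ 2 = 1}
  set h' := Nat.card {c : NarrowClassGroup K // c ^ 2 = 1}
  refine Nat.le_of_mul_le_mul_left ?_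
    (Nat.mul_pos (pow_pos two_pos (InfinitePlace.nrRealPlaces K)) hpos)
  calc
    _ = 2 ^ (InfinitePlace.nrRealPlaces K + InfinitePlace.nrComplexPlaces K) * h * h' := by ring
    _ = a * ((totPosSubgroup K).index * h) := by rw [← htower, mul_assoc, hnarrow]
    _ ≤ a * (2 ^ InfinitePlace.nrRealPlaces K * h) := by gcongr; exact index_totPosSubgroup_le
    _ = _ := mul_comm _ _

theorem natCard_narrowClassGroup_sq_eq_one_sq_le :
    Nat.card {c : NarrowClassGroup K // c ^ 2 = 1} ^ 2 ≤
      2 ^ InfinitePlace.nrRealPlaces K * Nat.card {c : ClassGroup (𝓞 K) // c ^ 2 = 1} ^ 2 := by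
  refine Nat.le_of_mul_le_mul_left ?_
    (pow_pos two_pos (2 * InfinitePlace.nrComplexPlaces K))
  calc
    _ = (2 ^ InfinitePlace.nrComplexPlaces K *
        Nat.card {c : NarrowClassGroup K // c ^ 2 = 1}) ^ 2 := by ring
    _ ≤ _ := Nat.pow_le_pow_left two_pow_nrComplexPlaces_mul_natCard_le 2
    _ ≤ _ := relIndex_square_sq_le
    _ = _ := by rw [← InfinitePlace.card_add_two_mul_card_eq_rank, pow_add]; ring

end Ranks

end ArmitageFrohlich

/-- **Armitage–Fröhlich.**  Let `K` be a number field with `r₁ > 0` real places.  If `ρ` is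
the 2-rank of the class group of `K` and `ρ⁺` is the 2-rank of the narrow class group of `K`,
then `ρ⁺ − ρ ≤ ⌊r₁/2⌋`. -/
theorem armitage_frohlich (r₁ ρ ρplus : ℕ)
    (hr₁ : Nat.card {w : InfinitePlace K // w.IsReal} = r₁)
    (hr₁pos : 0 < r₁)
    (hρ : Nat.card {c : ClassGroup (𝓞 K) // c ^ 2 = 1} = 2 ^ ρ)
    (hρplus : Nat.card {c : NarrowClassGroup K // c ^ 2 = 1} = 2 ^ ρplus) :
    ρplus - ρ ≤ r₁ / 2 := by
  classical
  have hcard := ArmitageFrohlich.natCard_narrowClassGroup_sq_eq_one_sq_le (K := K)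
  have hr : InfinitePlace.nrRealPlaces K = r₁ := by rw [← hr₁, Nat.card_eq_fintype_card]
  rw [hr, hρ, hρplus, ← pow_mul, ← pow_mul, ← pow_add, Nat.pow_le_pow_iff_right one_lt_two] at hcard
  omega
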